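/- arXiv:2302.12080 — 2 statements merged into one kernel-verified Lean document; each statement's English description precedes it below -/
import Mathlib

section
/- Let Λ be a classical positive definite quadratic ℤ-lattice of rank r. Then the number of vectors of norm 2 satisfies N(2) ≤ max{480, 2r(r−1)}. -/
section Roots

variable {M : Type*} [AddCommGroup M] [Module ℤ M]

/-- Two norm-two vectors pair to at most two, with equality only if they agree. -/
theorem root_le (b : M →ₗ[ℤ] M →ₗ[ℤ] ℤ) (hs : ∀ x y, b x y = b y x)
    (hp : ∀ x, x ≠ 0 → 0 < b x x) {x y : M} (hx : b x x = 2) (hy : b y y = 2) :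
    b x y ≤ 2 ∧ (b x y = 2 → x = y) := by
  have e : b (x - y) (x - y) = 4 - 2 * b x y := by
    simp only [map_sub, LinearMap.sub_apply]
    have := hs x y
    linarith
  by_cases h : x = y
  · subst h; exact ⟨by omega, fun _ => rfl⟩
  · have := hp (x - y) (sub_ne_zero.mpr h)
    exact ⟨by omega, fun h2 => by omega⟩

/-- Vectors pairing to one with a root `v`: the lower bound. -/
theorem root_ge (b : M →ₗ[ℤ] M →ₗ[ℤ] ℤ) (hs : ∀ x y, b x y = b y x)
    (hp : ∀ x, x ≠ 0 → 0 < b x x) {v x y : M} (hv : b v v = 2)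
    (hx : b x x = 2) (hy : b y y = 2) (hvx : b v x = 1) (hvy : b v y = 1) :
    -1 ≤ b x y ∧ (b x y = -1 → x = v - y) := by
  have h1 : b (v - y) (v - y) = 2 := by
    simp only [map_sub, LinearMap.sub_apply]
    have := hs v y
    linarith
  have h2 : b x (v - y) = 1 - b x y := by
    simp only [map_sub]
    have := hs v x
    linarith
  have h3 := root_le b hs hp hx h1
  exact ⟨by omega, fun h => h3.2 (by omega)⟩

/-- Orthogonal families are no longer than the rank. -/
theorem orth_card [Module.Free ℤ M] [Module.Finite ℤ M]
    (b : M →ₗ[ℤ] M →ₗ[ℤ] ℤ) {ι : Type*} [Fintype ι] (f : ι → M)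
    (h1 : ∀ i, b (f i) (f i) ≠ 0) (h2 : ∀ i j, i ≠ j → b (f i) (f j) = 0) :
    Fintype.card ι ≤ Module.finrank ℤ M := by
  apply LinearIndependent.fintype_card_le_finrank (R := ℤ) (b := f)
  rw [Fintype.linearIndependent_iff]
  intro g hg i
  have h := congrArg (b (f i)) hg
  simp only [map_sum, map_smul, smul_eq_mul, map_zero] at h
  rw [Finset.sum_eq_single i] at h
  · exact (mul_eq_zero.mp h).resolve_right (h1 i)
  · intro j _ hj
    rw [h2 i j hj.symm, mul_zero]
  · simp

/-- Families of roots pairing to one with each other are no longer than the rank. -/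
theorem simplex_card [Module.Free ℤ M] [Module.Finite ℤ M]
    (b : M →ₗ[ℤ] M →ₗ[ℤ] ℤ) {ι : Type*} [Fintype ι] (f : ι → M)
    (h1 : ∀ i, b (f i) (f i) = 2) (h2 : ∀ i j, i ≠ j → b (f i) (f j) = 1) :
    Fintype.card ι ≤ Module.finrank ℤ M := by
  classical
  apply LinearIndependent.fintype_card_le_finrank (R := ℤ) (b := f)
  rw [Fintype.linearIndependent_iff]
  intro g hg
  have key : ∀ i, g i + ∑ j, g j = 0 := by
    intro i
    have h := congrArg (b (f i)) hg
    simp only [map_sum, map_smul, smul_eq_mul, map_zero] at h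
    rw [← h]
    have : ∀ j, g j * b (f i) (f j) = (if i = j then g j else 0) + g j := by
      intro j
      split_ifs with hij
      · subst hij; rw [h1]; ring
      · rw [h2 i j hij]; ring
    simp only [this, Finset.sum_add_distrib]
    simp
  have hsum : (1 + (Fintype.card ι : ℤ)) * ∑ j, g j = 0 := by
    have := Finset.sum_congr (rfl : (Finset.univ : Finset ι) = Finset.univ) (fun i _ => key i)
    simp only [Finset.sum_add_distrib, Finset.sum_const_zero, Finset.sum_const,
      Finset.card_univ, nsmul_eq_mul] at this
    linarith
  have h0 : ∑ j, g j = 0 := by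
    rcases mul_eq_zero.mp hsum with h | h
    · omega
    · exact h
  intro i
  have := key i
  omega

/-- Bessel inequality for orthogonal vectors of norm four. -/
theorem bessel_four (b : M →ₗ[ℤ] M →ₗ[ℤ] ℤ) (hs : ∀ x y, b x y = b y x)
    (hp : ∀ x, x ≠ 0 → 0 < b x x) {ι : Type*} [Fintype ι] (f : ι → M)
    (h1 : ∀ i, b (f i) (f i) = 4) (h2 : ∀ i j, i ≠ j → b (f i) (f j) = 0) (y : M) :
    ∑ i, (b y (f i)) ^ 2 ≤ 4 * b y y := by
  classical
  have hnn : ∀ x, 0 ≤ b x x := by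
    intro x
    by_cases h : x = 0
    · simp [h]
    · exact (hp x h).le
  set s : M := ∑ i, b y (f i) • f i with hsdef
  have e1 : b y s = ∑ i, (b y (f i)) ^ 2 := by
    simp only [hsdef, map_sum, map_zsmul, smul_eq_mul, sq]
  have e3 : ∀ i, b (f i) s = 4 * b y (f i) := by
    intro i
    simp only [hsdef, map_sum, map_zsmul, smul_eq_mul]
    rw [Finset.sum_eq_single i]
    · rw [h1]; ring
    · intro j _ hj
      rw [h2 i j hj.symm, mul_zero]
    · simp
  have e2 : b s s = 4 * ∑ i, (b y (f i)) ^ 2 := by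
    have : b s s = ∑ i, b y (f i) * b (f i) s := by
      have h0 : ∀ z, b z s = ∑ i, b y (f i) * b z (f i) := by
        intro z
        simp only [hsdef, map_sum, map_zsmul, smul_eq_mul]
      rw [h0]
      exact Finset.sum_congr rfl fun i _ => by rw [hs s]
    rw [this, Finset.mul_sum]
    exact Finset.sum_congr rfl fun i _ => by rw [e3]; ring
  have h := hnn (y + y + y + y - s)
  simp only [map_sub, LinearMap.sub_apply, map_add, LinearMap.add_apply] at h
  rw [hs s y] at h
  linarith

theorem four_ints {a c d e : ℤ} (h : a + c + d + e = 2) (ha : a = 0 ∨ a = 1)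
    (hc : c = 0 ∨ c = 1) (hd : d = 0 ∨ d = 1) (he : e = 0 ∨ e = 1) :
    (((a = 1 ∧ c = 1 ∧ d = 0 ∧ e = 0) ∨ (d = 1 ∧ e = 1 ∧ a = 0 ∧ c = 0)) ∨
      ((a = 1 ∧ d = 1 ∧ c = 0 ∧ e = 0) ∨ (c = 1 ∧ e = 1 ∧ a = 0 ∧ d = 0))) ∨
      ((a = 1 ∧ e = 1 ∧ c = 0 ∧ d = 0) ∨ (c = 1 ∧ d = 1 ∧ a = 0 ∧ e = 0)) := by
  rcases ha with rfl | rfl <;> rcases hc with rfl | rfl <;> rcases hd with rfl | rfl <;>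
    rcases he with rfl | rfl <;> simp at h ⊢

/-- One of the classes of roots pairing to one with `v`, relative to four orthogonal roots. -/
def cls [DecidableEq M] (b : M →ₗ[ℤ] M →ₗ[ℤ] ℤ) (S : Finset M) (p q s t : M) : Finset M :=
  S.filter fun x => b p x = 1 ∧ b q x = 1 ∧ b s x = 0 ∧ b t x = 0

/-- Data of four orthogonal roots pairing to one with `v`. -/
structure Quad (b : M →ₗ[ℤ] M →ₗ[ℤ] ℤ) (v p q s t : M) : Prop where
  v2 : b v v = 2
  p2 : b p p = 2
  q2 : b q q = 2
  s2 : b s s = 2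
  t2 : b t t = 2
  pq : b p q = 0
  ps : b p s = 0
  pt : b p t = 0
  qs : b q s = 0
  qt : b q t = 0
  st : b s t = 0
  vp : b v p = 1
  vq : b v q = 1
  vs : b v s = 1
  vt : b v t = 1

/-- Half of a class is a frame. -/
theorem cls_half [DecidableEq M] (b : M →ₗ[ℤ] M →ₗ[ℤ] ℤ) (hs : ∀ x y, b x y = b y x)
    (hp : ∀ x, x ≠ 0 → 0 < b x x) {v p q s t : M} (h : Quad b v p q s t) (S : Finset M)
    (hS : ∀ x ∈ S, b x x = 2 ∧ b v x = 1) :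
    ∃ D ⊆ cls b S p q s t, (cls b S p q s t).card ≤ 2 * D.card ∧
      ∀ x ∈ D, ∀ y ∈ D, x ≠ y → b x y = 1 := by
  set C := cls b S p q s t with hC
  have hmem : ∀ x ∈ C, b x x = 2 ∧ b v x = 1 ∧ b p x = 1 ∧ b q x = 1 ∧ b s x = 0 ∧ b t x = 0 := by
    intro x hx
    rw [hC, cls, Finset.mem_filter] at hx
    exact ⟨(hS x hx.1).1, (hS x hx.1).2, hx.2⟩
  obtain ⟨D, hD, hmax⟩ := Finset.exists_max_image
    (C.powerset.filter fun D => ∀ x ∈ D, ∀ y ∈ D, x ≠ y → b x y = 1) Finset.card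
    ⟨∅, by simp⟩
  rw [Finset.mem_filter, Finset.mem_powerset] at hD
  refine ⟨D, hD.1, ?_, hD.2⟩
  have hsub : C ⊆ D ∪ D.image fun d => p + q - d := by
    intro x hx
    rw [Finset.mem_union]
    by_contra hcon
    push Not at hcon
    obtain ⟨hxD, hxi⟩ := hcon
    have hone : ∀ d ∈ D, b x d = 1 := by
      intro d hd
      have hdx : x ≠ d := fun e => hxD (e ▸ hd)
      obtain ⟨x2, vx, px, qx, sx, tx⟩ := hmem x hx
      obtain ⟨d2, vd, pd, qd, sd, td⟩ := hmem d (hD.1 hd)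
      have a1 := root_le b hs hp x2 d2
      have a2 := root_ge b hs hp h.v2 x2 d2 vx vd
      have a3 : b x d ≠ 2 := fun e => hdx (a1.2 e)
      have a4 : b x d ≠ -1 := by
        intro e
        have e2 := a2.2 e
        rw [e2] at sx
        simp only [map_sub] at sx
        have := hs s v
        have := h.vs
        omega
      have a5 : b x d ≠ 0 := by
        intro e
        apply hxi
        rw [Finset.mem_image]
        refine ⟨d, hd, ?_⟩
        have n2 : b (p + q - d) (p + q - d) = 2 := by
          simp only [map_sub, LinearMap.sub_apply, map_add, LinearMap.add_apply]
          have := h.p2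
          have := h.q2
          have := h.pq
          have := hs q p
          have := hs d p
          have := hs d q
          omega
        apply (root_le b hs hp n2 x2).2
        simp only [map_sub, LinearMap.sub_apply, map_add, LinearMap.add_apply]
        have := hs d x
        omega
      omega
    have hins := hmax (insert x D) (by
      rw [Finset.mem_filter, Finset.mem_powerset]
      refine ⟨Finset.insert_subset hx hD.1, ?_⟩
      intro y hy z hz hyz
      rw [Finset.mem_insert] at hy hz
      rcases hy with rfl | hy
      · rcases hz with rfl | hz
        · exact absurd rfl hyz
        · exact hone z hz
      · rcases hz with rfl | hz
        · rw [hs]; exact hone y hy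
        · exact hD.2 y hy z hz hyz)
    rw [Finset.card_insert_of_notMem hxD] at hins
    omega
  calc C.card ≤ (D ∪ D.image fun d => p + q - d).card := Finset.card_le_card hsub
    _ ≤ D.card + (D.image fun d => p + q - d).card := Finset.card_union_le _ _
    _ ≤ 2 * D.card := by
      have := Finset.card_image_le (s := D) (f := fun d => p + q - d)
      omega

theorem cls_rank [DecidableEq M] [Module.Free ℤ M] [Module.Finite ℤ M]
    (b : M →ₗ[ℤ] M →ₗ[ℤ] ℤ) (hs : ∀ x y, b x y = b y x)
    (hp : ∀ x, x ≠ 0 → 0 < b x x) {v p q s t : M} (h : Quad b v p q s t) (S : Finset M)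
    (hS : ∀ x ∈ S, b x x = 2 ∧ b v x = 1) :
    (cls b S p q s t).card + 8 ≤ 2 * Module.finrank ℤ M := by
  obtain ⟨D, hDC, hcard, hD⟩ := cls_half b hs hp h S hS
  have hmem : ∀ x ∈ D, b x x = 2 ∧ b v x = 1 ∧ b p x = 1 ∧ b q x = 1 ∧ b s x = 0 ∧ b t x = 0 := by
    intro x hx
    have hx := hDC hx
    rw [cls, Finset.mem_filter] at hx
    exact ⟨(hS x hx.1).1, (hS x hx.1).2, hx.2⟩
  obtain ⟨v2, p2, q2, s2, t2, pq, ps, pt, qs, qt, st, vp, vq, vs, vt⟩ := h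
  have hqp := hs q p
  have hsp := hs s p
  have htp := hs t p
  have hsq := hs s q
  have htq := hs t q
  have hts := hs t s
  have key := orth_card b (ι := Fin 4 ⊕ D)
    (Sum.elim ![p, q, s, t] fun x => x.1 + x.1 - p - q) (by
      rintro (i | ⟨x, hx⟩)
      · fin_cases i <;> simp [p2, q2, s2, t2]
      · obtain ⟨x2, vx, px, qx, sx, tx⟩ := hmem x hx
        have := hs x p
        have := hs x q
        simp only [Sum.elim_inr, map_sub, LinearMap.sub_apply, map_add, LinearMap.add_apply]
        omega) (by
      have mix : ∀ (i : Fin 4) (x : M), x ∈ D → b (![p, q, s, t] i) (x + x - p - q) = 0 := by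
        intro i x hx
        obtain ⟨x2, vx, px, qx, sx, tx⟩ := hmem x hx
        fin_cases i <;> simp <;> omega
      rintro (i | ⟨x, hx⟩) (j | ⟨y, hy⟩) hij
      · fin_cases i <;> fin_cases j <;> simp at hij ⊢ <;> omega
      · exact mix i y hy
      · rw [hs]; exact mix j x hx
      · obtain ⟨x2, vx, px, qx, sx, tx⟩ := hmem x hx
        obtain ⟨y2, vy, py, qy, sy, ty⟩ := hmem y hy
        have hxy := hD x hx y hy (fun e => hij (by subst e; rfl))
        have := hs x p
        have := hs x q
        simp only [Sum.elim_inr, map_sub, LinearMap.sub_apply, map_add, LinearMap.add_apply]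
        omega)
  rw [Fintype.card_sum, Fintype.card_fin, Fintype.card_coe] at key
  omega

theorem cls_eight [DecidableEq M]
    (b : M →ₗ[ℤ] M →ₗ[ℤ] ℤ) (hs : ∀ x y, b x y = b y x)
    (hp : ∀ x, x ≠ 0 → 0 < b x x) {v p q s t : M} (h : Quad b v p q s t) (S : Finset M)
    (hS : ∀ x ∈ S, b x x = 2 ∧ b v x = 1) (hne : 0 < (cls b S p s q t).card) :
    (cls b S p q s t).card ≤ 8 := by
  obtain ⟨D, hDC, hcard, hD⟩ := cls_half b hs hp h S hS
  have hmem : ∀ x ∈ D, b x x = 2 ∧ b v x = 1 ∧ b p x = 1 ∧ b q x = 1 ∧ b s x = 0 ∧ b t x = 0 := by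
    intro x hx
    have hx := hDC hx
    rw [cls, Finset.mem_filter] at hx
    exact ⟨(hS x hx.1).1, (hS x hx.1).2, hx.2⟩
  obtain ⟨y, hy⟩ := Finset.card_pos.mp hne
  rw [cls, Finset.mem_filter] at hy
  obtain ⟨hyS, py, sy, qy, ty⟩ := hy
  obtain ⟨y2, vy⟩ := hS y hyS
  obtain ⟨v2, p2, q2, s2, t2, pq, ps, pt, qs, qt, st, vp, vq, vs, vt⟩ := h
  have hqp := hs q p
  have hsp := hs s p
  have hsq := hs s q
  have hyp := hs y p
  have hys := hs y s
  have hyq := hs y q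
  have key := bessel_four b hs hp (ι := D) (fun x => x.1 + x.1 - p - q) (by
      rintro ⟨x, hx⟩
      obtain ⟨x2, vx, px, qx, sx, tx⟩ := hmem x hx
      have := hs x p
      have := hs x q
      simp only [map_sub, LinearMap.sub_apply, map_add, LinearMap.add_apply]
      omega) (by
      rintro ⟨x, hx⟩ ⟨z, hz⟩ hij
      obtain ⟨x2, vx, px, qx, sx, tx⟩ := hmem x hx
      obtain ⟨z2, vz, pz, qz, sz, tz⟩ := hmem z hz
      have hxz := hD x hx z hz (fun e => hij (by subst e; rfl))
      have := hs x p
      have := hs x q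
      simp only [map_sub, LinearMap.sub_apply, map_add, LinearMap.add_apply]
      omega) (y + y - p - s)
  have hterm : ∀ x : D, (b (y + y - p - s) (x.1 + x.1 - p - q)) ^ 2 = 4 := by
    rintro ⟨x, hx⟩
    obtain ⟨x2, vx, px, qx, sx, tx⟩ := hmem x hx
    have e : b (y + y - p - s) (x + x - p - q) = 4 * b y x - 2 := by
      simp only [map_sub, LinearMap.sub_apply, map_add, LinearMap.add_apply]
      omega
    have a1 := root_le b hs hp y2 x2
    have a2 := root_ge b hs hp v2 y2 x2 vy vx
    have a3 : b y x ≠ 2 := by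
      intro e
      have := a1.2 e
      subst this
      omega
    have a4 : b y x ≠ -1 := by
      intro e
      have := a2.2 e
      rw [this] at ty
      simp only [map_sub] at ty
      have := hs t v
      omega
    have a5 : b y x = 0 ∨ b y x = 1 := by omega
    show (b (y + y - p - s) (x + x - p - q)) ^ 2 = 4
    rw [e]
    rcases a5 with a5 | a5 <;> rw [a5] <;> norm_num
  have hyy : b (y + y - p - s) (y + y - p - s) = 4 := by
    simp only [map_sub, LinearMap.sub_apply, map_add, LinearMap.add_apply]
    omega
  rw [hyy, Finset.sum_congr rfl (fun x _ => hterm x)] at key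
  simp only [Finset.sum_const, Finset.card_univ, Fintype.card_coe, nsmul_eq_mul] at key
  have : (D.card : ℤ) ≤ 4 := by linarith
  omega

theorem cls_swap [DecidableEq M]
    (b : M →ₗ[ℤ] M →ₗ[ℤ] ℤ) (hs : ∀ x y, b x y = b y x)
    {v p q s t : M} (h : Quad b v p q s t) (S : Finset M)
    (hS : ∀ x ∈ S, v - x ∈ S) :
    (cls b S p q s t).card ≤ (cls b S s t p q).card := by
  apply Finset.card_le_card_of_injOn (fun x => v - x)
  · intro x hx
    have hx : x ∈ cls b S p q s t := hx
    rw [cls, Finset.mem_filter] at hx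
    show v - x ∈ cls b S s t p q
    rw [cls, Finset.mem_filter]
    refine ⟨hS x hx.1, ?_⟩
    simp only [map_sub]
    rw [hs p v, hs q v, hs s v, hs t v, h.vp, h.vq, h.vs, h.vt]
    omega
  · intro x _ y _ hxy
    exact sub_right_injective hxy

set_option maxHeartbeats 1000000 in
/-- The degree bound. -/
theorem degree_bound [DecidableEq M] [Module.Free ℤ M] [Module.Finite ℤ M]
    (b : M →ₗ[ℤ] M →ₗ[ℤ] ℤ) (hs : ∀ x y, b x y = b y x)
    (hp : ∀ x, x ≠ 0 → 0 < b x x) {v : M} (v2 : b v v = 2) (S : Finset M)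
    (hS : ∀ x, x ∈ S ↔ b x x = 2 ∧ b v x = 1) :
    S.card ≤ 56 ∨ S.card + 8 ≤ 4 * Module.finrank ℤ M := by
  have hneg : ∀ x ∈ S, v - x ∈ S := by
    intro x hx
    rw [hS] at hx ⊢
    have := hs x v
    simp only [map_sub, LinearMap.sub_apply]
    omega
  by_cases htri : ∃ p ∈ S, ∃ q ∈ S, ∃ s ∈ S, b p q = 0 ∧ b p s = 0 ∧ b q s = 0
  · obtain ⟨p, hpS, q, hqS, s, hsS, pq, ps, qs⟩ := htri
    obtain ⟨p2, vp⟩ := (hS p).1 hpS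
    obtain ⟨q2, vq⟩ := (hS q).1 hqS
    obtain ⟨s2, vs⟩ := (hS s).1 hsS
    obtain ⟨t, ht⟩ : ∃ t, t = v + v - p - q - s := ⟨_, rfl⟩
    have hqp := hs q p
    have hsp := hs s p
    have hsq := hs s q
    have hpv := hs p v
    have hqv := hs q v
    have hsv := hs s v
    have pt : b p t = 0 := by rw [ht]; simp only [map_sub, map_add]; omega
    have qt : b q t = 0 := by rw [ht]; simp only [map_sub, map_add]; omega
    have st : b s t = 0 := by rw [ht]; simp only [map_sub, map_add]; omega
    have vt : b v t = 1 := by rw [ht]; simp only [map_sub, map_add]; omega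
    have t2 : b t t = 2 := by
      have : b t t = b (v + v - p - q - s) t := by rw [← ht]
      rw [this]
      simp only [map_sub, map_add, LinearMap.sub_apply, LinearMap.add_apply]
      omega
    have htp := hs t p
    have htq := hs t q
    have hts := hs t s
    have hS' : ∀ x ∈ S, b x x = 2 ∧ b v x = 1 := fun x hx => (hS x).1 hx
    have mk : ∀ a c d e : M, Quad b v a c d e → Quad b v a d c e ∧ Quad b v a c e d ∧
        Quad b v d e a c ∧ Quad b v c a d e := by
      intro a c d e h
      obtain ⟨v2, p2, q2, s2, t2, pq, ps, pt, qs, qt, st, vp, vq, vs, vt⟩ := h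
      have := hs a c
      have := hs a d
      have := hs a e
      have := hs c d
      have := hs c e
      have := hs d e
      refine ⟨?_, ?_, ?_, ?_⟩ <;> constructor <;> omega
    have Q1 : Quad b v p q s t := by constructor <;> assumption
    have Q2 : Quad b v p s q t := (mk _ _ _ _ Q1).1
    have Q1' : Quad b v p q t s := (mk _ _ _ _ Q1).2.1
    have Q3 : Quad b v p t q s := (mk _ _ _ _ Q1').1
    have Q2' : Quad b v p s t q := (mk _ _ _ _ Q2).2.1
    have Q3' : Quad b v p t s q := (mk _ _ _ _ Q3).2.1
    have comm4 : ∀ a c d e : M, cls b S a c d e = cls b S a c e d := by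
      intro a c d e
      unfold cls
      congr 1
      ext x
      tauto
    have sw1 := cls_swap b hs (mk _ _ _ _ Q1).2.2.1 S hneg
    have sw2 := cls_swap b hs (mk _ _ _ _ Q2).2.2.1 S hneg
    have sw3 := cls_swap b hs (mk _ _ _ _ Q3).2.2.1 S hneg
    have r1 := cls_rank b hs hp Q1 S hS'
    have r2 := cls_rank b hs hp Q2 S hS'
    have r3 := cls_rank b hs hp Q3 S hS'
    have e12 := cls_eight b hs hp Q1 S hS'
    have e21 := cls_eight b hs hp Q2 S hS'
    have e13 := cls_eight b hs hp Q1' S hS'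
    have e31 := cls_eight b hs hp Q3 S hS'
    have e23 := cls_eight b hs hp Q2' S hS'
    have e32 := cls_eight b hs hp Q3' S hS'
    rw [comm4 p q t s] at *
    rw [comm4 p s t q] at *
    rw [comm4 p t s q] at *
    have hcover : S ⊆ ({p, q, s, t, v - p, v - q, v - s, v - t} : Finset M) ∪
        (cls b S p q s t ∪ cls b S s t p q ∪ (cls b S p s q t ∪ cls b S q t p s) ∪
          (cls b S p t q s ∪ cls b S q s p t)) := by
      intro x hx
      obtain ⟨x2, vx⟩ := hS' x hx
      have hsum : b p x + b q x + b s x + b t x = 2 := by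
        rw [ht]
        simp only [map_sub, map_add, LinearMap.sub_apply, LinearMap.add_apply]
        omega
      have P1 := root_le b hs hp p2 x2
      have P2 := root_ge b hs hp v2 x2 p2 vx vp
      have R1 := root_le b hs hp q2 x2
      have R2 := root_ge b hs hp v2 x2 q2 vx vq
      have S1 := root_le b hs hp s2 x2
      have S2 := root_ge b hs hp v2 x2 s2 vx vs
      have T1 := root_le b hs hp t2 x2
      have T2 := root_ge b hs hp v2 x2 t2 vx vt
      rw [hs x p] at P2
      rw [hs x q] at R2
      rw [hs x s] at S2
      rw [hs x t] at T2
      rw [Finset.mem_union]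
      by_cases hsp : x ∈ ({p, q, s, t, v - p, v - q, v - s, v - t} : Finset M)
      · exact Or.inl hsp
      · right
        simp only [Finset.mem_insert, Finset.mem_singleton, not_or] at hsp
        obtain ⟨n1, n2, n3, n4, n5, n6, n7, n8⟩ := hsp
        have u1 : b p x ≠ 2 := fun e => n1 (P1.2 e).symm
        have u2 : b q x ≠ 2 := fun e => n2 (R1.2 e).symm
        have u3 : b s x ≠ 2 := fun e => n3 (S1.2 e).symm
        have u4 : b t x ≠ 2 := fun e => n4 (T1.2 e).symm
        have u5 : b p x ≠ -1 := fun e => n5 (P2.2 e)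
        have u6 : b q x ≠ -1 := fun e => n6 (R2.2 e)
        have u7 : b s x ≠ -1 := fun e => n7 (S2.2 e)
        have u8 : b t x ≠ -1 := fun e => n8 (T2.2 e)
        simp only [Finset.mem_union, cls, Finset.mem_filter, hx, true_and]
        have P3 := P1.1
        have P4 := P2.1
        have R3 := R1.1
        have R4 := R2.1
        have S3 := S1.1
        have S4 := S2.1
        have T3 := T1.1
        have T4 := T2.1
        refine four_ints hsum ?_ ?_ ?_ ?_
        · clear * - u1 u5 P3 P4
          omega
        · clear * - u2 u6 R3 R4
          omega
        · clear * - u3 u7 S3 S4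
          omega
        · clear * - u4 u8 T3 T4
          omega
    have c0 := Finset.card_le_card hcover
    have c1 := Finset.card_union_le ({p, q, s, t, v - p, v - q, v - s, v - t} : Finset M)
        (cls b S p q s t ∪ cls b S s t p q ∪ (cls b S p s q t ∪ cls b S q t p s) ∪
          (cls b S p t q s ∪ cls b S q s p t))
    have c2 : ({p, q, s, t, v - p, v - q, v - s, v - t} : Finset M).card ≤ 8 :=
      (Finset.card_insert_le _ _).trans (Nat.succ_le_succ
        ((Finset.card_insert_le _ _).trans (Nat.succ_le_succ Finset.card_le_six)))
    have c3 := Finset.card_union_le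
        (cls b S p q s t ∪ cls b S s t p q ∪ (cls b S p s q t ∪ cls b S q t p s))
        (cls b S p t q s ∪ cls b S q s p t)
    have c4 := Finset.card_union_le
        (cls b S p q s t ∪ cls b S s t p q) (cls b S p s q t ∪ cls b S q t p s)
    have c5 := Finset.card_union_le (cls b S p q s t) (cls b S s t p q)
    have c6 := Finset.card_union_le (cls b S p s q t) (cls b S q t p s)
    have c7 := Finset.card_union_le (cls b S p t q s) (cls b S q s p t)
    clear * - c0 c1 c2 c3 c4 c5 c6 c7 sw1 sw2 sw3 r1 r2 r3 e12 e21 e13 e31 e23 e32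
    omega
  · rcases S.eq_empty_or_nonempty with rfl | ⟨w, hw⟩
    · simp
    obtain ⟨w2, vw⟩ := (hS w).1 hw
    set X := S.filter fun x => 1 ≤ b w x with hX
    have hsplit : X.card + (S.filter fun x => ¬ 1 ≤ b w x).card = S.card :=
      Finset.card_filter_add_card_filter_not (s := S) (fun x => 1 ≤ b w x)
    have hle : (S.filter fun x => ¬ 1 ≤ b w x).card ≤ X.card := by
      apply Finset.card_le_card_of_injOn (fun x => v - x)
      · intro x hx
        have hx : x ∈ S.filter fun x => ¬ 1 ≤ b w x := hx
        rw [Finset.mem_filter] at hx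
        show v - x ∈ X
        rw [hX, Finset.mem_filter]
        refine ⟨hneg x hx.1, ?_⟩
        simp only [map_sub]
        have := hs w v
        omega
      · intro x _ y _ hxy
        exact sub_right_injective hxy
    have hXr := simplex_card b (ι := X) (fun x => x.1) (by
      rintro ⟨x, hx⟩
      rw [hX, Finset.mem_filter] at hx
      exact ((hS x).1 hx.1).1) (by
      rintro ⟨x, hx⟩ ⟨y, hy⟩ hij
      have hxy : x ≠ y := fun e => hij (by subst e; rfl)
      rw [hX, Finset.mem_filter] at hx hy
      obtain ⟨hxS, wx⟩ := hx
      obtain ⟨hyS, wy⟩ := hy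
      obtain ⟨x2, vx⟩ := (hS x).1 hxS
      obtain ⟨y2, vy⟩ := (hS y).1 hyS
      show b x y = 1
      have a1 := root_le b hs hp x2 y2
      have a2 := root_ge b hs hp v2 x2 y2 vx vy
      have a3 : b x y ≠ 2 := fun e => hxy (a1.2 e)
      have b1 := root_le b hs hp w2 x2
      have b2 := root_le b hs hp w2 y2
      by_cases hwx : w = x
      · subst hwx; omega
      by_cases hwy : w = y
      · subst hwy
        have := hs w x
        omega
      have b3 : b w x ≠ 2 := fun e => hwx (b1.2 e)
      have b4 : b w y ≠ 2 := fun e => hwy (b2.2 e)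
      have hwv := hs w v
      have hxv := hs x v
      have a4 : b x y ≠ -1 := by
        intro e
        have := a2.2 e
        rw [this] at wx
        simp only [map_sub] at wx
        omega
      have a5 : b x y ≠ 0 := by
        intro e
        apply htri
        refine ⟨w, hw, v - x, hneg x hxS, v - y, hneg y hyS, ?_⟩
        simp only [map_sub, LinearMap.sub_apply]
        omega
      omega)
    rw [Fintype.card_coe] at hXr
    omega

end Roots

/-- The trace inequality for finitely many vectors in `ℝ^r`. -/
theorem frame_ineq {M : Type*} (r : ℕ) (R : Finset M) (a : M → Fin r → ℝ) :
    (∑ w ∈ R, ∑ i, a w i * a w i) ^ 2 ≤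
      r * ∑ w ∈ R, ∑ u ∈ R, (∑ i, a w i * a u i) ^ 2 := by
  set T : Fin r → Fin r → ℝ := fun i j => ∑ w ∈ R, a w i * a w j with hT
  have e1 : ∑ w ∈ R, ∑ i, a w i * a w i = ∑ i, T i i := by
    rw [Finset.sum_comm]
  have e2 : ∑ w ∈ R, ∑ u ∈ R, (∑ i, a w i * a u i) ^ 2 = ∑ i, ∑ j, T i j ^ 2 := by
    have l : ∀ w u, (∑ i, a w i * a u i) ^ 2 =
        ∑ i, ∑ j, (a w i * a w j) * (a u i * a u j) := by
      intro w u
      rw [sq, Finset.sum_mul_sum]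
      exact Finset.sum_congr rfl fun i _ => Finset.sum_congr rfl fun j _ => by ring
    have l2 : ∀ i j, T i j ^ 2 = ∑ w ∈ R, ∑ u ∈ R, (a w i * a w j) * (a u i * a u j) := by
      intro i j
      rw [sq, hT, Finset.sum_mul_sum]
    simp only [l, l2]
    calc ∑ w ∈ R, ∑ u ∈ R, ∑ i, ∑ j, a w i * a w j * (a u i * a u j)
        = ∑ w ∈ R, ∑ i, ∑ u ∈ R, ∑ j, a w i * a w j * (a u i * a u j) :=
          Finset.sum_congr rfl fun w _ => Finset.sum_comm
      _ = ∑ i, ∑ w ∈ R, ∑ u ∈ R, ∑ j, a w i * a w j * (a u i * a u j) := Finset.sum_comm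
      _ = ∑ i, ∑ w ∈ R, ∑ j, ∑ u ∈ R, a w i * a w j * (a u i * a u j) :=
          Finset.sum_congr rfl fun i _ => Finset.sum_congr rfl fun w _ => Finset.sum_comm
      _ = _ := Finset.sum_congr rfl fun i _ => Finset.sum_comm
  rw [e1, e2]
  have h1 := sq_sum_le_card_mul_sum_sq (s := (Finset.univ : Finset (Fin r))) (f := fun i => T i i)
  rw [Finset.card_univ, Fintype.card_fin] at h1
  refine h1.trans ?_
  gcongr with i
  exact Finset.single_le_sum (f := fun j => T i j ^ 2) (fun j _ => sq_nonneg _) (Finset.mem_univ i)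

/-- A positive definite integral form embeds isometrically in `ℝ^r`. -/
theorem exists_embedding {M : Type*} [AddCommGroup M] [Module ℤ M]
    [Module.Free ℤ M] [Module.Finite ℤ M]
    (b : M →ₗ[ℤ] M →ₗ[ℤ] ℤ) (hs : ∀ x y, b x y = b y x)
    (hp : ∀ x, x ≠ 0 → 0 < b x x) :
    ∃ a : M → Fin (Module.finrank ℤ M) → ℝ, ∀ x y, (b x y : ℝ) = ∑ i, a x i * a y i := by
  classical
  set r := Module.finrank ℤ M with hr
  let β : Module.Basis (Fin r) ℤ M := Module.finBasis ℤ M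
  let G : Matrix (Fin r) (Fin r) ℝ := Matrix.of fun i j => (b (β i) (β j) : ℝ)
  have hnn : ∀ x, 0 ≤ b x x := by
    intro x
    by_cases h : x = 0
    · simp [h]
    · exact (hp x h).le
  have hexp : ∀ x y, b x y = ∑ i, ∑ j, β.repr x i * β.repr y j * b (β i) (β j) := by
    intro x y
    rw [← LinearMap.sum_repr_mul_repr_mul β β x y]
    rw [Finsupp.sum_fintype _ _ (by simp)]
    refine Finset.sum_congr rfl fun i _ => ?_
    rw [Finsupp.sum_fintype _ _ (by simp)]
    refine Finset.sum_congr rfl fun j _ => ?_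
    simp only [smul_eq_mul]
    ring
  have hintg : ∀ z : Fin r → ℤ, 0 ≤ ∑ i, ∑ j, (z i : ℝ) * z j * G i j := by
    intro z
    have h := hnn (β.equivFun.symm z)
    rw [hexp] at h
    have e : ∀ i, β.repr (β.equivFun.symm z) i = z i := by
      intro i
      rw [← Module.Basis.equivFun_apply, LinearEquiv.apply_symm_apply]
    simp only [e] at h
    have h' : (0 : ℝ) ≤ ((∑ i, ∑ j, z i * z j * b (β i) (β j) : ℤ) : ℝ) := by exact_mod_cast h
    push_cast at h'
    exact h'
  have hrat : ∀ q : Fin r → ℚ, 0 ≤ ∑ i, ∑ j, (q i : ℝ) * q j * G i j := by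
    intro q
    obtain ⟨n, hn⟩ := IsLocalization.exist_integer_multiples_of_finite (nonZeroDivisors ℤ) q
    choose z hz using hn
    have hn0 : ((n : ℤ) : ℝ) ≠ 0 := by
      exact_mod_cast nonZeroDivisors.coe_ne_zero n
    have hz' : ∀ i, (z i : ℝ) = ((n : ℤ) : ℝ) * (q i : ℝ) := by
      intro i
      have h := hz i
      rw [zsmul_eq_mul] at h
      have h2 : ((z i : ℤ) : ℚ) = ((n : ℤ) : ℚ) * q i := h
      have h3 := congrArg (fun t : ℚ => (t : ℝ)) h2
      push_cast at h3
      exact h3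
    have h := hintg z
    have e : ∑ i, ∑ j, (z i : ℝ) * z j * G i j =
        ((n : ℤ) : ℝ) ^ 2 * ∑ i, ∑ j, (q i : ℝ) * q j * G i j := by
      rw [Finset.mul_sum]
      refine Finset.sum_congr rfl fun i _ => ?_
      rw [Finset.mul_sum]
      refine Finset.sum_congr rfl fun j _ => ?_
      rw [hz', hz']
      ring
    rw [e] at h
    exact nonneg_of_mul_nonneg_right h (by positivity)
  have hreal : ∀ x : Fin r → ℝ, 0 ≤ ∑ i, ∑ j, x i * x j * G i j := by
    have hd : DenseRange (Pi.map fun (_ : Fin r) (q : ℚ) => (q : ℝ)) :=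
      DenseRange.piMap fun _ => Rat.denseRange_cast
    intro x
    refine hd.induction_on (p := fun x : Fin r → ℝ => 0 ≤ ∑ i, ∑ j, x i * x j * G i j) x ?_ ?_
    · exact isClosed_le continuous_const (by fun_prop)
    · intro q
      exact hrat q
  have hG : G.PosSemidef := by
    refine .of_dotProduct_mulVec_nonneg ?_ (fun x => ?_)
    · ext i j
      simp [G, hs (β i) (β j)]
    · have h := hreal x
      have e : star x ⬝ᵥ (G.mulVec x) = ∑ i, ∑ j, x i * x j * G i j := by
        simp only [dotProduct, Matrix.mulVec, star_trivial, Finset.mul_sum]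
        exact Finset.sum_congr rfl fun i _ => Finset.sum_congr rfl fun j _ => by ring
      rw [e]
      exact h
  obtain ⟨B, hB⟩ : ∃ B : Matrix (Fin r) (Fin r) ℝ, G = star B * B := by
    open scoped MatrixOrder Matrix.Norms.L2Operator in
    exact CStarAlgebra.nonneg_iff_eq_star_mul_self.mp hG.nonneg
  have hB' : ∀ i j, (b (β i) (β j) : ℝ) = ∑ k, B k i * B k j := by
    intro i j
    have h := congrFun (congrFun hB i) j
    rw [Matrix.mul_apply] at h
    simpa [G, Matrix.star_apply] using h
  refine ⟨fun x k => ∑ i, B k i * (β.repr x i : ℝ), fun x y => ?_⟩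
  rw [hexp]
  push_cast
  simp only [Finset.sum_mul_sum]
  simp only [hB', Finset.mul_sum]
  calc _ = ∑ i, ∑ k, ∑ j, (β.repr x i : ℝ) * (β.repr y j : ℝ) * (B k i * B k j) :=
        Finset.sum_congr rfl fun i _ => Finset.sum_comm
    _ = ∑ k, ∑ i, ∑ j, (β.repr x i : ℝ) * (β.repr y j : ℝ) * (B k i * B k j) := Finset.sum_comm
    _ = _ := Finset.sum_congr rfl fun k _ => Finset.sum_congr rfl fun i _ =>
        Finset.sum_congr rfl fun j _ => by ring

/-- The bound in terms of the bilinear form. -/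
theorem root_count {M : Type*} [AddCommGroup M] [Module ℤ M]
    [Module.Free ℤ M] [Module.Finite ℤ M]
    (b : M →ₗ[ℤ] M →ₗ[ℤ] ℤ) (hs : ∀ x y, b x y = b y x)
    (hp : ∀ x, x ≠ 0 → 0 < b x x) (R : Finset M) (hR : ∀ x, x ∈ R ↔ b x x = 2) :
    (R.card : ℝ) ≤ max 480 (2 * (Module.finrank ℤ M : ℝ) * ((Module.finrank ℤ M : ℝ) - 1)) := by
  classical
  set r := Module.finrank ℤ M with hr
  -- the sum of squares around each root
  have hsq : ∀ v ∈ R, ∑ w ∈ R, (b v w) ^ 2 ≤ 8 + 2 * ((R.filter fun w => b v w = 1).card : ℤ) := by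
    intro v hv
    have v2 := (hR v).1 hv
    have hnegR : ∀ x ∈ R, -x ∈ R := by
      intro x hx
      rw [hR] at hx ⊢
      simpa using hx
    have hcard : (R.filter fun w => b v w = -1).card ≤ (R.filter fun w => b v w = 1).card := by
      apply Finset.card_le_card_of_injOn (fun x => -x)
      · intro x hx
        have hx : x ∈ R.filter fun w => b v w = -1 := hx
        rw [Finset.mem_filter] at hx
        show -x ∈ R.filter fun w => b v w = 1
        rw [Finset.mem_filter]
        refine ⟨hnegR x hx.1, ?_⟩
        rw [map_neg, hx.2]
        norm_num
      · intro x _ y _ hxy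
        exact neg_injective hxy
    have hpt : ∀ w ∈ R, (b v w) ^ 2 ≤ (if w = v then 4 else 0) + (if w = -v then 4 else 0) +
        (if b v w = 1 then 1 else 0) + (if b v w = -1 then 1 else 0) := by
      intro w hw
      have w2 := (hR w).1 hw
      have a1 := root_le b hs hp v2 w2
      have a2 := root_le b hs hp ((hR _).1 (hnegR v hv)) w2
      have a3 : b (-v) w = - b v w := by simp
      rw [a3] at a2
      have hcases : b v w = -2 ∨ b v w = -1 ∨ b v w = 0 ∨ b v w = 1 ∨ b v w = 2 := by omega
      rcases hcases with h | h | h | h | h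
      · have e := a2.2 (by omega)
        rw [h, if_pos e.symm]
        split_ifs <;> norm_num
      · rw [h]
        split_ifs <;> norm_num at *
      · rw [h]
        split_ifs <;> norm_num at *
      · rw [h]
        split_ifs <;> norm_num at *
      · have e := a1.2 h
        rw [h, if_pos e.symm]
        split_ifs <;> norm_num
    refine (Finset.sum_le_sum hpt).trans ?_
    simp only [Finset.sum_add_distrib]
    have s1 : ∑ w ∈ R, (if w = v then (4 : ℤ) else 0) = 4 := by
      rw [Finset.sum_ite_eq', if_pos hv]
    have s2 : ∑ w ∈ R, (if w = -v then (4 : ℤ) else 0) = 4 := by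
      rw [Finset.sum_ite_eq', if_pos (hnegR v hv)]
    rw [s1, s2, Finset.sum_boole, Finset.sum_boole]
    push_cast
    omega
  have hdeg : ∀ v ∈ R, (R.filter fun w => b v w = 1).card ≤ 56 ∨
      (R.filter fun w => b v w = 1).card + 8 ≤ 4 * r := by
    intro v hv
    apply degree_bound b hs hp ((hR v).1 hv)
    intro x
    rw [Finset.mem_filter, hR]
  obtain ⟨a, ha⟩ : ∃ a : M → Fin r → ℝ, ∀ x y, (b x y : ℝ) = ∑ i, a x i * a y i :=
    exists_embedding b hs hp
  have hfr := frame_ineq r R a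
  simp only [← ha] at hfr
  have t1 : ∑ w ∈ R, (b w w : ℝ) = 2 * R.card := by
    rw [Finset.sum_congr rfl (g := fun _ => (2 : ℝ))]
    · rw [Finset.sum_const, nsmul_eq_mul]; ring
    · intro w hw
      rw [(hR w).1 hw]; norm_num
  rw [t1] at hfr
  have bound : ∀ H : ℝ, 0 ≤ H → (∀ v ∈ R, 8 + 2 * ((R.filter fun w => b v w = 1).card : ℝ) ≤ 4 * H) →
      (R.card : ℝ) ≤ r * H := by
    intro H hH0 hH
    have t2 : ∑ w ∈ R, ∑ u ∈ R, (b w u : ℝ) ^ 2 ≤ R.card * (4 * H) := by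
      rw [← nsmul_eq_mul]
      apply Finset.sum_le_card_nsmul
      intro v hv
      refine le_trans ?_ (hH v hv)
      exact_mod_cast hsq v hv
    rcases R.eq_empty_or_nonempty with rfl | hne
    · simp only [Finset.card_empty, Nat.cast_zero]
      positivity
    have hN : (0 : ℝ) < R.card := by exact_mod_cast hne.card_pos
    have t3 : (2 * (R.card : ℝ)) ^ 2 ≤ r * (R.card * (4 * H)) :=
      hfr.trans (mul_le_mul_of_nonneg_left t2 (Nat.cast_nonneg r))
    have t4 : (4 * (R.card : ℝ)) * R.card ≤ (4 * (R.card : ℝ)) * (r * H) := by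
      nlinarith
    exact le_of_mul_le_mul_left t4 (by positivity)
  by_cases h16 : r ≤ 15
  · refine le_trans (bound 30 (by norm_num) ?_) (le_trans ?_ (le_max_left _ _))
    · intro v hv
      have h : (R.filter fun w => b v w = 1).card ≤ 56 := by
        have := hdeg v hv
        omega
      have h' : ((R.filter fun w => b v w = 1).card : ℝ) ≤ 56 := by exact_mod_cast h
      linarith
    · have h' : (r : ℝ) ≤ 15 := by exact_mod_cast h16
      linarith
  · have h1 : (1 : ℝ) ≤ r := by exact_mod_cast (by omega : 1 ≤ r)
    refine le_trans (bound (2 * ((r : ℝ) - 1)) (by linarith) ?_)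
      (le_trans (le_of_eq (by ring)) (le_max_right _ _))
    intro v hv
    have h : (R.filter fun w => b v w = 1).card + 8 ≤ 4 * r := by
      have := hdeg v hv
      omega
    have h' : ((R.filter fun w => b v w = 1).card : ℝ) + 8 ≤ 4 * r := by exact_mod_cast h
    linarith

/-- A classical positive definite quadratic ℤ-lattice of rank `r` has at most
`max 480 (2r(r-1))` vectors of norm `2`. -/
theorem stmt14 (r : ℕ) (M : Type*) [AddCommGroup M] [Module ℤ M]
    [Module.Free ℤ M] [Module.Finite ℤ M] (hr : Module.finrank ℤ M = r)
    (Q : QuadraticForm ℤ M)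
    (hpos : ∀ v : M, v ≠ 0 → 0 < Q v)
    (hclassical : ∀ v w : M, (2 : ℤ) ∣ QuadraticMap.polar Q v w) :
    (Nat.card {v : M // Q v = 2} : ℝ) ≤ max 480 (2 * (r : ℝ) * ((r : ℝ) - 1)) := by
  subst hr
  choose c hc using hclassical
  let b : M →ₗ[ℤ] M →ₗ[ℤ] ℤ := LinearMap.mk₂ ℤ c
    (by
      intro x y z
      have h := QuadraticMap.polar_add_left Q x y z
      rw [hc, hc, hc] at h
      omega)
    (by
      intro a x y
      have h := QuadraticMap.polar_smul_left Q a x y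
      rw [hc, hc, smul_eq_mul] at h
      rw [smul_eq_mul]
      linarith)
    (by
      intro x y z
      have h := QuadraticMap.polar_add_right Q x y z
      rw [hc, hc, hc] at h
      omega)
    (by
      intro a x y
      have h := QuadraticMap.polar_smul_right Q a x y
      rw [hc, hc, smul_eq_mul] at h
      rw [smul_eq_mul]
      linarith)
  have hb : ∀ x y, b x y = c x y := fun x y => rfl
  have hs : ∀ x y, b x y = b y x := by
    intro x y
    have h := QuadraticMap.polar_comm Q x y
    rw [hc, hc] at h
    rw [hb, hb]
    omega
  have hself : ∀ x, b x x = Q x := by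
    intro x
    have h := QuadraticMap.polar_self Q x
    rw [hc, two_nsmul] at h
    rw [hb]
    omega
  by_cases hfin : {v : M | Q v = 2}.Finite
  · have h := root_count b hs (fun x hx => by rw [hself]; exact hpos x hx) hfin.toFinset
      (fun x => by rw [hself]; simp)
    have e : Nat.card {v : M // Q v = 2} = hfin.toFinset.card :=
      Nat.card_eq_card_finite_toFinset hfin
    rw [e]
    exact h
  · have : Infinite {v : M // Q v = 2} := Set.infinite_coe_iff.mpr hfin
    rw [Nat.card_eq_zero_of_infinite]
    simp
end

section
/- Let D > 1 be a squarefree integer, H = ℚ(√D), and m, R positive integers. Suppose there exists an mO_H-universal classical totally positive definite quadratic O_H-lattice of rank R. Write the periodic continued fraction expansion ξ_D = [u_0; u_1, u_2, …]. Then u_{2i+1} < B(R,m) for every integer i ≥ 0. -/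
open NumberField

/-- The Gauss map `y ↦ {1/y}`. -/
noncomputable def gaussMap (y : ℝ) : ℝ := Int.fract y⁻¹

/-- For an irrational `x ∈ (0,1)`, `cfCoeff x n` is the `n`-th coefficient `u_n(x)`
(`n ≥ 1`) of the continued fraction expansion `x = [0; u_1(x), u_2(x), …]`;
the coefficients `u_n` (`n ≥ 1`) of `ξ = [u_0; u_1, u_2, …]` are those of `ξ mod 1`. -/
noncomputable def cfCoeff (x : ℝ) (n : ℕ) : ℕ := ⌊(gaussMap^[n - 1] x)⁻¹⌋₊

/-- The generator of the ring of integers of `ℚ(√D)`. -/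
noncomputable def xi (D : ℕ) : ℝ :=
  if D % 4 = 1 then (1 + Real.sqrt D) / 2 else Real.sqrt D

/-- An element of a field `K` is totally positive if its image under every ring
homomorphism to `ℝ` is positive. -/
def IsTotPos {K : Type*} [Field K] (x : K) : Prop := ∀ φ : K →+* ℝ, 0 < φ x

/-- `K` admits a classical totally positive definite quadratic `𝓞 K`-lattice of rank
`R` representing all totally positive elements of `m·𝓞 K`. -/
def HasClassicalMUniversal (K : Type*) [Field K] (R m : ℕ) : Prop :=
  ∃ (B : (Fin R → K) →ₗ[K] (Fin R → K) →ₗ[K] K)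
    (Λ : Submodule (RingOfIntegers K) (Fin R → K)),
    (∀ v w, B v w = B w v) ∧
    Λ.FG ∧
    Submodule.span K (Λ : Set (Fin R → K)) = ⊤ ∧
    (∀ v ∈ Λ, v ≠ 0 → IsTotPos (B v v)) ∧
    (∀ v ∈ Λ, ∀ w ∈ Λ, ∃ c : RingOfIntegers K, algebraMap (RingOfIntegers K) K c = B v w) ∧
    (∀ a : RingOfIntegers K, IsTotPos ((m : K) * algebraMap (RingOfIntegers K) K a) →
      ∃ v ∈ Λ, B v v = (m : K) * algebraMap (RingOfIntegers K) K a)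

/-- The real quadratic field `ℚ(√D)`, realized as a subfield of `ℝ`. -/
noncomputable def QsqrtD (D : ℕ) : IntermediateField ℚ ℝ :=
  IntermediateField.adjoin ℚ {Real.sqrt D}

/-- `C(r,1) := 2r`, `C(r,2) := max {480, 2r(r−1)}`, and for `n ≥ 3`,
`C(r,n) := (π^{r/2}/Γ(r/2+1))·n^{r/2}
  + Σ_{m=0}^{r−1} (r choose m)·(π^{m/2}/Γ(m/2+1))·n^{m/2}`. -/
noncomputable def Cbound (r n : ℕ) : ℝ :=
  if n = 1 then 2 * (r : ℝ)
  else if n = 2 then max 480 (2 * (r : ℝ) * ((r : ℝ) - 1))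
  else Real.pi ^ ((r : ℝ) / 2) / Real.Gamma ((r : ℝ) / 2 + 1) * (n : ℝ) ^ ((r : ℝ) / 2)
    + ∑ m ∈ Finset.range r,
        (r.choose m : ℝ) * (Real.pi ^ ((m : ℝ) / 2) / Real.Gamma ((m : ℝ) / 2 + 1))
          * (n : ℝ) ^ ((m : ℝ) / 2)

/-- `B(R,m) := C(2R,m)/2`. -/
noncomputable def Bbound (R m : ℕ) : ℝ := Cbound (2 * R) m / 2



section PolyBound

/-- monomial functions indexed by multisets of coordinates -/
noncomputable def monoFun {V : Type*} {n : ℕ} (c : V → Option (Fin n) → ℝ) (q : ℕ)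
    (s : Sym (Option (Fin n)) q) : V → ℝ := fun x => (Multiset.map (c x) (s : Multiset _)).prod

lemma mono_span_step {V : Type*} {n : ℕ} (c : V → Option (Fin n) → ℝ) (q : ℕ)
    (a : Option (Fin n) → ℝ) (f : V → ℝ)
    (hf : f ∈ Submodule.span ℝ (Set.range (monoFun c q))) :
    (fun x => (∑ o, a o * c x o) * f x) ∈ Submodule.span ℝ (Set.range (monoFun c (q+1))) := by
  induction hf using Submodule.span_induction with
  | mem f hf =>
    obtain ⟨s, rfl⟩ := hf
    have : (fun x => (∑ o, a o * c x o) * monoFun c q s x) =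
        ∑ o, a o • monoFun c (q+1) (o ::ₛ s) := by
      funext x
      simp only [Finset.sum_apply, Pi.smul_apply, smul_eq_mul, monoFun, Sym.coe_cons, Multiset.map_cons, Multiset.prod_cons, Finset.sum_mul, mul_assoc]
    rw [this]
    exact Submodule.sum_mem _ fun o _ => Submodule.smul_mem _ _ (Submodule.subset_span ⟨_, rfl⟩)
  | zero => 
    have : (fun x => (∑ o, a o * c x o) * (0 : V → ℝ) x) = 0 := by funext x; simp
    rw [this]; exact Submodule.zero_mem _
  | add f g _ _ hf hg =>
    have : (fun x => (∑ o, a o * c x o) * (f + g) x) =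
      (fun x => (∑ o, a o * c x o) * f x) + (fun x => (∑ o, a o * c x o) * g x) := by
      funext x; simp [mul_add]
    rw [this]; exact Submodule.add_mem _ hf hg
  | smul t f _ hf =>
    have : (fun x => (∑ o, a o * c x o) * (t • f) x) =
      t • (fun x => (∑ o, a o * c x o) * f x) := by
      funext x; simp; ring
    rw [this]; exact Submodule.smul_mem _ _ hf

open scoped InnerProductSpace in
lemma poly_bound {V : Type*} [NormedAddCommGroup V] [InnerProductSpace ℝ V]
    [FiniteDimensional ℝ V] {ι : Type*} [Fintype ι] (v : ι → V) (S : Finset ℝ)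
    (hne : ∀ i, ⟪v i, v i⟫_ℝ ∉ S) (hS : ∀ i j, i ≠ j → ⟪v i, v j⟫_ℝ ∈ S) :
    Fintype.card ι ≤ (Module.finrank ℝ V + S.card).choose S.card := by
  classical
  set n := Module.finrank ℝ V with hn
  let b := stdOrthonormalBasis ℝ V
  let c : V → Option (Fin n) → ℝ := fun x o => o.elim 1 (fun k => ⟪x, b k⟫_ℝ)
  have key : ∀ (S : Finset ℝ) (w : V), (fun x => ∏ t ∈ S, (⟪x, w⟫_ℝ - t)) ∈
      Submodule.span ℝ (Set.range (monoFun c S.card)) := by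
    intro S w
    induction S using Finset.induction_on with
    | empty =>
      apply Submodule.subset_span
      refine ⟨Sym.nil, ?_⟩
      funext x; simp [monoFun]
    | insert t S ht ih =>
      rw [Finset.card_insert_of_notMem ht]
      have := mono_span_step c S.card (fun o => o.elim (-t) (fun k => ⟪b k, w⟫_ℝ)) _ ih
      convert this using 2 with x
      rw [Finset.prod_insert ht]
      congr 1
      rw [Fintype.sum_option]
      simp only [Option.elim, c]
      rw [← b.sum_inner_mul_inner x w]
      simp [mul_comm]; ring
  let f : ι → V → ℝ := fun i x => ∏ t ∈ S, (⟪x, v i⟫_ℝ - t)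
  have hli : LinearIndependent ℝ f := by
    rw [Fintype.linearIndependent_iff]
    intro g hg i
    have h1 := congrFun hg (v i)
    simp only [Finset.sum_apply, Pi.smul_apply, smul_eq_mul, Pi.zero_apply] at h1
    rw [Finset.sum_eq_single i] at h1
    · rcases mul_eq_zero.1 h1 with h | h
      · exact h
      · exfalso
        rw [Finset.prod_eq_zero_iff] at h
        obtain ⟨t, ht, h⟩ := h
        apply hne i
        rw [sub_eq_zero.1 h]; exact ht
    · intro j _ hj
      have : f j (v i) = 0 := Finset.prod_eq_zero (hS i j hj.symm) (sub_self _)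
      rw [this, mul_zero]
    · simp
  have hle : Submodule.span ℝ (Set.range f) ≤ Submodule.span ℝ (Set.range (monoFun c S.card)) := by
    rw [Submodule.span_le]; rintro _ ⟨i, rfl⟩; exact key S (v i)
  have h1 := finrank_span_eq_card hli
  have : FiniteDimensional ℝ (Submodule.span ℝ (Set.range (monoFun c S.card))) :=
    FiniteDimensional.span_of_finite ℝ (Set.finite_range _)
  have h2 := Submodule.finrank_mono hle
  have h3 := finrank_range_le_card (R := ℝ) (monoFun c S.card)
  rw [Sym.card_sym_eq_choose] at h3
  simp only [Fintype.card_option, Fintype.card_fin] at h3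
  rw [← h1]
  refine h2.trans (h3.trans (le_of_eq ?_))
  congr 1; omega

end PolyBound


section Volume
open MeasureTheory

lemma ball_count {V : Type*} [NormedAddCommGroup V] [InnerProductSpace ℝ V]
    [FiniteDimensional ℝ V] [Nontrivial V] [MeasurableSpace V] [BorelSpace V]
    {ι : Type*} [Fintype ι] (p : ι → V) (ρ : ℝ) (hρ : 0 < ρ)
    (n : ℕ) (A : Set V) (hA : MeasurableSet A) (hsub : ∀ i, Metric.ball (p i) ρ ⊆ A)
    (hmul : ∀ (z : V) (J : Finset ι), (∀ i ∈ J, z ∈ Metric.ball (p i) ρ) → J.card ≤ n)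
    (M : ℝ) (hM : 0 ≤ M) (μ : Measure V) [μ.IsAddHaarMeasure]
    (hvol : μ A ≤ ENNReal.ofReal M * μ (Metric.ball 0 1)) :
    (Fintype.card ι : ℝ) * ρ ^ (Module.finrank ℝ V) ≤ n * M := by
  classical
  have h1 : ∑ i, μ (Metric.ball (p i) ρ) ≤ n * μ A := by
    calc ∑ i, μ (Metric.ball (p i) ρ)
        = ∑ i, ∫⁻ z, (Metric.ball (p i) ρ).indicator 1 z ∂μ := by
          refine Finset.sum_congr rfl fun i _ => ?_
          rw [lintegral_indicator_one Metric.isOpen_ball.measurableSet]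
      _ = ∫⁻ z, ∑ i, (Metric.ball (p i) ρ).indicator 1 z ∂μ := by
          rw [lintegral_finsetSum]
          intro i _
          exact (measurable_one).indicator Metric.isOpen_ball.measurableSet
      _ ≤ ∫⁻ z, A.indicator (fun _ => (n : ENNReal)) z ∂μ := by
          refine lintegral_mono fun z => ?_
          by_cases hz : z ∈ A
          · rw [Set.indicator_of_mem hz]
            have := hmul z (Finset.univ.filter fun i => z ∈ Metric.ball (p i) ρ) (by simp)
            calc ∑ i, (Metric.ball (p i) ρ).indicator (1 : V → ENNReal) z
                = ∑ i, if z ∈ Metric.ball (p i) ρ then (1 : ENNReal) else 0 := by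
                  refine Finset.sum_congr rfl fun i _ => ?_
                  simp [Set.indicator_apply]
              _ = ((Finset.univ.filter fun i => z ∈ Metric.ball (p i) ρ).card : ENNReal) := by
                  rw [Finset.sum_boole]
              _ ≤ n := by exact_mod_cast this
          · refine le_of_eq_of_le ?_ (zero_le)
            refine Finset.sum_eq_zero fun i _ => ?_
            exact Set.indicator_of_notMem (fun h => hz (hsub i h)) _
      _ = n * μ A := by
          rw [lintegral_indicator_const hA]
  have h2 : ∑ i, μ (Metric.ball (p i) ρ) =
      (Fintype.card ι : ENNReal) * (ENNReal.ofReal (ρ ^ Module.finrank ℝ V) * μ (Metric.ball 0 1)) := by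
    simp only [Measure.addHaar_ball μ _ hρ.le]
    simp
  rw [h2] at h1
  have h3 : (Fintype.card ι : ENNReal) * (ENNReal.ofReal (ρ ^ Module.finrank ℝ V) * μ (Metric.ball 0 1)) ≤ n * (ENNReal.ofReal M * μ (Metric.ball 0 1)) :=
    h1.trans (by gcongr)
  rw [← mul_assoc, ← mul_assoc] at h3
  have hpos : μ (Metric.ball (0:V) 1) ≠ 0 := (Metric.measure_ball_pos μ 0 one_pos).ne'
  have hfin : μ (Metric.ball (0:V) 1) ≠ ⊤ := measure_ball_lt_top.ne
  rw [ENNReal.mul_le_mul_iff_left hpos hfin] at h3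
  rw [← ENNReal.ofReal_natCast, ← ENNReal.ofReal_natCast, ← ENNReal.ofReal_mul (by positivity), ← ENNReal.ofReal_mul (by positivity)] at h3
  exact (ENNReal.ofReal_le_ofReal_iff (by positivity)).1 h3

/-- version with an enclosing ball -/
lemma ball_count_ball {V : Type*} [NormedAddCommGroup V] [InnerProductSpace ℝ V]
    [FiniteDimensional ℝ V] [Nontrivial V]
    {ι : Type*} [Fintype ι] (p : ι → V) (ρ T : ℝ) (hρ : 0 < ρ) (hT : 0 ≤ T)
    (n : ℕ) (hp : ∀ i, ‖p i‖ ≤ T)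
    (hmul : ∀ (z : V) (J : Finset ι), (∀ i ∈ J, z ∈ Metric.ball (p i) ρ) → J.card ≤ n) :
    (Fintype.card ι : ℝ) * ρ ^ (Module.finrank ℝ V) ≤ n * (T + ρ) ^ (Module.finrank ℝ V) := by
  borelize V
  refine ball_count p ρ hρ n (Metric.ball 0 (T + ρ)) Metric.isOpen_ball.measurableSet ?_ hmul _ (by positivity) Measure.addHaar ?_
  · intro i z hz
    rw [Metric.mem_ball] at hz ⊢
    have := dist_triangle z (p i) 0
    rw [dist_zero_right (p i)] at this
    linarith [hp i]
  · rw [Measure.addHaar_ball _ _ (by positivity)]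

/-- packing version in a shell -/
lemma shell_count {V : Type*} [NormedAddCommGroup V] [InnerProductSpace ℝ V]
    [FiniteDimensional ℝ V] [Nontrivial V]
    {ι : Type*} [Fintype ι] (p : ι → V) (ρ T : ℝ) (hρ : 0 < ρ) (hT : ρ ≤ T)
    (hp : ∀ i, ‖p i‖ = T) (hd : ∀ i j, i ≠ j → 2 * ρ ≤ dist (p i) (p j)) :
    (Fintype.card ι : ℝ) * ρ ^ (Module.finrank ℝ V) ≤
      (T + ρ) ^ (Module.finrank ℝ V) - (T - ρ) ^ (Module.finrank ℝ V) := by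
  borelize V
  have hT0 : 0 ≤ T - ρ := by linarith
  have hT1 : 0 ≤ T + ρ := by linarith
  have hle : (T - ρ) ^ (Module.finrank ℝ V) ≤ (T + ρ) ^ (Module.finrank ℝ V) :=
    pow_le_pow_left₀ hT0 (by linarith) _
  have := ball_count p ρ hρ 1 (Metric.ball 0 (T + ρ) \ Metric.ball 0 (T - ρ)) (Metric.isOpen_ball.measurableSet.diff Metric.isOpen_ball.measurableSet) ?_ ?_ ((T + ρ) ^ (Module.finrank ℝ V) - (T - ρ) ^ (Module.finrank ℝ V)) (by linarith) Measure.addHaar ?_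
  · simpa using this
  · intro i z hz
    rw [Metric.mem_ball] at hz
    have h1 := dist_triangle z (p i) 0
    have h2 := dist_triangle (p i) z 0
    rw [dist_comm (p i) z] at h2
    rw [dist_zero_right (p i), hp i] at h1 h2
    refine ⟨?_, ?_⟩
    · rw [Metric.mem_ball]; linarith
    · rw [Metric.mem_ball]; linarith
  · intro z J hJ
    rw [Finset.card_le_one]
    intro a ha b hb
    by_contra hab
    have h1 := hJ a ha
    have h2 := hJ b hb
    rw [Metric.mem_ball] at h1 h2
    have h3 := dist_triangle (p a) z (p b)
    rw [dist_comm (p a) z] at h3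
    linarith [hd a b hab]
  · rw [measure_sdiff (Metric.ball_subset_ball (by linarith)) Metric.isOpen_ball.measurableSet.nullMeasurableSet measure_ball_lt_top.ne, Measure.addHaar_ball _ _ hT1, Measure.addHaar_ball _ _ hT0, ENNReal.ofReal_sub _ (by positivity), ENNReal.sub_mul]
    intro _ _
    exact measure_ball_lt_top.ne
end Volume


section Roots
open scoped InnerProductSpace

variable {V : Type*} [NormedAddCommGroup V] [InnerProductSpace ℝ V]

lemma frame_ineq_s17 {ι : Type*} [Fintype ι] (w : ι → V) (h1 : ∀ i, ⟪w i, w i⟫_ℝ = 1)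
    (h0 : ∀ i j, i ≠ j → ⟪w i, w j⟫_ℝ = 0 ∨ ⟪w i, w j⟫_ℝ = -1) (x : V) :
    ∑ i, ⟪w i, x⟫_ℝ ^ 2 ≤ 2 * ⟪x, x⟫_ℝ := by
  classical
  set a : ι → ℝ := fun i => ⟪w i, x⟫_ℝ with ha
  have hrow : ∀ i, ∑ j, |⟪w i, w j⟫_ℝ| ≤ 2 := by
    intro i
    rw [← Finset.add_sum_erase _ _ (Finset.mem_univ i), h1]
    have : ∑ j ∈ Finset.univ.erase i, |⟪w i, w j⟫_ℝ| =
        ∑ j ∈ Finset.univ.erase i, if ⟪w i, w j⟫_ℝ = -1 then (1:ℝ) else 0 := by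
      refine Finset.sum_congr rfl fun j hj => ?_
      rcases h0 i j (Finset.ne_of_mem_erase hj).symm with h | h <;> simp [h]
    rw [this, Finset.sum_boole]
    have hc : ((Finset.univ.erase i).filter fun j => ⟪w i, w j⟫_ℝ = -1).card ≤ 1 := by
      rw [Finset.card_le_one]
      have hneg : ∀ j, ⟪w i, w j⟫_ℝ = -1 → w j = - w i := by
        intro j hj
        have : ⟪w i + w j, w i + w j⟫_ℝ = 0 := by
          rw [real_inner_add_add_self, h1, h1, hj]; norm_num
        have := inner_self_eq_zero.1 this
        exact eq_neg_of_add_eq_zero_right this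
      intro j hj k hk
      simp only [Finset.mem_filter] at hj hk
      by_contra hjk
      have e1 := hneg j hj.2
      have e2 := hneg k hk.2
      have := h0 j k hjk
      rw [e1, e2, inner_neg_neg, h1] at this
      norm_num at this
    have : ((((Finset.univ.erase i).filter fun j => ⟪w i, w j⟫_ℝ = -1).card : ℕ) : ℝ) ≤ 1 := by
      exact_mod_cast hc
    simp only [abs_one]; linarith
  set y := ∑ i, a i • w i with hy
  have hyx : ⟪y, x⟫_ℝ = ∑ i, a i ^ 2 := by
    rw [hy, sum_inner]
    refine Finset.sum_congr rfl fun i _ => ?_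
    rw [real_inner_smul_left, sq]
  have hyy : ⟪y, y⟫_ℝ ≤ 2 * ∑ i, a i ^ 2 := by
    have e : ⟪y, y⟫_ℝ = ∑ i, ∑ j, a i * a j * ⟪w i, w j⟫_ℝ := by
      rw [hy, sum_inner]
      refine Finset.sum_congr rfl fun i _ => ?_
      rw [inner_sum]
      refine Finset.sum_congr rfl fun j _ => ?_
      rw [real_inner_smul_left, real_inner_smul_right]; ring
    have hle : ⟪y, y⟫_ℝ ≤ ∑ i, ∑ j, (a i ^ 2 * |⟪w i, w j⟫_ℝ| / 2 + a j ^ 2 * |⟪w j, w i⟫_ℝ| / 2) := by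
      rw [e]
      refine Finset.sum_le_sum fun i _ => Finset.sum_le_sum fun j _ => ?_
      rw [real_inner_comm (w i) (w j)]
      have h1 : a i * a j * ⟪w i, w j⟫_ℝ ≤ |a i * a j| * |⟪w i, w j⟫_ℝ| := by
        rw [← abs_mul]; exact le_abs_self _
      have h2 : |a i * a j| ≤ (a i ^ 2 + a j ^ 2) / 2 := by
        rw [abs_le]; constructor <;> nlinarith [sq_nonneg (a i + a j), sq_nonneg (a i - a j)]
      nlinarith [abs_nonneg ⟪w i, w j⟫_ℝ]
    refine hle.trans ?_
    simp only [Finset.sum_add_distrib]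
    rw [Finset.sum_comm (f := fun i j => a j ^ 2 * |⟪w j, w i⟫_ℝ| / 2)]
    rw [← Finset.sum_add_distrib, Finset.mul_sum]
    refine Finset.sum_le_sum fun i _ => ?_
    have : ∑ j, a i ^ 2 * |⟪w i, w j⟫_ℝ| / 2 = a i ^ 2 / 2 * ∑ j, |⟪w i, w j⟫_ℝ| := by
      rw [Finset.mul_sum]; refine Finset.sum_congr rfl fun j _ => by ring
    rw [this]
    nlinarith [hrow i, sq_nonneg (a i)]
  rw [← hyx] at hyy ⊢
  have hp : 0 ≤ ⟪y - (2:ℝ) • x, y - (2:ℝ) • x⟫_ℝ := real_inner_self_nonneg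
  rw [real_inner_sub_sub_self, real_inner_smul_left, real_inner_smul_right, real_inner_smul_right] at hp
  linarith

lemma frame_card [FiniteDimensional ℝ V] {ι : Type*} [Fintype ι] (w : ι → V)
    (h1 : ∀ i, ⟪w i, w i⟫_ℝ = 1)
    (h0 : ∀ i j, i ≠ j → ⟪w i, w j⟫_ℝ = 0 ∨ ⟪w i, w j⟫_ℝ = -1) :
    Fintype.card ι ≤ 2 * Module.finrank ℝ V := by
  let b := stdOrthonormalBasis ℝ V
  have hs : ∑ k, ∑ i, ⟪w i, b k⟫_ℝ ^ 2 ≤ ∑ k : Fin (Module.finrank ℝ V), (2:ℝ) := by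
    refine Finset.sum_le_sum fun k _ => ?_
    have := frame_ineq_s17 w h1 h0 (b k)
    have e : ⟪b k, b k⟫_ℝ = 1 := by
      rw [real_inner_self_eq_norm_sq, b.norm_eq_one]; norm_num
    rw [e] at this; linarith
  rw [Finset.sum_comm] at hs
  have : ∀ i, ∑ k, ⟪w i, b k⟫_ℝ ^ 2 = 1 := by
    intro i
    rw [← h1 i, ← b.sum_inner_mul_inner]
    refine Finset.sum_congr rfl fun k _ => ?_
    rw [sq, real_inner_comm (w i)]
  simp only [this] at hs
  simp at hs
  have : (Fintype.card ι : ℝ) ≤ (2 * Module.finrank ℝ V : ℕ) := by push_cast; linarith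
  exact_mod_cast this

lemma simplex_card_s17 [FiniteDimensional ℝ V] {ι : Type*} [Fintype ι] (w : ι → V)
    (h1 : ∀ i, ⟪w i, w i⟫_ℝ = 2) (h0 : ∀ i j, i ≠ j → ⟪w i, w j⟫_ℝ = 1) :
    Fintype.card ι ≤ Module.finrank ℝ V := by
  classical
  have hli : LinearIndependent ℝ w := by
    rw [Fintype.linearIndependent_iff]
    intro g hg
    have key : ∀ i, g i = - ∑ j, g j := by
      intro i
      have : ⟪w i, ∑ j, g j • w j⟫_ℝ = 0 := by rw [hg, inner_zero_right]
      rw [inner_sum] at this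
      have e : ∀ j, ⟪w i, g j • w j⟫_ℝ = g j + if j = i then g i else 0 := by
        intro j
        rw [real_inner_smul_right]
        split_ifs with h
        · rw [h, h1]; ring
        · rw [h0 i j (Ne.symm h)]; ring
      simp only [e, Finset.sum_add_distrib] at this
      simp at this
      linarith
    have hs : ∑ j, g j = 0 := by
      have h2 : ∑ i, g i = ∑ i : ι, - ∑ j, g j := Finset.sum_congr rfl fun i _ => key i
      rw [Finset.sum_const, nsmul_eq_mul, Finset.card_univ] at h2
      have : (1 + (Fintype.card ι : ℝ)) * ∑ j, g j = 0 := by linarith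
      rcases mul_eq_zero.1 this with h | h
      · have : (0:ℝ) ≤ Fintype.card ι := Nat.cast_nonneg _
        linarith
      · exact h
    intro i
    rw [key i, hs, neg_zero]
  exact hli.fintype_card_le_finrank

/-- A finite simply-laced root system (not necessarily spanning). -/
structure IsRoots (Φ : Finset V) : Prop where
  two : ∀ β ∈ Φ, ⟪β, β⟫_ℝ = 2
  int : ∀ β ∈ Φ, ∀ γ ∈ Φ, ∃ z : ℤ, ⟪β, γ⟫_ℝ = z
  sub : ∀ β ∈ Φ, ∀ γ ∈ Φ, ⟪β, γ⟫_ℝ = 1 → β - γ ∈ Φ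
  neg : ∀ β ∈ Φ, -β ∈ Φ

namespace IsRoots
variable {Φ : Finset V}

lemma eq_of_two (h : IsRoots Φ) {β γ : V} (hβ : β ∈ Φ) (hγ : γ ∈ Φ) (e : ⟪β, γ⟫_ℝ = 2) : β = γ := by
  have : ⟪β - γ, β - γ⟫_ℝ = 0 := by
    rw [real_inner_sub_sub_self, h.two _ hβ, h.two _ hγ, e]; norm_num
  exact sub_eq_zero.1 (inner_self_eq_zero.1 this)

lemma ip (h : IsRoots Φ) {β γ : V} (hβ : β ∈ Φ) (hγ : γ ∈ Φ) :
    ⟪β, γ⟫_ℝ = 2 ∨ ⟪β, γ⟫_ℝ = 1 ∨ ⟪β, γ⟫_ℝ = 0 ∨ ⟪β, γ⟫_ℝ = -1 ∨ ⟪β, γ⟫_ℝ = -2 := by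
  obtain ⟨z, hz⟩ := h.int _ hβ _ hγ
  have h1 : 0 ≤ ⟪β - γ, β - γ⟫_ℝ := real_inner_self_nonneg
  have h2 : 0 ≤ ⟪β + γ, β + γ⟫_ℝ := real_inner_self_nonneg
  rw [real_inner_sub_sub_self, h.two _ hβ, h.two _ hγ, hz] at h1
  rw [real_inner_add_add_self, h.two _ hβ, h.two _ hγ, hz] at h2
  have h3 : (z:ℝ) ≤ 2 := by linarith
  have h4 : (-2:ℝ) ≤ z := by linarith
  have h3' : z ≤ 2 := by exact_mod_cast h3
  have h4' : -2 ≤ z := by exact_mod_cast h4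
  rw [hz]
  interval_cases z <;> norm_num

lemma eq_neg (h : IsRoots Φ) {β γ : V} (hβ : β ∈ Φ) (hγ : γ ∈ Φ) (e : ⟪β, γ⟫_ℝ = -2) : γ = -β := by
  refine (h.eq_of_two (h.neg _ hβ) hγ ?_).symm
  rw [inner_neg_left, e]; norm_num

/-- inside the set of roots with inner product one with `α` -/
lemma ip1 (h : IsRoots Φ) {α β γ : V} (hα : α ∈ Φ) (hβ : β ∈ Φ) (hγ : γ ∈ Φ)
    (e1 : ⟪α, β⟫_ℝ = 1) (e2 : ⟪α, γ⟫_ℝ = 1) (ne1 : γ ≠ β) (ne2 : γ ≠ α - β) :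
    ⟪β, γ⟫_ℝ = 1 ∨ ⟪β, γ⟫_ℝ = 0 := by
  rcases h.ip hβ hγ with e | e | e | e | e
  · exact absurd (h.eq_of_two hβ hγ e).symm ne1
  · exact Or.inl e
  · exact Or.inr e
  · exfalso
    apply ne2
    refine (h.eq_of_two (h.sub _ hα _ hβ e1) hγ ?_).symm
    rw [inner_sub_left, e, e2]; norm_num
  · exfalso
    have := h.eq_neg hβ hγ e
    rw [this, inner_neg_right, e1] at e2
    norm_num at e2

end IsRoots
end Roots


section Roots2
open scoped InnerProductSpace

variable {V : Type*} [NormedAddCommGroup V] [InnerProductSpace ℝ V]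
namespace IsRoots
variable {Φ : Finset V}

/-- pillars -/
noncomputable def pillar (Φ : Finset V) (α : V) (β : Fin 4 → V) (j : Fin 4) : Finset V := by
  classical
  exact Φ.filter fun γ => ⟪α, γ⟫_ℝ = 1 ∧ ∀ i, ⟪γ, β i⟫_ℝ = if i = 0 ∨ i = j then 1 else 0

lemma mem_pillar {α : V} {β : Fin 4 → V} {j : Fin 4} {γ : V} :
    γ ∈ pillar Φ α β j ↔ γ ∈ Φ ∧ ⟪α, γ⟫_ℝ = 1 ∧ ∀ i, ⟪γ, β i⟫_ℝ = if i = 0 ∨ i = j then 1 else 0 := by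
  classical
  rw [pillar, Finset.mem_filter]

/-- the part of `γ` in pillar `j` orthogonal to the base -/
noncomputable def rest (β : Fin 4 → V) (j : Fin 4) (γ : V) : V := γ - (1/2 : ℝ) • (β 0 + β j)

lemma rest_inner {α : V} {β : Fin 4 → V} {j k : Fin 4} (hj : j ≠ 0) (hk : k ≠ 0) {γ δ : V}
    (h2 : ∀ i, ⟪β i, β i⟫_ℝ = 2) (h0 : ∀ i k, i ≠ k → ⟪β i, β k⟫_ℝ = 0)
    (hγ : γ ∈ pillar Φ α β j) (hδ : δ ∈ pillar Φ α β k) :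
    ⟪rest β j γ, rest β k δ⟫_ℝ = ⟪γ, δ⟫_ℝ - if j = k then 1 else 1/2 := by
  rw [mem_pillar] at hγ hδ
  have a1 := hγ.2.2 0
  have a2 := hγ.2.2 k
  have b1 := hδ.2.2 0
  have b2 := hδ.2.2 j
  rw [real_inner_comm] at b1 b2
  simp only [rest, inner_sub_left, inner_sub_right, real_inner_smul_left, real_inner_smul_right,
    inner_add_left, inner_add_right]
  rw [a1, a2, b1, b2, h2, h0 0 k hk.symm, h0 j 0 hj]
  by_cases hjk : j = k
  · subst hjk; rw [h2]; simp; norm_num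
  · rw [h0 j k hjk]; simp [hj, hk, hjk, Ne.symm hjk]

lemma rest_orth {α : V} {β : Fin 4 → V} {j : Fin 4} (hj : j ≠ 0) {γ : V}
    (h2 : ∀ i, ⟪β i, β i⟫_ℝ = 2) (h0 : ∀ i k, i ≠ k → ⟪β i, β k⟫_ℝ = 0)
    (hγ : γ ∈ pillar Φ α β j) (i : Fin 4) : ⟪β i, rest β j γ⟫_ℝ = 0 := by
  rw [mem_pillar] at hγ
  have a := hγ.2.2 i
  rw [real_inner_comm] at a
  simp only [rest, inner_sub_right, real_inner_smul_right, inner_add_right]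
  rw [a]
  by_cases hi : i = 0
  · subst hi; rw [h2, h0 0 j hj.symm]; simp
  · by_cases hij : i = j
    · subst hij; rw [h2, h0 i 0 hi]; simp
    · rw [h0 i j hij, h0 i 0 hi]; simp [hi, hij]

lemma pillar_pair (h : IsRoots Φ) {α : V} {β : Fin 4 → V} {j k : Fin 4}
    (hα : α ∈ Φ) (hβ : ⟪α, β 0⟫_ℝ = 1) {γ δ : V}
    (hγ : γ ∈ pillar Φ α β j) (hδ : δ ∈ pillar Φ α β k) (hne : γ ≠ δ) :
    ⟪γ, δ⟫_ℝ = 1 ∨ ⟪γ, δ⟫_ℝ = 0 := by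
  rw [mem_pillar] at hγ hδ
  refine h.ip1 hα hγ.1 hδ.1 hγ.2.1 hδ.2.1 hne.symm ?_
  intro e
  have := hδ.2.2 0
  rw [e, inner_sub_left, hγ.2.2 0, hβ] at this
  simp at this

lemma pillar_frame (h : IsRoots Φ) {α : V} {β : Fin 4 → V} {j : Fin 4} (hj : j ≠ 0)
    (h2 : ∀ i, ⟪β i, β i⟫_ℝ = 2) (h0 : ∀ i k, i ≠ k → ⟪β i, β k⟫_ℝ = 0)
    (hα : α ∈ Φ) (hβ : ⟪α, β 0⟫_ℝ = 1) {γ δ : V}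
    (hγ : γ ∈ pillar Φ α β j) (hδ : δ ∈ pillar Φ α β j) :
    ⟪rest β j γ, rest β j γ⟫_ℝ = 1 ∧
    (γ ≠ δ → ⟪rest β j γ, rest β j δ⟫_ℝ = 0 ∨ ⟪rest β j γ, rest β j δ⟫_ℝ = -1) := by
  rw [rest_inner hj hj h2 h0 hγ hγ, rest_inner hj hj h2 h0 hγ hδ, h.two _ (mem_pillar.1 hγ).1]
  refine ⟨by norm_num, fun hne => ?_⟩
  rcases h.pillar_pair hα hβ hγ hδ hne with e | e <;> rw [e] <;> norm_num

lemma pillar_card (h : IsRoots Φ) [FiniteDimensional ℝ V] {α : V} {β : Fin 4 → V} {j : Fin 4}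
    (hj : j ≠ 0)
    (h2 : ∀ i, ⟪β i, β i⟫_ℝ = 2) (h0 : ∀ i k, i ≠ k → ⟪β i, β k⟫_ℝ = 0)
    (hα : α ∈ Φ) (hβ : ⟪α, β 0⟫_ℝ = 1) :
    (pillar Φ α β j).card + 8 ≤ 2 * Module.finrank ℝ V := by
  classical
  let U := Submodule.span ℝ (Set.range β)
  have hli : LinearIndependent ℝ β := by
    refine linearIndependent_of_ne_zero_of_inner_eq_zero (𝕜 := ℝ) ?_ ?_
    · intro i hi
      have := h2 i
      rw [hi] at this
      simp at this
    · intro i k hik; exact h0 i k hik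
  have hU : Module.finrank ℝ U = 4 := by
    rw [finrank_span_eq_card hli]; simp
  have hUo : Module.finrank ℝ U + Module.finrank ℝ Uᗮ = Module.finrank ℝ V :=
    U.finrank_add_finrank_orthogonal
  have hmem : ∀ γ : pillar Φ α β j, rest β j γ ∈ Uᗮ := by
    intro γ
    rw [Submodule.mem_orthogonal]
    intro u hu
    induction hu using Submodule.span_induction with
    | mem u hu => obtain ⟨i, rfl⟩ := hu; exact rest_orth hj h2 h0 γ.2 i
    | zero => simp
    | add u v _ _ h1 h2 => rw [inner_add_left, h1, h2, add_zero]
    | smul t u _ h1 => rw [real_inner_smul_left, h1, mul_zero]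
  let w : pillar Φ α β j → Uᗮ := fun γ => ⟨rest β j γ, hmem γ⟩
  have := frame_card w (fun γ => (h.pillar_frame hj h2 h0 hα hβ γ.2 γ.2).1)
    (fun γ δ hne => (h.pillar_frame hj h2 h0 hα hβ γ.2 δ.2).2 (fun e => hne (Subtype.ext e)))
  rw [Fintype.card_coe] at this
  omega

lemma pillar_card8 (h : IsRoots Φ) [FiniteDimensional ℝ V] {α : V} {β : Fin 4 → V} {j k : Fin 4}
    (hj : j ≠ 0) (hk : k ≠ 0) (hjk : j ≠ k)
    (h2 : ∀ i, ⟪β i, β i⟫_ℝ = 2) (h0 : ∀ i k, i ≠ k → ⟪β i, β k⟫_ℝ = 0)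
    (hα : α ∈ Φ) (hβ : ⟪α, β 0⟫_ℝ = 1) (hne : (pillar Φ α β k).Nonempty) :
    (pillar Φ α β j).card ≤ 8 := by
  classical
  obtain ⟨δ, hδ⟩ := hne
  have := frame_ineq_s17 (fun γ : pillar Φ α β j => rest β j γ)
    (fun γ => (h.pillar_frame hj h2 h0 hα hβ γ.2 γ.2).1)
    (fun γ δ hne => (h.pillar_frame hj h2 h0 hα hβ γ.2 δ.2).2 (fun e => hne (Subtype.ext e)))
    (rest β k δ)
  rw [(h.pillar_frame hk h2 h0 hα hβ hδ hδ).1] at this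
  have e : ∀ γ : pillar Φ α β j, ⟪rest β j γ, rest β k δ⟫_ℝ ^ 2 = 1/4 := by
    intro γ
    rw [rest_inner hj hk h2 h0 γ.2 hδ, if_neg hjk]
    have hne : (γ : V) ≠ δ := by
      intro e
      have a := (mem_pillar.1 γ.2).2.2 j
      have b := (mem_pillar.1 hδ).2.2 j
      rw [e, b] at a
      simp [hj, hjk] at a
    rcases h.pillar_pair hα hβ γ.2 hδ hne with e | e <;> rw [e] <;> norm_num
  simp only [e] at this
  rw [Finset.sum_const, nsmul_eq_mul, Finset.card_univ, Fintype.card_coe] at this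
  have h8 : ((pillar Φ α β j).card : ℝ) ≤ (8:ℕ) := by push_cast; linarith
  exact_mod_cast h8

lemma pillars_total (h : IsRoots Φ) [FiniteDimensional ℝ V] {α : V} {β : Fin 4 → V}
    (h2 : ∀ i, ⟪β i, β i⟫_ℝ = 2) (h0 : ∀ i k, i ≠ k → ⟪β i, β k⟫_ℝ = 0)
    (hα : α ∈ Φ) (hβ : ⟪α, β 0⟫_ℝ = 1) :
    (pillar Φ α β 1).card + (pillar Φ α β 2).card + (pillar Φ α β 3).card ≤
      max 24 (2 * Module.finrank ℝ V - 8) := by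
  have c := fun j hj => h.pillar_card (α := α) (β := β) (j := j) hj h2 h0 hα hβ
  have c1 := c 1 (by decide)
  have c2 := c 2 (by decide)
  have c3 := c 3 (by decide)
  have d := fun j k hj hk hjk => h.pillar_card8 (α := α) (β := β) (j := j) (k := k) hj hk hjk h2 h0 hα hβ
  have z : ∀ j, ¬ (pillar Φ α β j).Nonempty → (pillar Φ α β j).card = 0 := by
    intro j hj; rw [Finset.not_nonempty_iff_eq_empty] at hj; simp [hj]
  have z1 := z 1
  have z2 := z 2
  have z3 := z 3
  have d12 := d 1 2 (by decide) (by decide) (by decide)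
  have d13 := d 1 3 (by decide) (by decide) (by decide)
  have d21 := d 2 1 (by decide) (by decide) (by decide)
  have d23 := d 2 3 (by decide) (by decide) (by decide)
  have d31 := d 3 1 (by decide) (by decide) (by decide)
  have d32 := d 3 2 (by decide) (by decide) (by decide)
  by_cases n1 : (pillar Φ α β 1).Nonempty <;> by_cases n2 : (pillar Φ α β 2).Nonempty <;>
    by_cases n3 : (pillar Φ α β 3).Nonempty <;>
    simp only [n1, n2, n3, forall_true_left, not_true_eq_false, not_false_eq_true, false_imp_iff] at * <;> omega

end IsRoots
end Roots2


section Roots3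
open scoped InnerProductSpace

variable {V : Type*} [NormedAddCommGroup V] [InnerProductSpace ℝ V]
namespace IsRoots
variable {Φ : Finset V}

/-- roots having inner product one with `α` -/
noncomputable def R1 (Φ : Finset V) (α : V) : Finset V := by
  classical
  exact Φ.filter fun γ => ⟪α, γ⟫_ℝ = 1

lemma mem_R1 {α γ : V} : γ ∈ R1 Φ α ↔ γ ∈ Φ ∧ ⟪α, γ⟫_ℝ = 1 := by
  classical
  rw [R1, Finset.mem_filter]

lemma flip_mem (h : IsRoots Φ) {α γ : V} (hα : α ∈ Φ) (hγ : γ ∈ R1 Φ α) : α - γ ∈ R1 Φ α := by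
  rw [mem_R1] at hγ ⊢
  refine ⟨h.sub _ hα _ hγ.1 hγ.2, ?_⟩
  rw [inner_sub_right, h.two _ hα, hγ.2]; norm_num

/-- four mutually orthogonal elements of `R1` -/
lemma R1_card_four (h : IsRoots Φ) [FiniteDimensional ℝ V] {α : V} (hα : α ∈ Φ) {β : Fin 4 → V}
    (hβ : ∀ i, β i ∈ R1 Φ α) (h0 : ∀ i k, i ≠ k → ⟪β i, β k⟫_ℝ = 0)
    (hs : β 0 + β 1 + β 2 + β 3 = (2:ℝ) • α) :
    (R1 Φ α).card ≤ max 56 (4 * Module.finrank ℝ V - 8) := by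
  classical
  have h2 : ∀ i, ⟪β i, β i⟫_ℝ = 2 := fun i => h.two _ (mem_R1.1 (hβ i)).1
  have htot := h.pillars_total h2 h0 hα (mem_R1.1 (hβ 0)).2
  set Q := pillar Φ α β 1 ∪ pillar Φ α β 2 ∪ pillar Φ α β 3 with hQ
  have hQc : Q.card ≤ (pillar Φ α β 1).card + (pillar Φ α β 2).card + (pillar Φ α β 3).card := by
    refine (Finset.card_union_le _ _).trans ?_
    gcongr
    exact Finset.card_union_le _ _
  set T := Finset.univ.image β with hT
  have hTc : T.card ≤ 4 := by
    refine Finset.card_image_le.trans ?_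
    simp
  have hsub : R1 Φ α ⊆ (T ∪ Q) ∪ (T ∪ Q).image (fun γ => α - γ) := by
    intro γ hγ
    by_cases ht : ∃ i, γ = β i ∨ γ = α - β i
    · obtain ⟨i, hi | hi⟩ := ht
      · refine Finset.mem_union_left _ (Finset.mem_union_left _ ?_)
        rw [hi]; exact Finset.mem_image_of_mem _ (Finset.mem_univ _)
      · refine Finset.mem_union_right _ ?_
        rw [hi]
        exact Finset.mem_image_of_mem _ (Finset.mem_union_left _ (Finset.mem_image_of_mem _ (Finset.mem_univ _)))
    · push Not at ht
      have main : ∀ γ ∈ R1 Φ α, (∀ i, γ ≠ β i ∧ γ ≠ α - β i) → ⟪γ, β 0⟫_ℝ = 1 → γ ∈ Q := by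
        intro γ hγ ht h00
        have hg := mem_R1.1 hγ
        have hv : ∀ i, ⟪γ, β i⟫_ℝ = 1 ∨ ⟪γ, β i⟫_ℝ = 0 := by
          intro i
          have hb := mem_R1.1 (hβ i)
          have := h.ip1 hα hb.1 hg.1 hb.2 hg.2 (ht i).1 (ht i).2
          rwa [real_inner_comm] at this
        have hsum : ⟪γ, β 0⟫_ℝ + ⟪γ, β 1⟫_ℝ + ⟪γ, β 2⟫_ℝ + ⟪γ, β 3⟫_ℝ = 2 := by
          rw [← inner_add_right, ← inner_add_right, ← inner_add_right, hs, real_inner_smul_right,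
            real_inner_comm, hg.2]; norm_num
        rw [hQ]
        simp only [Finset.mem_union, mem_pillar, Fin.forall_fin_succ, Fin.succ_zero_eq_one]
        rcases hv 1 with e1 | e1 <;> rcases hv 2 with e2 | e2 <;> rcases hv 3 with e3 | e3 <;>
          rw [h00, e1, e2, e3] at hsum <;> norm_num at hsum
        · refine Or.inl (Or.inl ⟨hg.1, hg.2, ?_⟩); simp [h00, e1, e2, e3]
        · refine Or.inl (Or.inr ⟨hg.1, hg.2, ?_⟩); simp [h00, e1, e2, e3]
        · refine Or.inr ⟨hg.1, hg.2, ?_⟩; simp [h00, e1, e2, e3]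
      have hg := mem_R1.1 hγ
      have hb := mem_R1.1 (hβ 0)
      have h00 := h.ip1 hα hb.1 hg.1 hb.2 hg.2 (ht 0).1 (ht 0).2
      rw [real_inner_comm] at h00
      rcases h00 with h00 | h00
      · exact Finset.mem_union_left _ (Finset.mem_union_right _ (main γ hγ ht h00))
      · refine Finset.mem_union_right _ ?_
        rw [Finset.mem_image]
        refine ⟨α - γ, Finset.mem_union_right _ (main _ (h.flip_mem hα hγ) ?_ ?_), by abel⟩
        · intro i
          refine ⟨fun e => (ht i).2 ?_, fun e => (ht i).1 ?_⟩
          · rw [← e]; abel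
          · exact sub_right_injective e
        · rw [inner_sub_left, h00, hb.2]; norm_num
  have hc := (Finset.card_le_card hsub).trans (Finset.card_union_le _ _)
  have hi : ((T ∪ Q).image (fun γ => α - γ)).card ≤ (T ∪ Q).card := Finset.card_image_le
  have hu := Finset.card_union_le T Q
  omega

lemma R1_card (h : IsRoots Φ) [FiniteDimensional ℝ V] {α : V} (hα : α ∈ Φ) :
    (R1 Φ α).card ≤ max 56 (4 * Module.finrank ℝ V - 8) := by
  classical
  by_cases h3 : ∃ b1 ∈ R1 Φ α, ∃ b2 ∈ R1 Φ α, ∃ b3 ∈ R1 Φ α,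
      ⟪b1, b2⟫_ℝ = 0 ∧ ⟪b1, b3⟫_ℝ = 0 ∧ ⟪b2, b3⟫_ℝ = 0
  · obtain ⟨b1, m1, b2, m2, b3, m3, e12, e13, e23⟩ := h3
    have g1 := mem_R1.1 m1
    have g2 := mem_R1.1 m2
    have g3 := mem_R1.1 m3
    have s1 := h.sub _ hα _ g1.1 g1.2
    have s2 := h.sub _ s1 _ g2.1 (by rw [inner_sub_left, e12, g2.2]; norm_num)
    have s3 := h.sub _ s2 _ g3.1 (by rw [inner_sub_left, inner_sub_left, e13, e23, g3.2]; norm_num)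
    have aα := h.two _ hα
    have s4 := h.sub _ (h.neg _ s3) _ hα (by
      rw [inner_neg_left]
      simp only [inner_sub_left]
      rw [real_inner_comm, aα] 
      rw [real_inner_comm, g1.2, real_inner_comm, g2.2, real_inner_comm, g3.2]; norm_num)
    have s5 := h.neg _ s4
    set b4 := -(-(α - b1 - b2 - b3) - α) with hb4
    have hb4' : b4 = (2:ℝ) • α - b1 - b2 - b3 := by rw [hb4, two_smul]; abel
    have m4 : b4 ∈ R1 Φ α := by
      rw [mem_R1]
      refine ⟨s5, ?_⟩
      rw [hb4']
      simp only [inner_sub_right, real_inner_smul_right]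
      rw [g1.2, g2.2, g3.2, aα]; norm_num
    have e14 : ⟪b1, b4⟫_ℝ = 0 := by
      rw [hb4']
      simp only [inner_sub_right, real_inner_smul_right]
      rw [real_inner_comm, g1.2, h.two _ g1.1, e12, e13]; norm_num
    have e24 : ⟪b2, b4⟫_ℝ = 0 := by
      rw [hb4']
      simp only [inner_sub_right, real_inner_smul_right]
      rw [real_inner_comm, g2.2, h.two _ g2.1, e23, real_inner_comm, e12]; norm_num
    have e34 : ⟪b3, b4⟫_ℝ = 0 := by
      rw [hb4']
      simp only [inner_sub_right, real_inner_smul_right]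
      rw [real_inner_comm, g3.2, h.two _ g3.1, real_inner_comm, e13, real_inner_comm, e23]; norm_num
    refine h.R1_card_four hα (β := ![b1, b2, b3, b4]) ?_ ?_ ?_
    · intro i; fin_cases i <;> simp [m1, m2, m3, m4]
    · intro i k hik
      fin_cases i <;> fin_cases k <;> first | exact absurd rfl hik | skip
      all_goals simp
      all_goals first | assumption | (rw [real_inner_comm]; assumption)
    · simp [hb4']
  · push Not at h3
    by_cases h2 : ∃ b1 ∈ R1 Φ α, ∃ b2 ∈ R1 Φ α, ⟪b1, b2⟫_ℝ = 0
    · obtain ⟨b1, m1, b2, m2, e12⟩ := h2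
      have g1 := mem_R1.1 m1
      have g2 := mem_R1.1 m2
      set A := (R1 Φ α).filter fun γ => ⟪γ, b1⟫_ℝ = 1 ∧ ⟪γ, b2⟫_ℝ = 0 with hA
      have hAc : A.card ≤ Module.finrank ℝ V := by
        have := simplex_card_s17 (fun γ : A => (γ : V))
          (fun γ => h.two _ (mem_R1.1 (Finset.mem_filter.1 γ.2).1).1) ?_
        · rwa [Fintype.card_coe] at this
        · intro γ δ hne
          have p1 := Finset.mem_filter.1 γ.2
          have p2 := Finset.mem_filter.1 δ.2
          have q1 := mem_R1.1 p1.1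
          have q2 := mem_R1.1 p2.1
          have hn2 : (δ : V) ≠ α - γ := by
            intro e
            have := p2.2.1
            rw [e, inner_sub_left, p1.2.1, g1.2] at this
            norm_num at this
          rcases h.ip1 hα q1.1 q2.1 q1.2 q2.2 (fun e => hne (Subtype.ext e.symm)) hn2 with e | e
          · exact e
          · exact absurd p2.2.2 (h3 _ p1.1 _ p2.1 _ m2 e p1.2.2)
      have hsub : R1 Φ α ⊆ ({b1, b2} ∪ A) ∪ ({b1, b2} ∪ A).image (fun γ => α - γ) := by
        intro γ hγ
        by_cases t1 : γ = b1
        · simp [t1]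
        by_cases t2 : γ = b2
        · simp [t2]
        by_cases t3 : γ = α - b1
        · refine Finset.mem_union_right _ (Finset.mem_image.2 ⟨b1, by simp, t3.symm⟩)
        by_cases t4 : γ = α - b2
        · refine Finset.mem_union_right _ (Finset.mem_image.2 ⟨b2, by simp, t4.symm⟩)
        have q := mem_R1.1 hγ
        have i1 := h.ip1 hα g1.1 q.1 g1.2 q.2 t1 t3
        have i2 := h.ip1 hα g2.1 q.1 g2.2 q.2 t2 t4
        have hf := h.flip_mem hα hγ
        rw [real_inner_comm] at i1 i2
        rcases i1 with i1 | i1 <;> rcases i2 with i2 | i2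
        · exfalso
          refine h3 _ m1 _ m2 _ hf e12 ?_ ?_
          · rw [inner_sub_right, real_inner_comm, g1.2, real_inner_comm, i1]; norm_num
          · rw [inner_sub_right, real_inner_comm, g2.2, real_inner_comm, i2]; norm_num
        · refine Finset.mem_union_left _ (Finset.mem_union_right _ (Finset.mem_filter.2 ⟨hγ, i1, i2⟩))
        · refine Finset.mem_union_right _ (Finset.mem_image.2 ⟨α - γ, Finset.mem_union_right _ (Finset.mem_filter.2 ⟨hf, ?_, ?_⟩), by abel⟩)
          · rw [inner_sub_left, g1.2, i1]; norm_num
          · rw [inner_sub_left, g2.2, i2]; norm_num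
        · exfalso
          refine h3 _ m1 _ m2 _ hγ e12 ?_ ?_
          · rw [real_inner_comm, i1]
          · rw [real_inner_comm, i2]
      have hc := (Finset.card_le_card hsub).trans (Finset.card_union_le _ _)
      have hi : (({b1, b2} ∪ A).image (fun γ => α - γ)).card ≤ ({b1, b2} ∪ A).card := Finset.card_image_le
      have hu := Finset.card_union_le {b1, b2} A
      have hp : ({b1, b2} : Finset V).card ≤ 2 := Finset.card_le_two
      omega
    · push Not at h2
      rcases (R1 Φ α).eq_empty_or_nonempty with he | ⟨b, hb⟩
      · simp [he]
      · have hsub : R1 Φ α ⊆ {b, α - b} := by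
          intro γ hγ
          by_contra hn
          simp only [Finset.mem_insert, Finset.mem_singleton, not_or] at hn
          have g := mem_R1.1 hb
          have q := mem_R1.1 hγ
          rcases h.ip1 hα g.1 q.1 g.2 q.2 hn.1 hn.2 with e | e
          · refine h2 _ hb _ (h.flip_mem hα hγ) ?_
            rw [inner_sub_right, e, real_inner_comm, g.2]; norm_num
          · exact h2 _ hb _ hγ e
        have := (Finset.card_le_card hsub).trans Finset.card_le_two
        omega
end IsRoots
end Roots3


section Roots4
open scoped InnerProductSpace

variable {V : Type*} [NormedAddCommGroup V] [InnerProductSpace ℝ V]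
namespace IsRoots
variable {Φ : Finset V}

lemma eigen (h : IsRoots Φ) {α : V} (hα : α ∈ Φ) :
    ∑ β ∈ Φ, ⟪α, β⟫_ℝ • β = (4 + ((R1 Φ α).card : ℝ)) • α := by
  classical
  have hne : α ≠ 0 := by
    intro e; have := h.two _ hα; rw [e] at this; simp at this
  have hnn : α ≠ -α := by
    intro e
    apply hne
    have h2 : (2:ℝ) • α = 0 := by
      rw [two_smul]; nth_rewrite 2 [e]; exact add_neg_cancel α
    rcases smul_eq_zero.1 h2 with h3 | h3
    · norm_num at h3
    · exact h3
  -- negative part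
  have hm : ((Φ.filter fun γ => ⟪α, γ⟫_ℝ = -1)) = (R1 Φ α).image (fun γ => -γ) := by
    ext γ
    simp only [Finset.mem_filter, Finset.mem_image, mem_R1]
    constructor
    · rintro ⟨a, b⟩
      exact ⟨-γ, ⟨h.neg _ a, by rw [inner_neg_right, b]; norm_num⟩, neg_neg _⟩
    · rintro ⟨δ, ⟨a, b⟩, rfl⟩
      exact ⟨h.neg _ a, by rw [inner_neg_right, b]⟩
  have hsplit : ∀ β ∈ Φ, ⟪α, β⟫_ℝ • β = (if β = α then (2:ℝ) • α else 0) +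
      (if β = -α then (2:ℝ) • α else 0) + (if ⟪α, β⟫_ℝ = 1 then β else 0) +
      (if ⟪α, β⟫_ℝ = -1 then -β else 0) := by
    intro β hβ
    rcases h.ip hα hβ with e | e | e | e | e
    · have := h.eq_of_two hα hβ e
      subst this
      rw [e]; simp [hnn]; norm_num
    · have n1 : β ≠ α := by rintro rfl; rw [h.two _ hα] at e; norm_num at e
      have n2 : β ≠ -α := by rintro rfl; rw [inner_neg_right, h.two _ hα] at e; norm_num at e
      rw [e]; simp [n1, n2]; norm_num
    · have n1 : β ≠ α := by rintro rfl; rw [h.two _ hα] at e; norm_num at e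
      have n2 : β ≠ -α := by rintro rfl; rw [inner_neg_right, h.two _ hα] at e; norm_num at e
      rw [e]; simp [n1, n2]
    · have n1 : β ≠ α := by rintro rfl; rw [h.two _ hα] at e; norm_num at e
      have n2 : β ≠ -α := by rintro rfl; rw [inner_neg_right, h.two _ hα] at e; norm_num at e
      rw [e]; simp [n1, n2]; norm_num
    · have := h.eq_neg hα hβ e
      subst this
      rw [e]; simp [hnn.symm]; norm_num
  rw [Finset.sum_congr rfl hsplit]
  simp only [Finset.sum_add_distrib]
  rw [Finset.sum_ite_eq' Φ α, if_pos hα, Finset.sum_ite_eq' Φ (-α), if_pos (h.neg _ hα),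
    ← Finset.sum_filter, ← Finset.sum_filter, hm, Finset.sum_image (fun _ _ _ _ e => neg_injective e)]
  have hR : (Φ.filter fun γ => ⟪α, γ⟫_ℝ = 1) = R1 Φ α := by
    ext γ; simp [mem_R1]
  rw [hR]
  simp only [neg_neg]
  have hflip : ∑ γ ∈ R1 Φ α, γ = ∑ γ ∈ R1 Φ α, (α - γ) := by
    refine Finset.sum_bij (fun γ _ => α - γ) (fun γ hγ => h.flip_mem hα hγ)
      (fun _ _ _ _ e => sub_right_injective e)
      (fun γ hγ => ⟨α - γ, h.flip_mem hα hγ, by abel⟩) (fun γ _ => by abel)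
  rw [Finset.sum_sub_distrib, Finset.sum_const] at hflip
  have : ∑ γ ∈ R1 Φ α, γ + ∑ γ ∈ R1 Φ α, γ = ((R1 Φ α).card : ℝ) • α := by
    rw [Nat.cast_smul_eq_nsmul]
    exact eq_sub_iff_add_eq.1 hflip
  rw [add_assoc, this]
  module

lemma card_le (h : IsRoots Φ) [FiniteDimensional ℝ V] (c : ℕ) (hc : ∀ α ∈ Φ, 4 + (R1 Φ α).card ≤ c) :
    2 * Φ.card ≤ c * Module.finrank ℝ V := by
  classical
  let W := Submodule.span ℝ (Φ : Set V)
  let β' : Φ → W := fun β => ⟨β, Submodule.subset_span β.2⟩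
  let S : W →ₗ[ℝ] W := ∑ β : Φ, (innerₛₗ ℝ (β' β)).smulRight (β' β)
  have hS : ∀ α : Φ, S (β' α) = (4 + ((R1 Φ (α:V)).card : ℝ)) • β' α := by
    intro α
    apply Subtype.ext
    simp only [S, LinearMap.sum_apply, LinearMap.smulRight_apply, innerₛₗ_apply_apply]
    rw [Submodule.coe_smul, ← h.eigen α.2, ← Finset.sum_coe_sort Φ]
    simp only [Submodule.coe_sum, Submodule.coe_smul, Submodule.coe_inner]
    refine Finset.sum_congr rfl fun β _ => by rw [real_inner_comm]
  have ht : LinearMap.trace ℝ W S = 2 * Φ.card := by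
    simp only [S, map_sum, LinearMap.trace_smulRight, innerₛₗ_apply_apply, Submodule.coe_inner]
    rw [Finset.sum_congr rfl (fun β _ => h.two β.1 β.2)]
    simp [mul_comm]
  obtain ⟨s, hs, hspan, hli⟩ := exists_linearIndependent ℝ (Φ : Set V)
  have hfin : s.Finite := Φ.finite_toSet.subset hs
  have : Fintype s := hfin.fintype
  let w : s → W := fun i => β' ⟨i, hs i.2⟩
  have hw : LinearIndependent ℝ w := by
    refine LinearIndependent.of_comp W.subtype ?_
    exact hli
  have hcard : Fintype.card s = Module.finrank ℝ W := by
    rw [← finrank_span_eq_card hli, Subtype.range_coe_subtype, Set.ofPred_mem_eq, hspan]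
  let b : Module.Basis s ℝ W := basisOfLinearIndependentOfCardEqFinrank' w hw hcard
  have ht2 : LinearMap.trace ℝ W S = ∑ i : s, (4 + ((R1 Φ (i:V)).card : ℝ)) := by
    rw [LinearMap.trace_eq_matrix_trace ℝ b, Matrix.trace]
    refine Finset.sum_congr rfl fun i _ => ?_
    rw [Matrix.diag_apply, LinearMap.toMatrix_apply]
    have e : b i = β' ⟨i, hs i.2⟩ := by simp [b, w]
    rw [e, hS, ← e, map_smul]
    simp
  have hle : ∑ i : s, (4 + ((R1 Φ (i:V)).card : ℝ)) ≤ ∑ i : s, (c:ℝ) :=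
    Finset.sum_le_sum fun i _ => by exact_mod_cast hc i (hs i.2)
  rw [← ht2, ht, Finset.sum_const, nsmul_eq_mul, Finset.card_univ, hcard] at hle
  have h1 : 2 * Φ.card ≤ Module.finrank ℝ W * c := by exact_mod_cast hle
  have h2 : Module.finrank ℝ W ≤ Module.finrank ℝ V := Submodule.finrank_le W
  calc 2 * Φ.card ≤ Module.finrank ℝ W * c := h1
    _ ≤ Module.finrank ℝ V * c := Nat.mul_le_mul_right _ h2
    _ = _ := mul_comm _ _

lemma card_bound (h : IsRoots Φ) [FiniteDimensional ℝ V] (hn : 2 ≤ Module.finrank ℝ V) :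
    Φ.card ≤ max 480 (2 * Module.finrank ℝ V * (Module.finrank ℝ V - 1)) := by
  have := h.card_le (max 60 (4 * Module.finrank ℝ V - 4)) (fun α hα => by
    have := h.R1_card hα; omega)
  obtain ⟨k, hk⟩ : ∃ k, Module.finrank ℝ V = k + 2 := ⟨_, (Nat.sub_add_cancel hn).symm⟩
  rw [hk] at this ⊢
  have e1 : 4 * (k + 2) - 4 = 4 * (k + 1) := by omega
  have e2 : k + 2 - 1 = k + 1 := by omega
  rw [e1] at this
  rw [e2]
  rcases le_total k 14 with hk | hk
  · rw [max_eq_left (by omega)] at this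
    exact le_max_of_le_left (by omega)
  · rw [max_eq_right (by omega)] at this
    refine le_max_of_le_right ?_
    nlinarith
end IsRoots

/-- number of vectors of norm two, pairwise not opposite, with integral inner products -/
lemma norm_two_count [FiniteDimensional ℝ V] (hn : 2 ≤ Module.finrank ℝ V)
    {ι : Type*} [Fintype ι] (v : ι → V) (h2 : ∀ i, ⟪v i, v i⟫_ℝ = 2)
    (hint : ∀ i j, ∃ z : ℤ, ⟪v i, v j⟫_ℝ = z) (hne : ∀ i j, i ≠ j → v i ≠ v j ∧ v i ≠ -v j) :
    2 * Fintype.card ι ≤ max 480 (2 * Module.finrank ℝ V * (Module.finrank ℝ V - 1)) := by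
  classical
  let L := AddSubgroup.closure (Set.range v)
  have hL1 : ∀ i, ∀ x ∈ L, ∃ z : ℤ, ⟪v i, x⟫_ℝ = z := by
    intro i x hx
    induction hx using AddSubgroup.closure_induction with
    | mem x hx => obtain ⟨j, rfl⟩ := hx; exact hint i j
    | zero => exact ⟨0, by simp⟩
    | add x y _ _ hx hy =>
      obtain ⟨a, ha⟩ := hx
      obtain ⟨b, hb⟩ := hy
      exact ⟨a + b, by rw [inner_add_right, ha, hb]; push_cast; ring⟩
    | neg x _ hx =>
      obtain ⟨a, ha⟩ := hx
      exact ⟨-a, by rw [inner_neg_right, ha]; push_cast; ring⟩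
  have hL : ∀ y ∈ L, ∀ x ∈ L, ∃ z : ℤ, ⟪y, x⟫_ℝ = z := by
    intro y hy x hx
    induction hy using AddSubgroup.closure_induction with
    | mem y hy => obtain ⟨j, rfl⟩ := hy; exact hL1 j x hx
    | zero => exact ⟨0, by simp⟩
    | add x y _ _ hx hy =>
      obtain ⟨a, ha⟩ := hx
      obtain ⟨b, hb⟩ := hy
      exact ⟨a + b, by rw [inner_add_left, ha, hb]; push_cast; ring⟩
    | neg x _ hx =>
      obtain ⟨a, ha⟩ := hx
      exact ⟨-a, by rw [inner_neg_left, ha]; push_cast; ring⟩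
  let P : Set V := {x | x ∈ L ∧ ⟪x, x⟫_ℝ = 2}
  have hPint : ∀ x ∈ P, ∀ y ∈ P, x ≠ y → ⟪x, y⟫_ℝ ∈ ({-2, -1, 0, 1} : Finset ℝ) := by
    intro x hx y hy hxy
    obtain ⟨z, hz⟩ := hL x hx.1 y hy.1
    have h1 : 0 < ⟪x - y, x - y⟫_ℝ := by
      refine lt_of_le_of_ne real_inner_self_nonneg fun e => hxy ?_
      exact sub_eq_zero.1 (inner_self_eq_zero.1 e.symm)
    have h2 : 0 ≤ ⟪x + y, x + y⟫_ℝ := real_inner_self_nonneg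
    rw [real_inner_sub_sub_self, hx.2, hy.2, hz] at h1
    rw [real_inner_add_add_self, hx.2, hy.2, hz] at h2
    have h3 : (z:ℝ) < 2 := by linarith
    have h4 : (-2:ℝ) ≤ z := by linarith
    have h3' : z < 2 := by exact_mod_cast h3
    have h4' : -2 ≤ z := by exact_mod_cast h4
    rw [hz]
    interval_cases z <;> norm_num
  have hPfin : P.Finite := by
    by_contra hinf
    obtain ⟨t, htP, htc⟩ := Set.Infinite.exists_subset_card_eq hinf
      ((Module.finrank ℝ V + 4).choose 4 + 1)
    have := poly_bound (fun x : t => (x : V)) {-2, -1, 0, 1}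
      (fun i => by rw [(htP i.2).2]; norm_num)
      (fun i j hij => hPint _ (htP i.2) _ (htP j.2) (fun e => hij (Subtype.ext e)))
    have hc : ({-2, -1, 0, 1} : Finset ℝ).card = 4 := by
      rw [Finset.card_insert_of_notMem, Finset.card_insert_of_notMem, Finset.card_insert_of_notMem,
        Finset.card_singleton] <;> norm_num
    rw [Fintype.card_coe, htc, hc] at this
    omega
  have hR : IsRoots hPfin.toFinset := by
    constructor
    · intro β hβ; exact ((Set.Finite.mem_toFinset _).1 hβ).2
    · intro β hβ γ hγ
      exact hL _ ((Set.Finite.mem_toFinset _).1 hβ).1 _ ((Set.Finite.mem_toFinset _).1 hγ).1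
    · intro β hβ γ hγ e
      rw [Set.Finite.mem_toFinset] at *
      refine ⟨L.sub_mem hβ.1 hγ.1, ?_⟩
      rw [real_inner_sub_sub_self, hβ.2, hγ.2, e]; norm_num
    · intro β hβ
      rw [Set.Finite.mem_toFinset] at *
      exact ⟨L.neg_mem hβ.1, by rw [inner_neg_neg]; exact hβ.2⟩
  refine le_trans ?_ (hR.card_bound hn)
  have hinj : Function.Injective (Sum.elim v (fun i => -v i)) := by
    have hnn : ∀ i, v i ≠ - v i := by
      intro i e
      have := h2 i
      have h3 : ⟪v i, - v i⟫_ℝ = 2 := by rw [← e]; exact this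
      rw [inner_neg_right, this] at h3
      norm_num at h3
    rintro (i | i) (j | j) e
    · by_contra hij
      exact (hne i j (fun e => hij (by rw [e]))).1 e
    · by_cases hij : i = j
      · subst hij; exact absurd e (hnn i)
      · exact absurd e (hne i j hij).2
    · by_cases hij : i = j
      · subst hij; exact absurd e.symm (hnn i)
      · exact absurd e.symm (hne j i (Ne.symm hij)).2
    · by_contra hij
      exact (hne i j (fun e => hij (by rw [e]))).1 (neg_injective e)
  have hcard := Finset.card_le_card_of_injOn (s := (Finset.univ : Finset (ι ⊕ ι))) (t := hPfin.toFinset)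
    (Sum.elim v (fun i => -v i)) (by
      rintro (i | i) _
      · simp only [Set.Finite.coe_toFinset]
        exact ⟨AddSubgroup.subset_closure ⟨i, rfl⟩, h2 i⟩
      · simp only [Set.Finite.coe_toFinset]
        exact ⟨L.neg_mem (AddSubgroup.subset_closure ⟨i, rfl⟩), by
          simp only [Sum.elim_inr]; rw [inner_neg_neg]; exact h2 i⟩) hinj.injOn
  rw [Finset.card_univ, Fintype.card_sum] at hcard
  omega
end Roots4


section Geo
open scoped InnerProductSpace

structure GeoData (R m u : ℕ) (x y : ℕ → EuclideanSpace ℝ (Fin R)) : Prop where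
  int : ∀ r ≤ u, ∀ s ≤ u, ∃ z : ℤ, ⟪x r, x s⟫_ℝ + ⟪y r, y s⟫_ℝ = z
  nrm : ∀ r ≤ u, ⟪x r, x r⟫_ℝ + ⟪y r, y r⟫_ℝ = m
  small : ∀ r ≤ u, ⟪x r, x r⟫_ℝ ≤ m * (r + 1) / (u + 1)
  inj : ∀ r ≤ u, ∀ s ≤ u, ⟪x r, x r⟫_ℝ = ⟪x s, x s⟫_ℝ → r = s

namespace GeoData
variable {R m u : ℕ} {x y : ℕ → EuclideanSpace ℝ (Fin R)}

/-- the combined vector -/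
noncomputable def vec (x y : ℕ → EuclideanSpace ℝ (Fin R)) (r : ℕ) :
    WithLp 2 (EuclideanSpace ℝ (Fin R) × EuclideanSpace ℝ (Fin R)) := WithLp.toLp 2 (x r, y r)

lemma vec_inner (r s : ℕ) : ⟪vec x y r, vec x y s⟫_ℝ = ⟪x r, x s⟫_ℝ + ⟪y r, y s⟫_ℝ := by
  rw [WithLp.prod_inner_apply]; rfl

lemma finrank_vec (R : ℕ) : Module.finrank ℝ
    (WithLp 2 (EuclideanSpace ℝ (Fin R) × EuclideanSpace ℝ (Fin R))) = 2 * R := by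
  rw [(WithLp.linearEquiv 2 ℝ _).finrank_eq, Module.finrank_prod, finrank_euclideanSpace_fin]
  ring

lemma vec_ne (h : GeoData R m u x y) {r s : ℕ} (hr : r ≤ u) (hs : s ≤ u) (hrs : r ≠ s) :
    vec x y r ≠ vec x y s ∧ vec x y r ≠ - vec x y s := by
  constructor
  · intro e
    have : x r = x s := congrArg (fun v => v.fst) e
    exact hrs (h.inj r hr s hs (by rw [this]))
  · intro e
    have : x r = - x s := congrArg (fun v => v.fst) e
    exact hrs (h.inj r hr s hs (by rw [this, inner_neg_neg]))

lemma ip_lt (h : GeoData R m u x y) {r s : ℕ} (hr : r ≤ u) (hs : s ≤ u) (hrs : r ≠ s) :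
    ∃ z : ℤ, ⟪vec x y r, vec x y s⟫_ℝ = z ∧ z < m ∧ -(m:ℤ) < z := by
  obtain ⟨z, hz⟩ := h.int r hr s hs
  rw [← vec_inner] at hz
  refine ⟨z, hz, ?_⟩
  have a := h.nrm r hr
  have b := h.nrm s hs
  rw [← vec_inner] at a b
  have hne := h.vec_ne hr hs hrs
  have h1 : 0 < ⟪vec x y r - vec x y s, vec x y r - vec x y s⟫_ℝ := by
    refine lt_of_le_of_ne real_inner_self_nonneg fun e => hne.1 ?_
    exact sub_eq_zero.1 (inner_self_eq_zero.1 e.symm)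
  have h2 : 0 < ⟪vec x y r + vec x y s, vec x y r + vec x y s⟫_ℝ := by
    refine lt_of_le_of_ne real_inner_self_nonneg fun e => hne.2 ?_
    exact eq_neg_of_add_eq_zero_left (inner_self_eq_zero.1 e.symm)
  rw [real_inner_sub_sub_self, a, b, hz] at h1
  rw [real_inner_add_add_self, a, b, hz] at h2
  constructor
  · have : (z:ℝ) < m := by linarith
    exact_mod_cast this
  · have : (-(m:ℝ)) < z := by linarith
    exact_mod_cast this

/-- general polynomial bound on a subset where inner products are large -/
lemma poly (h : GeoData R m u x y) (J : Finset ℕ) (hJ : ∀ r ∈ J, r ≤ u) (k : ℕ)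
    (hip : ∀ r ∈ J, ∀ s ∈ J, r ≠ s → (m:ℝ) - k - 1 < ⟪vec x y r, vec x y s⟫_ℝ) :
    J.card ≤ (2 * R + k).choose k := by
  classical
  let S : Finset ℝ := (Finset.range k).image fun j : ℕ => (m:ℝ) - (j + 1)
  have hS : S.card = k := by
    rw [Finset.card_image_of_injective, Finset.card_range]
    intro a b e
    have : (a:ℝ) = b := by simp only at e; linarith
    exact_mod_cast this
  have := poly_bound (fun r : J => vec x y r) S ?_ ?_
  · rw [Fintype.card_coe, finrank_vec, hS] at this
    exact this
  · intro r hr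
    rw [vec_inner, h.nrm _ (hJ r r.2), Finset.mem_image] at hr
    obtain ⟨j, _, hj⟩ := hr
    have : (0:ℝ) ≤ j := Nat.cast_nonneg _
    linarith
  · intro r s hrs
    have hrs' : (r:ℕ) ≠ s := fun e => hrs (Subtype.ext e)
    obtain ⟨z, hz, h1, -⟩ := h.ip_lt (hJ r r.2) (hJ s s.2) hrs'
    have h2 := hip r r.2 s s.2 hrs'
    rw [hz] at h2 ⊢
    have h3 : (m:ℤ) - k - 1 < z := by exact_mod_cast h2
    rw [Finset.mem_image]
    refine ⟨(m - z - 1).toNat, ?_, ?_⟩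
    · rw [Finset.mem_range]; omega
    · have : (((m - z - 1).toNat : ℤ) : ℝ) = m - z - 1 := by
        rw [Int.toNat_of_nonneg (by omega)]; push_cast; ring
      rw [Int.cast_natCast] at this
      rw [this]; ring

lemma P0 (h : GeoData R m u x y) (hm : 1 ≤ m) :
    u + 1 ≤ (2 * R + (2 * m - 1)).choose (2 * m - 1) := by
  have := h.poly (Finset.range (u+1)) (fun r hr => by rw [Finset.mem_range] at hr; omega) (2*m-1) ?_
  · rwa [Finset.card_range] at this
  · intro r hr s hs hrs
    rw [Finset.mem_range] at hr hs
    obtain ⟨z, hz, -, h1⟩ := h.ip_lt (r := r) (s := s) (by omega) (by omega) hrs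
    rw [hz]
    have : ((2 * m - 1 : ℕ) : ℝ) = 2 * m - 1 := by
      rw [Nat.cast_sub (by omega)]; push_cast; ring
    rw [this]
    have h2 : (-(m:ℝ)) < z := by exact_mod_cast h1
    linarith

lemma one (h : GeoData R 1 u x y) : u + 1 ≤ 2 * R := by
  have hli : LinearIndependent ℝ (fun r : Fin (u+1) => vec x y r) := by
    refine linearIndependent_of_ne_zero_of_inner_eq_zero (𝕜 := ℝ) ?_ ?_
    · intro r hr
      have := h.nrm r (by omega)
      rw [← vec_inner, hr] at this
      simp at this
    · intro r s hrs
      obtain ⟨z, hz, h1, h2⟩ := h.ip_lt (r := r) (s := s) (by omega) (by omega) (fun e => hrs (Fin.ext e))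
      have : z = 0 := by push_cast at h1 h2; omega
      rw [hz, this]; simp
  have := hli.fintype_card_le_finrank
  rwa [Fintype.card_fin, finrank_vec] at this

lemma two (h : GeoData R 2 u x y) (hR : 1 ≤ R) :
    2 * (u + 1) ≤ max 480 (2 * (2 * R) * (2 * R - 1)) := by
  have := norm_two_count (V := WithLp 2 (EuclideanSpace ℝ (Fin R) × EuclideanSpace ℝ (Fin R)))
    (by rw [finrank_vec]; omega) (fun r : Fin (u+1) => vec x y r) ?_ ?_ ?_
  · rwa [Fintype.card_fin, finrank_vec] at this
  · intro r; rw [vec_inner, h.nrm r (by omega)]; norm_num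
  · intro r s
    obtain ⟨z, hz⟩ := h.int r (by omega) s (by omega)
    exact ⟨z, by rw [vec_inner, hz]⟩
  · intro r s hrs
    exact h.vec_ne (by omega) (by omega) (fun e => hrs (Fin.ext e))

lemma nontriv (hR : 1 ≤ R) : Nontrivial (EuclideanSpace ℝ (Fin R)) := by
  have : Nonempty (Fin R) := ⟨⟨0, hR⟩⟩
  infer_instance

lemma shell (h : GeoData R m u x y) (hm : 1 ≤ m) (hR : 1 ≤ R) :
    2 * ((u:ℝ) + 1) * (1 / √2) ^ (2 * R) ≤ (√m + 1 / √2) ^ (2 * R) - (√m - 1 / √2) ^ (2 * R) := by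
  have := nontriv hR
  have : Nontrivial (WithLp 2 (EuclideanSpace ℝ (Fin R) × EuclideanSpace ℝ (Fin R))) := by
    refine Module.nontrivial_of_finrank_pos (R := ℝ) ?_
    rw [finrank_vec]; omega
  have hs2 : (1 / √2 : ℝ) ≤ √m := by
    have h1 : (1:ℝ) ≤ √m := by
      rw [Real.one_le_sqrt]; exact_mod_cast hm
    have h2 : (1:ℝ) ≤ √2 := by
      rw [Real.one_le_sqrt]; norm_num
    have : (1 / √2 : ℝ) ≤ 1 := by
      rw [div_le_one (by positivity)]; exact h2
    linarith
  have hself : ∀ r : Fin (u+1), ⟪vec x y r, vec x y r⟫_ℝ = m := by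
    intro r; rw [vec_inner, h.nrm r (by omega)]
  have hnorm : ∀ r : Fin (u+1), ‖vec x y r‖ = √m := by
    intro r
    rw [norm_eq_sqrt_real_inner, hself]
  have hdd : ∀ a b : WithLp 2 (EuclideanSpace ℝ (Fin R) × EuclideanSpace ℝ (Fin R)),
      2 ≤ ⟪a - b, a - b⟫_ℝ → 2 * (1 / √2) ≤ dist a b := by
    intro a b hab
    rw [dist_eq_norm, norm_eq_sqrt_real_inner]
    have : 2 * (1 / √2) = √2 := by
      field_simp; norm_num
    rw [this]
    exact Real.sqrt_le_sqrt hab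
  have key := shell_count (Sum.elim (fun r : Fin (u+1) => vec x y r) (fun r : Fin (u+1) => - vec x y r))
    (1 / √2) (√m) (by positivity) hs2 ?_ ?_
  · rw [finrank_vec, Fintype.card_sum, Fintype.card_fin] at key
    push_cast at key
    convert key using 2
    ring
  · rintro (r | r)
    · exact hnorm r
    · simp only [Sum.elim_inr, norm_neg]; exact hnorm r
  · have hm1 : (1:ℝ) ≤ m := by exact_mod_cast hm
    have hb : ∀ r s : Fin (u+1), r ≠ s → ⟪vec x y r, vec x y s⟫_ℝ ≤ m - 1 ∧
        -(m - 1 : ℝ) ≤ ⟪vec x y r, vec x y s⟫_ℝ := by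
      intro r s hrs
      obtain ⟨z, hz, h1, h2⟩ := h.ip_lt (r := r) (s := s) (by omega) (by omega) (fun e => hrs (Fin.ext e))
      rw [hz]
      have h1' : z ≤ (m:ℤ) - 1 := by omega
      have h2' : -((m:ℤ) - 1) ≤ z := by omega
      constructor
      · exact_mod_cast h1'
      · exact_mod_cast h2'
    rintro (r | r) (s | s) hrs <;> apply hdd <;> simp only [Sum.elim_inl, Sum.elim_inr]
    · rw [real_inner_sub_sub_self, hself, hself]
      have := (hb r s (fun e => hrs (by rw [e]))).1
      linarith
    · rw [sub_neg_eq_add, real_inner_add_add_self, hself, hself]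
      by_cases e : r = s
      · rw [e, hself]; linarith
      · have := (hb r s e).2; linarith
    · rw [← neg_add', inner_neg_neg, real_inner_add_add_self, hself, hself]
      by_cases e : r = s
      · rw [e, hself]; linarith
      · have := (hb r s e).2; linarith
    · rw [neg_sub_neg, real_inner_sub_sub_self, hself, hself]
      have := (hb s r (fun e => hrs (by rw [e]))).1
      linarith

lemma P4 (h : GeoData R m u x y) (hR : 1 ≤ R) (k K : ℕ) (ρ τ : ℝ) (hρ : 0 < ρ)
    (hk : 2 * τ + 2 * ρ ^ 2 ≤ k + 1) (hK : K ≤ u + 1) (hτ : (m:ℝ) * K / (u + 1) ≤ τ) :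
    (K:ℝ) * ρ ^ R ≤ ((2 * R + k).choose k : ℝ) * (√m + ρ) ^ R := by
  have := nontriv hR
  have hxs : ∀ r < K, ⟪x r, x r⟫_ℝ ≤ τ := by
    intro r hr
    refine (h.small r (by omega)).trans (le_trans ?_ hτ)
    have : (r:ℝ) + 1 ≤ K := by exact_mod_cast hr
    gcongr
  have key := ball_count_ball (fun r : Fin K => y r) ρ (√m) hρ (by positivity)
    ((2 * R + k).choose k) ?_ ?_
  · rw [finrank_euclideanSpace_fin, Fintype.card_fin] at key
    exact key
  · intro r
    rw [norm_eq_sqrt_real_inner]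
    apply Real.sqrt_le_sqrt
    have h1 := h.nrm r (by omega)
    have h2 : 0 ≤ ⟪x r, x r⟫_ℝ := real_inner_self_nonneg
    linarith
  · intro z J hJ
    have := h.poly (J.image fun r : Fin K => (r:ℕ)) ?_ k ?_
    · rwa [Finset.card_image_of_injective _ Fin.val_injective] at this
    · intro r hr
      obtain ⟨r', _, rfl⟩ := Finset.mem_image.1 hr
      omega
    · intro r hr s hs hrs
      obtain ⟨r', hr', rfl⟩ := Finset.mem_image.1 hr
      obtain ⟨s', hs', rfl⟩ := Finset.mem_image.1 hs
      have a1 := hJ r' hr'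
      have a2 := hJ s' hs'
      rw [Metric.mem_ball] at a1 a2
      have hd := dist_triangle (y r') z (y s')
      rw [dist_comm (y r') z] at hd
      have hd2 : dist (y r') (y s') ^ 2 ≤ (2 * ρ) ^ 2 := by
        apply pow_le_pow_left₀ dist_nonneg
        linarith
      have hd2' : dist (y r') (y s') < 2 * ρ := by linarith
      have hd3 : dist (y r') (y s') ^ 2 < (2 * ρ) ^ 2 := by
        apply pow_lt_pow_left₀ hd2' dist_nonneg (by norm_num)
      rw [dist_eq_norm, ← real_inner_self_eq_norm_sq, real_inner_sub_sub_self] at hd3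
      have hp : 0 ≤ ⟪x r' + x s', x r' + x s'⟫_ℝ := real_inner_self_nonneg
      rw [real_inner_add_add_self] at hp
      have n1 := h.nrm r' (by omega)
      have n2 := h.nrm s' (by omega)
      have t1 := hxs r' r'.2
      have t2 := hxs s' s'.2
      rw [vec_inner]
      nlinarith
end GeoData
end Geo


section Num1
/-- volume of the unit ball in dimension `j` -/
noncomputable def kap (j : ℕ) : ℝ := Real.pi ^ ((j : ℝ) / 2) / Real.Gamma ((j : ℝ) / 2 + 1)

lemma kap_pos (j : ℕ) : 0 < kap j := by
  unfold kap
  have := Real.Gamma_pos_of_pos (s := (j:ℝ)/2 + 1) (by positivity)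
  positivity

lemma kap_zero : kap 0 = 1 := by simp [kap]

lemma kap_one : kap 1 = 2 := by
  unfold kap
  have : Real.Gamma (((1:ℕ):ℝ) / 2 + 1) = 1 / 2 * √Real.pi := by
    rw [Real.Gamma_add_one (by norm_num)]
    push_cast
    rw [Real.Gamma_one_half_eq]
  rw [this]
  push_cast
  rw [← Real.sqrt_eq_rpow]
  have : √Real.pi ≠ 0 := by positivity
  field_simp

lemma kap_succ (j : ℕ) : kap (j + 2) = kap j * (2 * Real.pi / (j + 2)) := by
  unfold kap
  have e : (((j + 2 : ℕ) : ℝ)) / 2 = (j:ℝ) / 2 + 1 := by push_cast; ring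
  have hp : (0:ℝ) < (j:ℝ) / 2 + 1 := by positivity
  rw [e, Real.Gamma_add_one hp.ne', Real.rpow_add Real.pi_pos, Real.rpow_one]
  have := Real.Gamma_pos_of_pos hp
  have h2 : (j:ℝ) + 2 ≠ 0 := by positivity
  field_simp

lemma kap_even (k : ℕ) : kap (2 * k) = Real.pi ^ k / k.factorial := by
  induction k with
  | zero => simp [kap_zero]
  | succ k ih =>
    rw [show 2 * (k + 1) = 2 * k + 2 by ring, kap_succ, ih, Nat.factorial_succ]
    push_cast
    have h1 : ((k:ℝ) + 1) ≠ 0 := by positivity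
    have h2 : (k.factorial:ℝ) ≠ 0 := by positivity
    have h3 : (2 * (k:ℝ) + 2) ≠ 0 := by positivity
    field_simp
    ring

lemma kap_lower (j : ℕ) : ((1 + j % 2 : ℕ) : ℝ) * (157 / 25) ^ (j / 2) ≤ kap j * (Nat.doubleFactorial j : ℝ) := by
  induction j using Nat.twoStepInduction with
  | zero => simp [kap_zero]
  | one => norm_num [kap_one]
  | more j ih _ =>
    rw [kap_succ, Nat.doubleFactorial_add_two, Nat.add_mod_right, Nat.add_div_right _ (by norm_num), pow_succ]
    push_cast
    have hp : (157 / 25 : ℝ) ≤ 2 * Real.pi := by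
      have := Real.pi_gt_d2; linarith
    have h2 : ((j:ℝ) + 2) ≠ 0 := by positivity
    have e : kap j * (2 * Real.pi / (j + 2)) * (((j:ℝ) + 2) * (Nat.doubleFactorial j : ℝ)) =
      (kap j * (Nat.doubleFactorial j : ℝ)) * (2 * Real.pi) := by
      field_simp
    rw [e, ← mul_assoc]
    push_cast at ih
    have := kap_pos j
    apply mul_le_mul ih hp (by norm_num) (by positivity)

lemma Cbound_eq (R m : ℕ) (hm : 3 ≤ m) :
    Cbound (2 * R) m = ∑ j ∈ Finset.range (2 * R + 1), ((2 * R).choose j : ℝ) * kap j * (√(m:ℝ)) ^ j := by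
  have hpow : ∀ j : ℕ, (m:ℝ) ^ ((j:ℝ) / 2) = (√(m:ℝ)) ^ j := by
    intro j
    rw [Real.sqrt_eq_rpow, ← Real.rpow_natCast, ← Real.rpow_mul (by positivity)]
    congr 1; ring
  unfold Cbound
  rw [if_neg (by omega), if_neg (by omega), Finset.sum_range_succ, Nat.choose_self, add_comm]
  simp only [hpow]
  simp only [kap, Nat.cast_one, one_mul]

lemma Cbound_ge (R m j : ℕ) (hm : 3 ≤ m) (hj : j ≤ 2 * R) :
    ((2 * R).choose j : ℝ) * kap j * (√(m:ℝ)) ^ j ≤ Cbound (2 * R) m := by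
  rw [Cbound_eq R m hm]
  refine Finset.single_le_sum (f := fun j => ((2 * R).choose j : ℝ) * kap j * (√(m:ℝ)) ^ j) ?_ ?_
  · intro i _
    have := kap_pos i
    positivity
  · rw [Finset.mem_range]; omega

lemma Cbound_ge_even (R m k : ℕ) (hm : 3 ≤ m) (hj : k ≤ R) :
    ((2 * R).choose (2 * k) : ℝ) * (Real.pi ^ k / k.factorial) * (m:ℝ) ^ k ≤ Cbound (2 * R) m := by
  have := Cbound_ge R m (2 * k) hm (by omega)
  rwa [kap_even, pow_mul, Real.sq_sqrt (by positivity)] at this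

lemma check_table : ∀ R ∈ Finset.Icc 4 23, ∀ j ∈ Finset.range (R + 1),
    8 * R.choose j * 2 ^ j * (if j = 0 then 2 else 1) * 25 ^ (j / 2 + 1) * (Nat.doubleFactorial (j + 2))
     ≤ (2 * R).choose (j + 2) * (1 + j % 2) * 157 ^ (j / 2 + 1) := by
  decide +kernel

lemma Cbound_mid (R m : ℕ) (hm : 3 ≤ m) (h4 : 4 ≤ R) (h23 : R ≤ 23) :
    8 * (m:ℝ) * ((1 + 2 * √(m:ℝ)) ^ R + 1) ≤ Cbound (2 * R) m := by
  rw [Cbound_eq R m hm]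
  set t := √(m:ℝ) with ht
  have ht0 : 0 ≤ t := Real.sqrt_nonneg _
  have hm2 : (m:ℝ) = t ^ 2 := (Real.sq_sqrt (by positivity)).symm
  have hR : 2 * R + 1 = 2 + (R + 1) + (R - 2) := by omega
  have hnn : ∀ j, 0 ≤ ((2 * R).choose j : ℝ) * kap j * t ^ j := fun j => by
    have := kap_pos j; positivity
  have h1 : ∑ j ∈ Finset.range (R + 1), ((2 * R).choose (2 + j) : ℝ) * kap (2 + j) * t ^ (2 + j) ≤
      ∑ j ∈ Finset.range (2 * R + 1), ((2 * R).choose j : ℝ) * kap j * t ^ j := by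
    rw [hR, Finset.sum_range_add _ (2 + (R + 1)), Finset.sum_range_add _ 2]
    have a := Finset.sum_nonneg (s := Finset.range 2) (fun j _ => hnn j)
    have b := Finset.sum_nonneg (s := Finset.range (R - 2)) (fun j _ => hnn (2 + (R + 1) + j))
    linarith
  refine le_trans ?_ h1
  rw [add_comm 1 (2 * t), add_pow, hm2]
  have h0 : (1:ℝ) = ∑ j ∈ Finset.range (R + 1), if j = 0 then 1 else 0 := by
    rw [Finset.sum_ite_eq' (Finset.range (R+1)) 0]; simp
  have h0' : ∀ X : ℝ, X + 1 = X + ∑ j ∈ Finset.range (R + 1), (if j = 0 then (1:ℝ) else 0) := fun X => by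
    rw [← h0]
  rw [h0' (∑ _ ∈ _, _)]
  rw [← Finset.sum_add_distrib, Finset.mul_sum]
  refine Finset.sum_le_sum fun j hj => ?_
  have tab := check_table R (Finset.mem_Icc.2 ⟨h4, h23⟩) j hj
  have tab' : (8 * R.choose j * 2 ^ j * (if j = 0 then 2 else 1) * 25 ^ (j / 2 + 1) * (Nat.doubleFactorial (j + 2)) : ℝ)
     ≤ (2 * R).choose (j + 2) * (1 + j % 2 : ℕ) * 157 ^ (j / 2 + 1) := by exact_mod_cast tab
  have kl := kap_lower (j + 2)
  rw [Nat.add_mod_right, Nat.add_div_right _ (by norm_num), div_pow] at kl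
  have hD : (0:ℝ) < (Nat.doubleFactorial (j + 2) : ℝ) := by
    exact_mod_cast Nat.doubleFactorial_pos _
  have key : (8 * R.choose j * 2 ^ j * (if j = 0 then 2 else 1) : ℝ) ≤ (2 * R).choose (j + 2) * kap (j + 2) := by
    have h25 : (0:ℝ) < 25 ^ (j / 2 + 1) := by positivity
    refine le_of_mul_le_mul_right ?_ (mul_pos h25 hD)
    calc _ ≤ ((2 * R).choose (j + 2) * (1 + j % 2 : ℕ) * 157 ^ (j / 2 + 1) : ℝ) := by
            rw [← mul_assoc]; exact tab'
      _ = ((2 * R).choose (j + 2) : ℝ) * ((1 + j % 2 : ℕ) * (157 ^ (j / 2 + 1) / 25 ^ (j / 2 + 1))) * 25 ^ (j / 2 + 1) := by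
            field_simp
      _ ≤ ((2 * R).choose (j + 2) : ℝ) * (kap (j + 2) * (Nat.doubleFactorial (j + 2) : ℝ)) * 25 ^ (j / 2 + 1) := by
            gcongr
      _ = _ := by ring
  rw [add_comm 2 j]
  calc _ = (8 * R.choose j * 2 ^ j * (if j = 0 then 2 else 1) : ℝ) * t ^ (j + 2) := by
        split_ifs with h
        · subst h; simp; ring
        · rw [mul_pow, one_pow]; ring
    _ ≤ _ := by gcongr
end Num1


section Num2

lemma kap_two_le : (3.14 : ℝ) ≤ kap 2 := by
  have := kap_lower 2; norm_num [Nat.doubleFactorial] at this ⊢; linarith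
lemma kap_three_le : (4.18 : ℝ) ≤ kap 3 := by
  have := kap_lower 3; norm_num [Nat.doubleFactorial] at this ⊢; linarith
lemma kap_four_le : (4.92 : ℝ) ≤ kap 4 := by
  have := kap_lower 4; norm_num [Nat.doubleFactorial] at this ⊢; linarith
lemma kap_five_le : (5.25 : ℝ) ≤ kap 5 := by
  have := kap_lower 5; norm_num [Nat.doubleFactorial] at this ⊢; linarith
lemma kap_six_le : (5.15 : ℝ) ≤ kap 6 := by
  have := kap_lower 6; norm_num [Nat.doubleFactorial] at this ⊢; linarith

lemma small_R (R m : ℕ) (hm : 3 ≤ m) (hR : 1 ≤ R) (hR3 : R ≤ 3) (u : ℝ)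
    (h : 2 * (u + 1) * (1 / √2) ^ (2 * R) ≤ (√m + 1 / √2) ^ (2 * R) - (√m - 1 / √2) ^ (2 * R)) :
    u < Cbound (2 * R) m / 2 := by
  rw [Cbound_eq R m hm]
  set t := √(m:ℝ) with ht
  have ht1 : 1 ≤ t := by
    rw [ht, Real.one_le_sqrt]; exact_mod_cast (by omega : 1 ≤ m)
  set w := 1 / √2 with hw
  have hw2 : w ^ 2 = 1 / 2 := by
    rw [hw, div_pow, Real.sq_sqrt (by norm_num)]; norm_num
  have hw0 : 0 ≤ w := by positivity
  have hw1 : w ≤ 0.7072 := by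
    apply le_of_sq_le_sq _ (by norm_num)
    rw [hw2]; norm_num
  have k2 := kap_two_le
  have k3 := kap_three_le
  have k4 := kap_four_le
  have k5 := kap_five_le
  have k6 := kap_six_le
  have hw3 : w ^ 3 = w / 2 := by rw [pow_succ, hw2]; ring
  have hw4 : w ^ 4 = 1 / 4 := by rw [show w ^ 4 = (w ^ 2) ^ 2 by ring, hw2]; norm_num
  have hw5 : w ^ 5 = w / 4 := by rw [pow_succ, hw4]; ring
  have hw6 : w ^ 6 = 1 / 8 := by rw [show w ^ 6 = (w ^ 2) ^ 3 by ring, hw2]; norm_num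
  have ht0 : 0 ≤ t := by linarith
  interval_cases R
  · have h1 : u + 1 ≤ 4 * t * w := by
      simp only [Nat.mul_one] at h
      rw [hw2] at h
      nlinarith
    have h2 : t * w ≤ t * 0.7072 := by gcongr
    simp only [Nat.mul_one, Finset.sum_range_succ, Finset.sum_range_zero, kap_zero, kap_one]
    norm_num [Nat.choose]
    have h3 : t ^ 2 * 3.14 ≤ kap 2 * t ^ 2 := by rw [mul_comm]; gcongr
    nlinarith
  · have h1 : u + 1 ≤ w * (16 * t ^ 3 + 8 * t) := by
      simp only [show 2 * 2 = 4 by norm_num] at h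
      rw [hw4] at h
      have : (t + w) ^ 4 - (t - w) ^ 4 = 8 * t ^ 3 * w + 8 * t * w ^ 3 := by ring
      rw [this, hw3] at h
      linarith
    have h2 : w * (16 * t ^ 3 + 8 * t) ≤ 0.7072 * (16 * t ^ 3 + 8 * t) := by gcongr
    simp only [show 2 * 2 = 4 by norm_num, Finset.sum_range_succ, Finset.sum_range_zero, kap_zero, kap_one]
    norm_num [Nat.choose]
    have h3 : 3.14 * t ^ 2 ≤ kap 2 * t ^ 2 := by gcongr
    have h4 : 4.18 * t ^ 3 ≤ kap 3 * t ^ 3 := by gcongr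
    have h5 : 4.92 * t ^ 4 ≤ kap 4 * t ^ 4 := by gcongr
    have h6 : 0 ≤ t ^ 2 * (t - 1) ^ 2 := by positivity
    nlinarith
  · have h1 : u + 1 ≤ w * (48 * t ^ 5 + 80 * t ^ 3 + 12 * t) := by
      simp only [show 2 * 3 = 6 by norm_num] at h
      rw [hw6] at h
      have : (t + w) ^ 6 - (t - w) ^ 6 = 12 * t ^ 5 * w + 40 * t ^ 3 * w ^ 3 + 12 * t * w ^ 5 := by ring
      rw [this, hw3, hw5] at h
      linarith
    have h2 : w * (48 * t ^ 5 + 80 * t ^ 3 + 12 * t) ≤ 0.7072 * (48 * t ^ 5 + 80 * t ^ 3 + 12 * t) := by gcongr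
    simp only [show 2 * 3 = 6 by norm_num, Finset.sum_range_succ, Finset.sum_range_zero, kap_zero, kap_one]
    norm_num [Nat.choose]
    have h3 : 3.14 * t ^ 2 ≤ kap 2 * t ^ 2 := by gcongr
    have h4 : 4.18 * t ^ 3 ≤ kap 3 * t ^ 3 := by gcongr
    have h5 : 4.92 * t ^ 4 ≤ kap 4 * t ^ 4 := by gcongr
    have h6 : 5.25 * t ^ 5 ≤ kap 5 * t ^ 5 := by gcongr
    have h7 : 5.15 * t ^ 6 ≤ kap 6 * t ^ 6 := by gcongr
    have h8 : 0 ≤ t ^ 4 * (t - 3.5) ^ 2 := by positivity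
    have h9 : 0 ≤ t ^ 2 * (t - 1.7) ^ 2 := by positivity
    nlinarith

lemma bern (n : ℕ) (hn : 1 ≤ n) : 2 * (n:ℝ) ^ n ≤ ((n:ℝ) + 1) ^ n := by
  have hn0 : (0:ℝ) < n := by exact_mod_cast hn
  have h0 : 0 ≤ 1 / (n:ℝ) := by positivity
  have h := one_add_mul_le_pow (a := 1 / (n:ℝ)) (by linarith) n
  have e : ((n:ℝ) + 1) ^ n = (n:ℝ) ^ n * (1 + 1 / (n:ℝ)) ^ n := by
    rw [← mul_pow]; congr 1; field_simp
  rw [e]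
  have : 1 + (n:ℝ) * (1 / (n:ℝ)) = 2 := by field_simp; norm_num
  rw [this] at h
  nlinarith [pow_pos hn0 n]

lemma chooseR (a b : ℕ) : ((a + b).choose a : ℝ) = ((a + b).factorial : ℝ) / (a.factorial * b.factorial) := by
  have := Nat.add_choose_mul_factorial_mul_factorial a b
  rw [← Nat.choose_symm_add] at this
  rw [eq_div_iff (by positivity), ← mul_assoc]
  exact_mod_cast this

lemma P0_ratio (M : ℝ) (hM : 0 ≤ M) :
    ((6 * (M:ℝ) + 23) * (6 * M + 22) * (6 * M + 21) * (6 * M + 20) * (6 * M + 19) * (6 * M + 18)) *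
    ((2 * (M:ℝ) + 8) * (2 * M + 7) * ((2 * M + 8) * (2 * M + 7))) ≤
    6.28 * ((4 * (M:ℝ) + 16) * (4 * M + 15) * (4 * M + 14) * (4 * M + 13)) *
    ((2 * (M:ℝ) + 7) * (2 * M + 6) * ((4 * M + 16) * (4 * M + 15) * (4 * M + 14) * (4 * M + 13))) := by
  have h : 4.5 * ((6 * M + 23) * (6 * M + 22) * (6 * M + 20) * (6 * M + 19)) ≤
      50.24 * ((4 * M + 15) ^ 2 * (4 * M + 13) ^ 2) := by
    rw [← sub_nonneg]
    ring_nf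
    positivity
  have h2 : 0 ≤ (4 * M + 14) * (2 * M + 6) * (2 * M + 8) * ((2 * M + 8) * (2 * M + 7) * (2 * M + 7)) := by positivity
  have h3 := mul_le_mul_of_nonneg_left h h2
  refine le_trans (le_of_eq ?_) (h3.trans (le_of_eq ?_)) <;> ring

lemma P0_alg (f C1 C2 C1' C2' P P' q A B A2 B2 : ℝ) (hq : 0 ≤ q) (hC2 : 0 ≤ C2) (hP : 0 ≤ P)
    (hApos : 0 < A) (hA2pos : 0 < A2) (hB0 : 0 ≤ B) (hB20 : 0 ≤ B2) (c1 : C1' * A = C1 * B)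
    (c2 : C2' * A2 = C2 * B2) (c3 : 6.28 * q * P ≤ P') (hratio : B * A2 ≤ 6.28 * B2 * A)
    (ih : 2 * f * C1 ≤ C2 * P) : 2 * (q * f) * C1' ≤ C2' * P' := by
  have e1 : C1' = C1 * B / A := by rw [eq_div_iff hApos.ne']; exact c1
  have e2 : C2' = C2 * B2 / A2 := by rw [eq_div_iff hA2pos.ne']; exact c2
  rw [e1, e2]
  calc 2 * (q * f) * (C1 * B / A) = q * (2 * f * C1) * (B / A) := by ring
    _ ≤ q * (C2 * P) * (B / A) := by gcongr
    _ ≤ q * (C2 * P) * (6.28 * B2 / A2) := by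
        gcongr ?_ * ?_
        rw [div_le_div_iff₀ hApos hA2pos]; exact hratio
    _ = C2 * B2 / A2 * (6.28 * q * P) := by ring
    _ ≤ _ := by gcongr

set_option maxHeartbeats 1000000 in
/-- base of the comparison in the range `2 m ≤ R` -/
lemma P0_base (M : ℕ) : 2 * ((M + 3).factorial : ℝ) * ((6 * M + 17).choose (2 * M + 5) : ℝ) ≤
    ((4 * M + 12).choose (2 * M + 6) : ℝ) * (3.14 * ((M:ℝ) + 3)) ^ (M + 3) := by
  induction M with
  | zero =>
    have h1 : Nat.choose 17 5 = 6188 := by decide +kernel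
    have h2 : Nat.choose 12 6 = 924 := by decide +kernel
    norm_num [h1, h2, Nat.factorial]
  | succ M ih =>
    have q1 : 0 ≤ (M:ℝ) + 4 := by clear ih; positivity
    have q2 : 0 ≤ (3.14 * ((M:ℝ) + 3)) ^ (M + 3) := by clear ih; positivity
    have q3 : 0 < (2 * (M:ℝ) + 7) * (2 * M + 6) * ((4 * M + 16) * (4 * M + 15) * (4 * M + 14) * (4 * M + 13)) := by
      clear ih; positivity
    have q4 : 0 < (2 * (M:ℝ) + 8) * (2 * M + 7) * ((2 * M + 8) * (2 * M + 7)) := by clear ih; positivity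
    have q5 : 0 ≤ (6 * (M:ℝ) + 23) * (6 * M + 22) * (6 * M + 21) * (6 * M + 20) * (6 * M + 19) * (6 * M + 18) := by
      clear ih; positivity
    have q6 : 0 ≤ (4 * (M:ℝ) + 16) * (4 * M + 15) * (4 * M + 14) * (4 * M + 13) := by clear ih; positivity
    have c1 : ((6 * (M + 1) + 17).choose (2 * (M + 1) + 5) : ℝ) * ((2 * M + 7) * (2 * M + 6) * ((4 * M + 16) * (4 * M + 15) * (4 * M + 14) * (4 * M + 13))) =
        ((6 * M + 17).choose (2 * M + 5) : ℝ) * ((6 * M + 23) * (6 * M + 22) * (6 * M + 21) * (6 * M + 20) * (6 * M + 19) * (6 * M + 18)) := by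
      rw [show 6 * (M + 1) + 17 = (2 * M + 7) + (4 * M + 16) by ring, show 2 * (M + 1) + 5 = 2 * M + 7 by ring,
        show 6 * M + 17 = (2 * M + 5) + (4 * M + 12) by ring, chooseR, chooseR,
        show (2 * M + 7) + (4 * M + 16) = 6 * M + 17 + 1 + 1 + 1 + 1 + 1 + 1 by ring,
        show (2 * M + 5) + (4 * M + 12) = 6 * M + 17 by ring,
        show 2 * M + 7 = 2 * M + 5 + 1 + 1 by ring,
        show 4 * M + 16 = 4 * M + 12 + 1 + 1 + 1 + 1 by ring]
      simp only [Nat.factorial_succ (6 * M + 17), Nat.factorial_succ (2 * M + 5), Nat.factorial_succ (2 * M + 5 + 1), Nat.factorial_succ (4 * M + 12), Nat.factorial_succ (4 * M + 12 + 1), Nat.factorial_succ (4 * M + 12 + 1 + 1), Nat.factorial_succ (4 * M + 12 + 1 + 1 + 1), Nat.factorial_succ (6 * M + 17 + 1),Nat.factorial_succ (6 * M + 17 + 1 + 1),Nat.factorial_succ (6 * M + 17 + 1 + 1 + 1),Nat.factorial_succ (6 * M + 17 + 1 + 1 + 1 + 1),Nat.factorial_succ (6 * M + 17 + 1 + 1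 + 1 + 1 + 1)]
      push_cast
      have f1 : ((2 * M + 5).factorial : ℝ) ≠ 0 := by positivity
      have f2 : ((4 * M + 12).factorial : ℝ) ≠ 0 := by positivity
      field_simp
      ring
    have c2 : ((4 * (M + 1) + 12).choose (2 * (M + 1) + 6) : ℝ) * ((2 * M + 8) * (2 * M + 7) * ((2 * M + 8) * (2 * M + 7))) =
        ((4 * M + 12).choose (2 * M + 6) : ℝ) * ((4 * M + 16) * (4 * M + 15) * (4 * M + 14) * (4 * M + 13)) := by
      rw [show 4 * (M + 1) + 12 = (2 * M + 8) + (2 * M + 8) by ring, show 2 * (M + 1) + 6 = 2 * M + 8 by ring,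
        show 4 * M + 12 = (2 * M + 6) + (2 * M + 6) by ring, chooseR, chooseR,
        show (2 * M + 8) + (2 * M + 8) = 4 * M + 12 + 1 + 1 + 1 + 1 by ring,
        show (2 * M + 6) + (2 * M + 6) = 4 * M + 12 by ring,
        show 2 * M + 8 = 2 * M + 6 + 1 + 1 by ring]
      simp only [Nat.factorial_succ (2 * M + 6), Nat.factorial_succ (2 * M + 6 + 1), Nat.factorial_succ (4 * M + 12), Nat.factorial_succ (4 * M + 12 + 1), Nat.factorial_succ (4 * M + 12 + 1 + 1), Nat.factorial_succ (4 * M + 12 + 1 + 1 + 1)]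
      push_cast
      have f1 : ((2 * M + 6).factorial : ℝ) ≠ 0 := by positivity
      field_simp
      ring
    have c3 : 6.28 * ((M:ℝ) + 4) * (3.14 * ((M:ℝ) + 3)) ^ (M + 3) ≤ (3.14 * ((M:ℝ) + 4)) ^ (M + 4) := by
      have := bern (M + 3) (by omega)
      push_cast at this
      rw [pow_succ (3.14 * ((M:ℝ) + 4)) (M + 3), mul_pow, mul_pow]
      have h2 : (M:ℝ) + 3 + 1 = M + 4 := by ring
      rw [h2] at this
      have h3 : (0:ℝ) ≤ 3.14 ^ (M + 3) * (3.14 * ((M:ℝ) + 4)) := by positivity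
      nlinarith [mul_le_mul_of_nonneg_left this h3]
    have hM : (0:ℝ) ≤ M := Nat.cast_nonneg _
    have hratio := P0_ratio M hM
    have hf : ((M + 1 + 3).factorial : ℝ) = (M + 4) * (M + 3).factorial := by
      rw [show M + 1 + 3 = M + 3 + 1 by ring, Nat.factorial_succ]; push_cast; ring
    rw [hf, show M + 1 + 3 = M + 4 by ring, show ((M + 1 : ℕ) : ℝ) + 3 = M + 4 by push_cast; ring]
    exact P0_alg _ _ _ _ _ _ _ _ _ _ _ _ q1 (Nat.cast_nonneg _) q2 q3 q4 q5 q6 c1 c2 c3 hratio ih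

lemma P0_step (m d : ℕ) (hm : 3 ≤ m) : 2 * (m.factorial : ℝ) * ((2 * (2 * m + d) + (2 * m - 1)).choose (2 * m - 1) : ℝ) ≤
    ((2 * (2 * m + d)).choose (2 * m) : ℝ) * (3.14 * (m:ℝ)) ^ m := by
  induction d with
  | zero =>
    obtain ⟨M, rfl⟩ : ∃ M, m = M + 3 := ⟨m - 3, by omega⟩
    have := P0_base M
    convert this using 3
    · congr 1 <;> omega
    · congr 1; omega
    · push_cast; ring
  | succ d ih =>
    obtain ⟨k, rfl⟩ : ∃ k, m = k + 1 := ⟨m - 1, by omega⟩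
    have e0 : 2 * (k + 1) - 1 = 2 * k + 1 := by omega
    rw [e0] at ih ⊢
    have c1 : ((2 * (2 * (k + 1) + (d + 1)) + (2 * k + 1)).choose (2 * k + 1) : ℝ) * ((4 * k + 2 * d + 6) * (4 * k + 2 * d + 5)) =
      ((2 * (2 * (k + 1) + d) + (2 * k + 1)).choose (2 * k + 1) : ℝ) * ((6 * k + 2 * d + 7) * (6 * k + 2 * d + 6)) := by
      rw [add_comm _ (2 * k + 1), chooseR, add_comm _ (2 * k + 1), chooseR,
        show 2 * k + 1 + 2 * (2 * (k + 1) + (d + 1)) = 6 * k + 2 * d + 5 + 1 + 1 by ring,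
        show 2 * k + 1 + 2 * (2 * (k + 1) + d) = 6 * k + 2 * d + 5 by ring,
        show 2 * (2 * (k + 1) + (d + 1)) = 4 * k + 2 * d + 4 + 1 + 1 by ring,
        show 2 * (2 * (k + 1) + d) = 4 * k + 2 * d + 4 by ring]
      simp only [Nat.factorial_succ (6 * k + 2 * d + 5), Nat.factorial_succ (6 * k + 2 * d + 5 + 1), Nat.factorial_succ (4 * k + 2 * d + 4), Nat.factorial_succ (4 * k + 2 * d + 4 + 1)]
      push_cast
      have f1 : ((2 * k + 1).factorial : ℝ) ≠ 0 := by positivity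
      have f2 : ((4 * k + 2 * d + 4).factorial : ℝ) ≠ 0 := by positivity
      field_simp
      ring
    have c2 : ((2 * (2 * (k + 1) + (d + 1))).choose (2 * (k + 1)) : ℝ) * ((2 * k + 2 * d + 4) * (2 * k + 2 * d + 3)) =
      ((2 * (2 * (k + 1) + d)).choose (2 * (k + 1)) : ℝ) * ((4 * k + 2 * d + 6) * (4 * k + 2 * d + 5)) := by
      rw [show 2 * (2 * (k + 1) + (d + 1)) = 2 * (k + 1) + (2 * k + 2 * d + 4) by ring, chooseR,
        show 2 * (2 * (k + 1) + d) = 2 * (k + 1) + (2 * k + 2 * d + 2) by ring, chooseR,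
        show 2 * (k + 1) + (2 * k + 2 * d + 4) = 4 * k + 2 * d + 4 + 1 + 1 by ring,
        show 2 * (k + 1) + (2 * k + 2 * d + 2) = 4 * k + 2 * d + 4 by ring,
        show 2 * k + 2 * d + 4 = 2 * k + 2 * d + 2 + 1 + 1 by ring]
      simp only [Nat.factorial_succ (4 * k + 2 * d + 4), Nat.factorial_succ (4 * k + 2 * d + 4 + 1), Nat.factorial_succ (2 * k + 2 * d + 2), Nat.factorial_succ (2 * k + 2 * d + 2 + 1)]
      push_cast
      have f1 : ((2 * (k + 1)).factorial : ℝ) ≠ 0 := by positivity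
      have f2 : ((2 * k + 2 * d + 2).factorial : ℝ) ≠ 0 := by positivity
      field_simp
      ring
    have hk : (0:ℝ) ≤ k := Nat.cast_nonneg _
    have hd : (0:ℝ) ≤ d := Nat.cast_nonneg _
    set A := ((4 * (k:ℝ) + 2 * d + 6) * (4 * k + 2 * d + 5)) with hA
    set B := ((6 * (k:ℝ) + 2 * d + 7) * (6 * k + 2 * d + 6)) with hB
    set A2 := ((2 * (k:ℝ) + 2 * d + 4) * (2 * k + 2 * d + 3)) with hA2
    have hApos : 0 < A := by positivity
    have hA2pos : 0 < A2 := by positivity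
    have hB0 : 0 ≤ B := by positivity
    rw [← eq_div_iff hApos.ne'] at c1
    rw [← eq_div_iff hA2pos.ne'] at c2
    rw [c1, c2]
    set C1 := ((2 * (2 * (k + 1) + d) + (2 * k + 1)).choose (2 * k + 1) : ℝ)
    set C2 := ((2 * (2 * (k + 1) + d)).choose (2 * (k + 1)) : ℝ)
    set P := (3.14 * ((k + 1 : ℕ):ℝ)) ^ (k + 1)
    have hratio : B * A2 ≤ A * A := by
      have h1 : (6 * (k:ℝ) + 2 * d + 7) * (2 * k + 2 * d + 3) ≤ A := by rw [hA]; nlinarith [mul_nonneg hk hd]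
      have h2 : (6 * (k:ℝ) + 2 * d + 6) * (2 * k + 2 * d + 4) ≤ A := by rw [hA]; nlinarith [mul_nonneg hk hd]
      have := mul_le_mul h1 h2 (by positivity) hApos.le
      calc B * A2 = _ := by rw [hB, hA2]; ring
        _ ≤ _ := this
    calc 2 * ((k + 1).factorial : ℝ) * (C1 * B / A) = (2 * ((k + 1).factorial : ℝ) * C1) * (B / A) := by ring
      _ ≤ (C2 * P) * (B / A) := by gcongr
      _ ≤ (C2 * P) * (A / A2) := by
          gcongr ?_ * ?_
          rw [div_le_div_iff₀ hApos hA2pos]; exact hratio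
      _ = _ := by ring

lemma P0_num (R m : ℕ) (hm : 3 ≤ m) (hR : 2 * m ≤ R) :
    2 * ((2 * R + (2 * m - 1)).choose (2 * m - 1) : ℝ) ≤ Cbound (2 * R) m := by
  obtain ⟨d, rfl⟩ := Nat.exists_eq_add_of_le hR
  refine le_trans ?_ (Cbound_ge_even (2 * m + d) m m hm (by omega))
  have := P0_step m d hm
  have hf : (0:ℝ) < m.factorial := by positivity
  have hpi : (3.14:ℝ) ^ m ≤ Real.pi ^ m := by
    have := Real.pi_gt_d2
    gcongr
  calc _ ≤ ((2 * (2 * m + d)).choose (2 * m) : ℝ) * (3.14 * (m:ℝ)) ^ m / m.factorial := by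
        rw [le_div_iff₀ hf]; linarith
    _ ≤ ((2 * (2 * m + d)).choose (2 * m) : ℝ) * (Real.pi * (m:ℝ)) ^ m / m.factorial := by
        have := Real.pi_gt_d2
        gcongr
    _ = _ := by rw [mul_pow]; ring
end Num2


section Num3

lemma large_alg (f C C' P P' S q A B : ℝ) (hq : 0 ≤ q) (hC : 0 ≤ C) (hP : 0 ≤ P) (hS : 0 ≤ S)
    (hA : 0 < A) (c : C' * A = C * B) (hB : 8 * A ≤ B) (c3 : 2 * q * P ≤ P') 
    (ih : 32 * f ≤ C * S * P) (t : ℝ) (ht0 : 0 ≤ t) (ht : t ≤ 8 * 3.14 * (2 * q)) : 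
    32 * (t * f) ≤ C' * (S * 3.14) * P' := by
  have e : 8 * C ≤ C' := by
    have : 8 * C * A ≤ C' * A := by rw [c]; nlinarith
    exact le_of_mul_le_mul_right this hA
  have hC' : 0 ≤ C' := by linarith
  calc 32 * (t * f) = t * (32 * f) := by ring
    _ ≤ t * (C * S * P) := by gcongr
    _ ≤ (8 * 3.14 * (2 * q)) * (C * S * P) := by gcongr
    _ = (8 * C) * (S * 3.14) * (2 * q * P) := by ring
    _ ≤ _ := by gcongr

lemma large_c3 (N : ℕ) : 2 * (2 * (N:ℝ) + 25) * (2 * (N:ℝ) + 23) ^ (N + 12) ≤ (2 * (N:ℝ) + 25) ^ (N + 13) := by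
  have hx : (0:ℝ) < 2 * (N:ℝ) + 23 := by positivity
  have h0 : (0:ℝ) ≤ 2 / (2 * (N:ℝ) + 23) := by positivity
  have h := one_add_mul_le_pow (a := 2 / (2 * (N:ℝ) + 23)) (by linarith) (N + 12)
  have e : (2 * (N:ℝ) + 25) ^ (N + 12) = (2 * (N:ℝ) + 23) ^ (N + 12) * (1 + 2 / (2 * (N:ℝ) + 23)) ^ (N + 12) := by
    rw [← mul_pow]; congr 1; field_simp; ring
  have h2 : (2:ℝ) ≤ 1 + ((N + 12 : ℕ):ℝ) * (2 / (2 * (N:ℝ) + 23)) := by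
    have : 1 ≤ ((N + 12 : ℕ):ℝ) * (2 / (2 * (N:ℝ) + 23)) := by
      rw [mul_div_assoc', le_div_iff₀ hx]; push_cast; linarith
    linarith
  rw [pow_succ _ (N + 12), e]
  calc _ = (2 * (N:ℝ) + 23) ^ (N + 12) * 2 * (2 * (N:ℝ) + 25) := by ring
    _ ≤ _ := by gcongr; exact h2.trans h

set_option maxHeartbeats 1000000 in
lemma large_base (N : ℕ) : 32 * (((N + 13).factorial : ℝ) * 86.5 ^ (N + 12)) ≤
    ((4 * N + 46).choose (2 * N + 26) : ℝ) * 3.14 ^ (N + 13) * (2 * (N:ℝ) + 23) ^ (N + 12) := by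
  induction N with
  | zero =>
    have h2 : Nat.choose 46 26 = 5608233007146 := by decide +kernel
    norm_num [h2, Nat.factorial]
  | succ N ih =>
    have q1 : 0 ≤ 2 * (N:ℝ) + 25 := by clear ih; positivity
    have q2 : 0 ≤ (2 * (N:ℝ) + 23) ^ (N + 12) := by clear ih; positivity
    have q3 : (0:ℝ) ≤ 3.14 ^ (N + 13) := by clear ih; positivity
    have q4 : (0:ℝ) < (2 * (N:ℝ) + 28) * (2 * N + 27) * ((2 * N + 22) * (2 * N + 21)) := by clear ih; positivity
    have q5 : 0 ≤ 86.5 * ((N:ℝ) + 14) := by clear ih; positivity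
    have c : ((4 * (N + 1) + 46).choose (2 * (N + 1) + 26) : ℝ) * ((2 * (N:ℝ) + 28) * (2 * N + 27) * ((2 * N + 22) * (2 * N + 21)))
       = ((4 * N + 46).choose (2 * N + 26) : ℝ) * ((4 * N + 50) * (4 * N + 49) * (4 * N + 48) * (4 * N + 47)) := by
      clear ih
      rw [show 4 * (N + 1) + 46 = (2 * N + 28) + (2 * N + 22) by ring, show 2 * (N + 1) + 26 = 2 * N + 28 by ring,
        show 4 * N + 46 = (2 * N + 26) + (2 * N + 20) by ring, chooseR, chooseR,
        show (2 * N + 28) + (2 * N + 22) = 4 * N + 46 + 1 + 1 + 1 + 1 by ring,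
        show (2 * N + 26) + (2 * N + 20) = 4 * N + 46 by ring,
        show 2 * N + 28 = 2 * N + 26 + 1 + 1 by ring,
        show 2 * N + 22 = 2 * N + 20 + 1 + 1 by ring]
      simp only [Nat.factorial_succ (2 * N + 26), Nat.factorial_succ (2 * N + 26 + 1), Nat.factorial_succ (2 * N + 20), Nat.factorial_succ (2 * N + 20 + 1), Nat.factorial_succ (4 * N + 46), Nat.factorial_succ (4 * N + 46 + 1), Nat.factorial_succ (4 * N + 46 + 1 + 1), Nat.factorial_succ (4 * N + 46 + 1 + 1 + 1)]
      push_cast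
      have f1 : ((2 * N + 26).factorial : ℝ) ≠ 0 := by positivity
      have f2 : ((2 * N + 20).factorial : ℝ) ≠ 0 := by positivity
      field_simp
      ring
    have c3 := large_c3 N
    have hB : 8 * ((2 * (N:ℝ) + 28) * (2 * N + 27) * ((2 * N + 22) * (2 * N + 21))) ≤ ((4 * N + 50) * (4 * N + 49) * (4 * N + 48) * (4 * N + 47)) := by
      clear ih c3 c q2 q3
      rw [← sub_nonneg]; ring_nf; positivity
    have ht : 86.5 * ((N:ℝ) + 14) ≤ 8 * 3.14 * (2 * (2 * (N:ℝ) + 25)) := by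
      have : (0:ℝ) ≤ N := Nat.cast_nonneg _
      linarith
    have := large_alg _ _ _ _ _ _ _ _ _ q1 (Nat.cast_nonneg _) q2 q3 q4 c hB c3 (by rw [← mul_assoc]; rw [← mul_assoc] at ih; exact ih) _ q5 ht
    convert this using 1
    · rw [show N + 1 + 13 = N + 13 + 1 by ring, show N + 1 + 12 = N + 12 + 1 by ring, Nat.factorial_succ, pow_succ]; push_cast; ring
    · rw [show N + 1 + 13 = N + 13 + 1 by ring, show N + 1 + 12 = N + 13 by ring, pow_succ (3.14:ℝ)]; push_cast; ring

lemma large_num (R n : ℕ) (hn : 12 ≤ n) (h1 : R = 2 * n - 1 ∨ R = 2 * n) :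
    32 * (((n + 1).factorial : ℝ) * 86.5 ^ n) ≤
    ((2 * R).choose (2 * (n + 1)) : ℝ) * Real.pi ^ (n + 1) * (R:ℝ) ^ n := by
  obtain ⟨N, rfl⟩ := Nat.exists_eq_add_of_le hn
  have hb := large_base N
  rw [show 12 + N + 1 = N + 13 by ring, show 12 + N = N + 12 by ring]
  refine hb.trans ?_
  have hR : 2 * N + 23 ≤ R := by omega
  have hc : (4 * N + 46).choose (2 * N + 26) ≤ (2 * R).choose (2 * (N + 13)) := by
    rw [show 2 * (N + 13) = 2 * N + 26 by ring]
    exact Nat.choose_le_choose _ (by omega)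
  have hR' : 2 * (N:ℝ) + 23 ≤ R := by exact_mod_cast hR
  have := Real.pi_gt_d2
  have hc' : ((4 * N + 46).choose (2 * N + 26) : ℝ) ≤ ((2 * R).choose (2 * (N + 13)) : ℝ) := by exact_mod_cast hc
  gcongr

lemma choose_bd (R k : ℕ) : ((2 * R + k).choose k : ℝ) ≤ (81 / 64) ^ R * 9 ^ k := by
  have h := add_pow (1 / 8 : ℝ) 1 (2 * R + k)
  have h2 : (1 / 8 : ℝ) ^ k * 1 ^ (2 * R + k - k) * ((2 * R + k).choose k : ℝ) ≤ (1 / 8 + 1) ^ (2 * R + k) := by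
    rw [h]
    exact Finset.single_le_sum (f := fun j => (1 / 8 : ℝ) ^ j * 1 ^ (2 * R + k - j) * ((2 * R + k).choose j : ℝ))
      (fun i _ => by positivity) (Finset.mem_range.2 (by omega))
  rw [one_pow, mul_one, pow_add, pow_mul] at h2
  have e : (9:ℝ) ^ k = 8 ^ k * (1 / 8 + 1) ^ k := by rw [← mul_pow]; norm_num
  have e3 : (81 / 64 : ℝ) = (1 / 8 + 1) ^ 2 := by norm_num
  have e2 : (8:ℝ) ^ k * (1 / 8) ^ k = 1 := by rw [← mul_pow]; norm_num
  rw [e, e3]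
  calc ((2 * R + k).choose k : ℝ) = ((8:ℝ) ^ k * (1 / 8) ^ k) * ((2 * R + k).choose k : ℝ) := by rw [e2, one_mul]
    _ = (8:ℝ) ^ k * ((1 / 8) ^ k * ((2 * R + k).choose k : ℝ)) := by ring
    _ ≤ 8 ^ k * (((1 / 8 + 1) ^ 2) ^ R * (1 / 8 + 1) ^ k) := by gcongr
    _ = _ := by ring

lemma large_K (R m k n : ℕ) (K : ℝ) (hK0 : 0 ≤ K) (hR : 1 ≤ R) (hm : R ≤ 2 * m) (hk : 4 * k ≤ R) (hn : R ≤ 2 * n)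
    (h : K * (√((R:ℝ) / 8)) ^ R ≤ ((2 * R + k).choose k : ℝ) * (√m + √((R:ℝ) / 8)) ^ R) :
    K ≤ (86.5 * m / R) ^ n := by
  have hR0 : (0:ℝ) < R := by exact_mod_cast hR
  have hm' : (R:ℝ) ≤ 2 * m := by exact_mod_cast hm
  set ρ := √((R:ℝ) / 8) with hρ
  have hρ2 : ρ ^ 2 = R / 8 := Real.sq_sqrt (by positivity)
  have hρ0 : 0 < ρ := Real.sqrt_pos.2 (by positivity)
  have hmm : √(m:ℝ) ^ 2 = m := Real.sq_sqrt (by positivity)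
  have h2 : ρ ≤ √m / 2 := by
    apply le_of_sq_le_sq _ (by positivity)
    rw [hρ2, div_pow, hmm]; linarith
  have h3 : √m + ρ ≤ 1.5 * √m := by linarith
  have h4 : K * ρ ^ R ≤ (81 / 64) ^ R * 9 ^ k * (1.5 * √m) ^ R := by
    refine h.trans ?_
    have := choose_bd R k
    gcongr
  have h5 : (K * ρ ^ R) ^ 2 ≤ ((81 / 64) ^ R * 9 ^ k * (1.5 * √m) ^ R) ^ 2 := by gcongr
  have h6 : (9:ℝ) ^ (2 * k) ≤ 3 ^ R := by
    rw [show (9:ℝ) = 3 ^ 2 by norm_num, ← pow_mul]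
    apply pow_le_pow_right₀ (by norm_num); omega
  have h7 : K ^ 2 * (R / 8 : ℝ) ^ R ≤ (86.5 / 8 * (m:ℝ)) ^ R := by
    calc K ^ 2 * (R / 8 : ℝ) ^ R = (K * ρ ^ R) ^ 2 := by rw [← hρ2]; ring
      _ ≤ _ := h5
      _ = ((81 / 64) ^ 2) ^ R * 9 ^ (2 * k) * (1.5 ^ 2 * √m ^ 2) ^ R := by
          rw [mul_pow, mul_pow, ← mul_pow 1.5, ← pow_mul, ← pow_mul, ← pow_mul, ← pow_mul, mul_comm R 2, mul_comm k 2, ← pow_mul]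
      _ ≤ ((81 / 64) ^ 2) ^ R * 3 ^ R * (1.5 ^ 2 * √m ^ 2) ^ R := by gcongr
      _ = ((81 / 64) ^ 2 * 3 * 1.5 ^ 2 * m) ^ R := by rw [hmm, ← mul_pow, ← mul_pow]; ring
      _ ≤ _ := by gcongr; norm_num
  have h8 : K ^ 2 ≤ (86.5 * m / R : ℝ) ^ R := by
    have e : (86.5 * m / R : ℝ) ^ R = (86.5 / 8 * (m:ℝ)) ^ R / (R / 8 : ℝ) ^ R := by
      rw [← div_pow]; congr 1; field_simp
    rw [e, le_div_iff₀ (by positivity)]; exact h7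
  have h9 : (86.5 * m / R : ℝ) ^ R ≤ (86.5 * m / R : ℝ) ^ (2 * n) := by
    apply pow_le_pow_right₀ _ hn
    rw [le_div_iff₀ hR0]; linarith
  apply le_of_sq_le_sq _ (by positivity)
  rw [← pow_mul, mul_comm n 2]
  exact h8.trans h9

theorem GeoData.bound {R m u : ℕ} {x y : ℕ → EuclideanSpace ℝ (Fin R)} (h : GeoData R m u x y)
    (hR : 1 ≤ R) (hm : 1 ≤ m) : (u:ℝ) < Bbound R m := by
  unfold Bbound
  by_cases h1 : m = 1
  · subst h1
    have := h.one
    have : (u:ℝ) + 1 ≤ 2 * R := by exact_mod_cast this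
    simp only [Cbound, if_true]; push_cast; linarith
  by_cases h2 : m = 2
  · subst h2
    have := h.two hR
    have e : ((max 480 (2 * (2 * R) * (2 * R - 1)) : ℕ) : ℝ) = Cbound (2 * R) 2 := by
      unfold Cbound
      rw [if_neg (by norm_num), if_pos rfl]
      push_cast [Nat.cast_sub (show 1 ≤ 2 * R by omega)]
      rfl
    have h3 : ((2 * (u + 1) : ℕ) : ℝ) ≤ Cbound (2 * R) 2 := by
      rw [← e]; exact_mod_cast this
    push_cast at h3
    linarith
  have hm3 : 3 ≤ m := by omega
  by_cases hR3 : R ≤ 3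
  · exact small_R R m hm3 hR hR3 u (h.shell hm hR)
  by_cases hRm : 2 * m ≤ R
  · have a := h.P0 hm
    have a' : (u:ℝ) + 1 ≤ ((2 * R + (2 * m - 1)).choose (2 * m - 1) : ℝ) := by exact_mod_cast a
    have := P0_num R m hm3 hRm
    linarith
  have hm0 : (0:ℝ) < m := by exact_mod_cast hm
  by_cases hR23 : R ≤ 23
  · have hlt : u + 1 < 4 * m * ((u + 1) / (4 * m) + 1) := Nat.lt_mul_div_succ _ (by omega)
    have hle : 4 * m * ((u + 1) / (4 * m)) ≤ u + 1 := Nat.mul_div_le _ _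
    have hle1 : (u + 1) / (4 * m) ≤ u + 1 := Nat.div_le_self _ _
    generalize (u + 1) / (4 * m) = K at hlt hle hle1
    have hle' : 4 * (m:ℝ) * K ≤ u + 1 := by exact_mod_cast hle
    have hlt' : (u:ℝ) + 1 < 4 * m * (K + 1) := by exact_mod_cast hlt
    have := h.P4 hR 0 K (1/2) (1/4) (by norm_num) (by norm_num) hle1 (by
      rw [div_le_iff₀ (by positivity)]; linarith)
    have hK : (K:ℝ) ≤ (1 + 2 * √m) ^ R := by
      have e : (1 + 2 * √(m:ℝ)) ^ R * (1 / 2) ^ R = (√m + 1 / 2) ^ R := by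
        rw [← mul_pow]; congr 1; ring
      simp only [add_zero, Nat.choose_zero_right, Nat.cast_one, one_mul] at this
      rw [← e] at this
      exact le_of_mul_le_mul_right this (by positivity)
    have hC := Cbound_mid R m hm3 (by omega) hR23
    have : 4 * (m:ℝ) * (K + 1) ≤ 4 * m * ((1 + 2 * √m) ^ R + 1) := by gcongr
    linarith
  · have hlt : u + 1 < 8 * m * ((u + 1) / (8 * m) + 1) := Nat.lt_mul_div_succ _ (by omega)
    have hle : 8 * m * ((u + 1) / (8 * m)) ≤ u + 1 := Nat.mul_div_le _ _
    have hle1 : (u + 1) / (8 * m) ≤ u + 1 := Nat.div_le_self _ _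
    generalize (u + 1) / (8 * m) = K at hlt hle hle1
    have hle' : 8 * (m:ℝ) * K ≤ u + 1 := by exact_mod_cast hle
    have hlt' : (u:ℝ) + 1 < 8 * m * (K + 1) := by exact_mod_cast hlt
    have hR0 : (0:ℝ) < R := by exact_mod_cast hR
    have hk4 : R ≤ 4 * (R / 4) + 3 := by omega
    have hk4' : (R:ℝ) ≤ 4 * ((R / 4 : ℕ):ℝ) + 3 := by exact_mod_cast hk4
    have := h.P4 hR (R / 4) K (√((R:ℝ) / 8)) (1/8) (Real.sqrt_pos.2 (by positivity)) (by
      rw [Real.sq_sqrt (by positivity)]; linarith) hle1 (by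
      rw [div_le_iff₀ (by positivity)]; linarith)
    set n := (R + 1) / 2 with hn
    have hK := large_K R m (R / 4) n K (Nat.cast_nonneg _) hR (by omega) (by omega) (by omega) this
    have hnum := large_num R n (by omega) (by omega)
    have hC := Cbound_ge_even R m (n + 1) hm3 (by omega)
    have hq1 : (1:ℝ) ≤ (86.5 * m / R) ^ n := by
      apply one_le_pow₀
      have : (R:ℝ) < 2 * m := by exact_mod_cast (not_le.1 hRm)
      rw [le_div_iff₀ hR0]; linarith
    have h5 : 8 * (m:ℝ) * (K + 1) ≤ 8 * m * (2 * (86.5 * m / R) ^ n) := by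
      gcongr; linarith
    have h6 : 32 * (m:ℝ) * (86.5 * m / R) ^ n ≤ Cbound (2 * R) m := by
      refine le_trans ?_ hC
      have hf : (0:ℝ) < (n + 1).factorial := by positivity
      have e1 : 32 * (m:ℝ) * (86.5 * m / R) ^ n = 32 * (((n + 1).factorial : ℝ) * 86.5 ^ n) * ((m:ℝ) ^ (n + 1) / (R ^ n * (n + 1).factorial)) := by
        rw [div_pow, mul_pow]; field_simp; ring
      have e2 : ((2 * R).choose (2 * (n + 1)) : ℝ) * (Real.pi ^ (n + 1) / ((n + 1).factorial : ℝ)) * (m:ℝ) ^ (n + 1) = ((2 * R).choose (2 * (n + 1)) : ℝ) * Real.pi ^ (n + 1) * (R:ℝ) ^ n * ((m:ℝ) ^ (n + 1) / (R ^ n * (n + 1).factorial)) := by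
        field_simp
      rw [e1, e2]
      gcongr
    linarith
end Num3


section Diag
lemma exists_diag {K : Type*} [Field K] [CharZero K] (R : ℕ)
    (B : (Fin R → K) →ₗ[K] (Fin R → K) →ₗ[K] K) (hB : ∀ v w, B v w = B w v) :
    ∃ (a : Fin R → K) (c : (Fin R → K) → Fin R → K),
      (∀ v w, B v w = ∑ i, a i * (c v i * c w i)) ∧ ∀ i, ∃ e, e ≠ 0 ∧ a i = B e e := by
  have : Invertible (2 : K) := invertibleOfNonzero two_ne_zero
  have hs : LinearMap.IsSymm B := ⟨fun v w => hB v w⟩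
  obtain ⟨b0, hb0⟩ := LinearMap.BilinForm.exists_orthogonal_basis hs
  have hfr : Module.finrank K (Fin R → K) = R := Module.finrank_fin_fun K
  let b := b0.reindex (finCongr hfr)
  have hb : ∀ i j, i ≠ j → B (b i) (b j) = 0 := by
    intro i j hij
    rw [Module.Basis.reindex_apply, Module.Basis.reindex_apply]
    exact hb0 (fun h => hij ((finCongr hfr).symm.injective h))
  refine ⟨fun i => B (b i) (b i), fun v => b.repr v, ?_, fun i => ⟨b i, b.ne_zero i, rfl⟩⟩
  intro v w
  conv_lhs => rw [← b.sum_repr v, ← b.sum_repr w]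
  simp only [map_sum, LinearMap.sum_apply, map_smul, LinearMap.smul_apply, smul_eq_mul]
  refine Finset.sum_congr rfl fun i _ => ?_
  rw [Finset.sum_eq_single i]
  · ring
  · intro j _ hj
    rw [hb _ _ hj, mul_zero]
  · simp

lemma totpos_all {K : Type*} [Field K] [NumberField K] (R : ℕ)
    (B : (Fin R → K) →ₗ[K] (Fin R → K) →ₗ[K] K) (Λ : Submodule (RingOfIntegers K) (Fin R → K))
    (hspan : Submodule.span K (Λ : Set (Fin R → K)) = ⊤)
    (hpos : ∀ v ∈ Λ, v ≠ 0 → IsTotPos (B v v)) (v : Fin R → K) (hv : v ≠ 0) : IsTotPos (B v v) := by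
  have key : ∃ n : RingOfIntegers K, n ≠ 0 ∧ n • v ∈ Λ := by
    have hmem : v ∈ Submodule.span K (Λ : Set (Fin R → K)) := by rw [hspan]; trivial
    clear hv
    induction hmem using Submodule.span_induction with
    | mem x hx => exact ⟨1, one_ne_zero, by rw [one_smul]; exact hx⟩
    | zero => exact ⟨1, one_ne_zero, by rw [smul_zero]; exact Λ.zero_mem⟩
    | add x y _ _ hx hy =>
      obtain ⟨n, hn, hnx⟩ := hx
      obtain ⟨k, hk, hky⟩ := hy
      refine ⟨n * k, mul_ne_zero hn hk, ?_⟩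
      rw [smul_add]
      refine Λ.add_mem ?_ ?_
      · rw [mul_comm, mul_smul]; exact Λ.smul_mem _ hnx
      · rw [mul_smul]; exact Λ.smul_mem _ hky
    | smul a x _ hx =>
      obtain ⟨n, hn, hnx⟩ := hx
      obtain ⟨p, q, hq, rfl⟩ := IsFractionRing.div_surjective (A := RingOfIntegers K) a
      have hq0 : q ≠ 0 := nonZeroDivisors.ne_zero hq
      refine ⟨q * n, mul_ne_zero hq0 hn, ?_⟩
      have hq1 : algebraMap (RingOfIntegers K) K q ≠ 0 := by
        intro h; exact hq0 ((map_eq_zero_iff _ (RingOfIntegers.coe_injective)).1 h)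
      have : (q * n) • ((algebraMap (RingOfIntegers K) K p / algebraMap (RingOfIntegers K) K q) • x) = p • (n • x) := by
        rw [← algebraMap_smul K (q * n), ← algebraMap_smul K p, ← algebraMap_smul K n, smul_smul, smul_smul, map_mul]
        congr 1; field_simp
      rw [this]
      exact Λ.smul_mem _ hnx
  obtain ⟨n, hn, hnv⟩ := key
  have hn1 : algebraMap (RingOfIntegers K) K n ≠ 0 := by
    intro h; exact hn ((map_eq_zero_iff _ (RingOfIntegers.coe_injective)).1 h)
  rw [← algebraMap_smul K n] at hnv
  intro φ
  have h := hpos _ hnv (smul_ne_zero hn1 hv) φ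
  simp only [map_smul, LinearMap.smul_apply, smul_eq_mul, map_mul] at h
  set t := φ (algebraMap (RingOfIntegers K) K n)
  rw [← mul_assoc] at h
  exact pos_of_mul_pos_right h (mul_self_nonneg t)
end Diag

section Field
variable (D : ℕ)

lemma irr_sqrt (hD : 1 < D) (hsf : Squarefree D) : Irrational √(D:ℝ) := by
  rw [irrational_sqrt_natCast_iff]
  rintro ⟨a, ha⟩
  have := hsf a ⟨1, by rw [mul_one]; exact ha⟩
  rw [Nat.isUnit_iff] at this
  subst this; omega

lemma isInt_sqrt : IsIntegral ℤ √(D:ℝ) := by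
  refine IsIntegral.of_pow (R := ℤ) (n := 2) (by norm_num) ?_
  rw [Real.sq_sqrt (by positivity)]
  exact isIntegral_algebraMap (R := ℤ) (x := (D:ℤ))

noncomputable instance : NumberField (QsqrtD D) where
  to_charZero := inferInstance
  to_finiteDimensional := by
    unfold QsqrtD
    exact IntermediateField.adjoin.finiteDimensional ((isInt_sqrt D).tower_top)

/-- the square root of `D` as an element of the field -/
noncomputable def rtD : QsqrtD D := ⟨√(D:ℝ), IntermediateField.mem_adjoin_simple_self ℚ _⟩

lemma exists_coords (x : QsqrtD D) : ∃ p q : ℚ, x = (p : QsqrtD D) + q * rtD D := by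
  suffices h : ∃ p q : ℚ, (x : ℝ) = p + q * √(D:ℝ) by
    obtain ⟨p, q, h⟩ := h
    refine ⟨p, q, Subtype.ext ?_⟩
    rw [h]; simp [rtD]
  have hx : (x:ℝ) ∈ (IntermediateField.adjoin ℚ {√(D:ℝ)}).toSubalgebra := x.2
  rw [IntermediateField.adjoin_simple_toSubalgebra_of_isAlgebraic
    ((isInt_sqrt D).tower_top : IsIntegral ℚ √(D:ℝ)).isAlgebraic] at hx
  generalize (x:ℝ) = z at hx
  induction hx using Algebra.adjoin_induction with
  | mem x hx => rw [Set.mem_singleton_iff] at hx; exact ⟨0, 1, by rw [hx]; simp⟩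
  | algebraMap r => exact ⟨r, 0, by simp⟩
  | add x y _ _ hx hy =>
    obtain ⟨p, q, rfl⟩ := hx
    obtain ⟨p', q', rfl⟩ := hy
    exact ⟨p + p', q + q', by push_cast; ring⟩
  | mul x y _ _ hx hy =>
    obtain ⟨p, q, rfl⟩ := hx
    obtain ⟨p', q', rfl⟩ := hy
    refine ⟨p * p' + D * q * q', p * q' + p' * q, ?_⟩
    have := Real.sq_sqrt (show (0:ℝ) ≤ D by positivity)
    push_cast
    linear_combination (q * q' : ℝ) * this

/-- inclusion -/
noncomputable def phi1 : QsqrtD D →+* ℝ := (QsqrtD D).val.toRingHom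

lemma phi1_rtD : phi1 D (rtD D) = √(D:ℝ) := rfl

lemma rtD_mul : rtD D * rtD D = D := by
  apply Subtype.ext
  simp [rtD]

lemma phi_rtD (φ : QsqrtD D →+* ℝ) : φ (rtD D) = √(D:ℝ) ∨ φ (rtD D) = -√(D:ℝ) := by
  have h := congrArg φ (rtD_mul D)
  rw [map_mul, map_natCast] at h
  apply mul_self_eq_mul_self_iff.1
  rw [h, Real.mul_self_sqrt (by positivity)]

lemma exists_phi2 (hD : 1 < D) (hsf : Squarefree D) : ∃ φ : QsqrtD D →+* ℝ, φ (rtD D) = -√(D:ℝ) := by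
  have hirr := irr_sqrt D hD hsf
  have hint : IsIntegral ℚ √(D:ℝ) := (isInt_sqrt D).tower_top
  have hD2 : (√(D:ℝ)) ^ 2 = D := Real.sq_sqrt (by positivity)
  have hmin : minpoly ℚ √(D:ℝ) = Polynomial.X ^ 2 - Polynomial.C (D:ℚ) := by
    symm
    have hm : (Polynomial.X ^ 2 - Polynomial.C (D:ℚ)).Monic := Polynomial.monic_X_pow_sub_C _ (by norm_num)
    refine minpoly.eq_of_irreducible_of_monic ?_ ?_ hm
    · have hdeg : (Polynomial.X ^ 2 - Polynomial.C (D:ℚ)).natDegree = 2 := Polynomial.natDegree_X_pow_sub_C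
      rw [hm.irreducible_iff_roots_eq_zero_of_degree_le_three (by rw [hdeg]) (by rw [hdeg]; norm_num)]
      rw [Multiset.eq_zero_iff_forall_notMem]
      intro r hr
      have hr := Polynomial.isRoot_of_mem_roots hr
      simp only [Polynomial.IsRoot.def, Polynomial.eval_sub, Polynomial.eval_pow, Polynomial.eval_X, Polynomial.eval_C] at hr
      have h2 : ((r:ℝ)) ^ 2 = D := by
        have : r ^ 2 = D := by linarith
        exact_mod_cast this
      rw [← hD2] at h2
      rcases sq_eq_sq_iff_eq_or_eq_neg.1 h2 with h | h
      · exact hirr ⟨r, h⟩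
      · exact hirr ⟨-r, by push_cast; linarith⟩
    · simp [hD2]
  have hroot : -√(D:ℝ) ∈ (minpoly ℚ √(D:ℝ)).aroots ℝ := by
    rw [Polynomial.mem_aroots]
    refine ⟨minpoly.ne_zero hint, ?_⟩
    rw [hmin]; simp [hD2]
  refine ⟨((IntermediateField.algHomAdjoinIntegralEquiv ℚ hint).symm ⟨_, hroot⟩).toRingHom, ?_⟩
  exact IntermediateField.algHomAdjoinIntegralEquiv_symm_apply_gen ℚ hint ⟨_, hroot⟩
end Field


section Ints
variable (D : ℕ)

/-- conjugate of `xi` -/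
noncomputable def xi' : ℝ := if D % 4 = 1 then (1 - Real.sqrt D) / 2 else - Real.sqrt D

lemma int_of_sq (hsf : Squarefree D) (q : ℚ) (N : ℤ) (h : (D:ℚ) * q ^ 2 = N) : ∃ s : ℤ, q = s := by
  have hd : (q.den : ℚ) ≠ 0 := by exact_mod_cast q.den_nz
  have h1 : (D:ℤ) * q.num ^ 2 = N * (q.den:ℤ) ^ 2 := by
    have e : (D:ℚ) * q.num ^ 2 = N * (q.den:ℚ) ^ 2 := by
      rw [← h]
      conv_rhs => rw [mul_assoc, ← mul_pow, Rat.mul_den_eq_num]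
    exact_mod_cast e
  have hcop : IsCoprime ((q.den:ℤ) ^ 2) (q.num ^ 2) := by
    apply IsCoprime.pow
    rw [Int.isCoprime_iff_gcd_eq_one, Int.gcd_comm]
    exact q.reduced
  have hdvd : ((q.den:ℤ) ^ 2) ∣ (D:ℤ) := hcop.dvd_of_dvd_mul_right ⟨N, by rw [h1]; ring⟩
  have hdvd' : q.den * q.den ∣ D := by
    rw [← sq]; exact_mod_cast hdvd
  have hu := Nat.isUnit_iff.1 (hsf _ hdvd')
  exact ⟨q.num, ((Rat.den_eq_one_iff q).1 hu).symm⟩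

lemma int_of_rat_isIntegral (q : ℚ) (h : IsIntegral ℤ (q:ℝ)) : ∃ s : ℤ, q = s := by
  have h2 : IsIntegral ℤ q := by
    have : (q:ℝ) = algebraMap ℚ ℝ q := rfl
    rw [this] at h
    exact (isIntegral_algebraMap_iff (algebraMap ℚ ℝ).injective).1 h
  obtain ⟨s, hs⟩ := IsIntegrallyClosed.isIntegral_iff.1 h2
  exact ⟨s, hs.symm⟩

lemma integer_form (hsf : Squarefree D) (φ2 : QsqrtD D →+* ℝ) (hφ2 : φ2 (rtD D) = -√(D:ℝ))
    (c : RingOfIntegers (QsqrtD D)) :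
    ∃ p q : ℤ, phi1 D (algebraMap _ (QsqrtD D) c) = p + q * xi D ∧
      φ2 (algebraMap _ (QsqrtD D) c) = p + q * xi' D := by
  have hc : IsIntegral ℤ (algebraMap _ (QsqrtD D) c) := RingOfIntegers.isIntegral_coe c
  have i1 : IsIntegral ℤ (phi1 D (algebraMap _ (QsqrtD D) c)) := hc.map (phi1 D).toIntAlgHom
  have i2 : IsIntegral ℤ (φ2 (algebraMap _ (QsqrtD D) c)) := hc.map φ2.toIntAlgHom
  obtain ⟨a, b, hab⟩ := exists_coords D (algebraMap _ (QsqrtD D) c)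
  rw [hab] at i1 i2 ⊢
  simp only [map_add, map_mul, map_ratCast, phi1_rtD, hφ2] at i1 i2 ⊢
  have hD2 : (√(D:ℝ)) ^ 2 = D := Real.sq_sqrt (by positivity)
  obtain ⟨t, ht⟩ := int_of_rat_isIntegral (2 * a) (by
    have e : ((2 * a : ℚ) : ℝ) = ((a:ℝ) + b * √(D:ℝ)) + (a + b * -√(D:ℝ)) := by push_cast; ring
    rw [e]; exact i1.add i2)
  obtain ⟨n, hn⟩ := int_of_rat_isIntegral (a ^ 2 - D * b ^ 2) (by
    have e : ((a ^ 2 - D * b ^ 2 : ℚ) : ℝ) = ((a:ℝ) + b * √(D:ℝ)) * (a + b * -√(D:ℝ)) := by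
      push_cast; linear_combination ((b:ℝ) ^ 2) * hD2
    rw [e]; exact i1.mul i2)
  obtain ⟨s, hs⟩ := int_of_sq D hsf (2 * b) (t ^ 2 - 4 * n) (by
    push_cast; rw [← ht, ← hn]; ring)
  have hmod : t ^ 2 - D * s ^ 2 = 4 * n := by
    have : (t:ℚ) ^ 2 - D * s ^ 2 = 4 * n := by rw [← ht, ← hn, ← hs]; ring
    exact_mod_cast this
  have ha : (a:ℝ) = t / 2 := by
    have : (2:ℝ) * a = t := by exact_mod_cast ht
    linarith
  have hb : (b:ℝ) = s / 2 := by
    have : (2:ℝ) * b = s := by exact_mod_cast hs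
    linarith
  rw [ha, hb]
  unfold xi xi'
  have h4 : D % 4 ≠ 0 := by
    intro h
    have := hsf 2 (by omega)
    rw [Nat.isUnit_iff] at this; omega
  have hmod4 : (t ^ 2 - (D % 4 : ℕ) * s ^ 2 : ℤ) % 4 = 0 := by
    have hd : (D:ℤ) = 4 * (D / 4 : ℕ) + (D % 4 : ℕ) := by exact_mod_cast (Nat.div_add_mod D 4).symm
    have e : (t ^ 2 - (D % 4 : ℕ) * s ^ 2 : ℤ) = 4 * (n + (D / 4 : ℕ) * s ^ 2) := by
      rw [hd] at hmod; linear_combination hmod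
    rw [e]; simp
  have hlt : D % 4 < 4 := Nat.mod_lt _ (by norm_num)
  have ht4 : t ^ 2 % 4 = t % 2 := by
    rcases Int.even_or_odd' t with ⟨k, rfl | rfl⟩ <;> ring_nf <;> omega
  have hs4 : s ^ 2 % 4 = s % 2 := by
    rcases Int.even_or_odd' s with ⟨k, rfl | rfl⟩ <;> ring_nf <;> omega
  generalize t ^ 2 = t2 at hmod4 ht4
  generalize s ^ 2 = s2 at hmod4 hs4
  by_cases h1 : D % 4 = 1
  · rw [if_pos h1, if_pos h1]
    rw [h1] at hmod4
    obtain ⟨k, hk⟩ : ∃ k, t - s = 2 * k := ⟨(t - s) / 2, by omega⟩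
    have hk' : (t:ℝ) - s = 2 * k := by exact_mod_cast hk
    exact ⟨k, s, by linear_combination hk' / 2, by linear_combination hk' / 2⟩
  · rw [if_neg h1, if_neg h1]
    have : t % 2 = 0 ∧ s % 2 = 0 := by
      interval_cases hh : D % 4 <;> omega
    obtain ⟨k, hk⟩ : ∃ k, t = 2 * k := ⟨t / 2, by omega⟩
    obtain ⟨l, hl⟩ : ∃ l, s = 2 * l := ⟨s / 2, by omega⟩
    subst hk hl
    exact ⟨k, l, by push_cast; ring, by push_cast; ring⟩

lemma exists_xiO (φ2 : QsqrtD D →+* ℝ) (hφ2 : φ2 (rtD D) = -√(D:ℝ)) :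
    ∃ z : RingOfIntegers (QsqrtD D), (∀ φ : QsqrtD D →+* ℝ, φ (algebraMap _ (QsqrtD D) z) = xi D ∨
      φ (algebraMap _ (QsqrtD D) z) = xi' D) ∧ phi1 D (algebraMap _ (QsqrtD D) z) = xi D ∧ 
      φ2 (algebraMap _ (QsqrtD D) z) = xi' D := by
  have hs : IsIntegral ℤ (rtD D) := by
    refine IsIntegral.of_pow (R := ℤ) (n := 2) (by norm_num) ?_
    rw [sq, rtD_mul]
    exact isIntegral_algebraMap (R := ℤ) (x := (D:ℤ))
  unfold xi xi'
  by_cases h1 : D % 4 = 1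
  · simp only [if_pos h1]
    have hz : IsIntegral ℤ ((1 + rtD D) / 2) := by
      refine ⟨Polynomial.X ^ 2 - Polynomial.X - Polynomial.C ((D / 4 : ℕ) : ℤ), ?_, ?_⟩
      · have e : (Polynomial.X ^ 2 - Polynomial.X - Polynomial.C ((D / 4 : ℕ) : ℤ)) = Polynomial.X ^ 2 + (- Polynomial.X - Polynomial.C ((D / 4 : ℕ) : ℤ)) := by ring
        rw [e]
        refine Polynomial.monic_X_pow_add (n := 2) ?_
        compute_degree!
      · simp only [Polynomial.eval₂_sub, Polynomial.eval₂_pow, Polynomial.eval₂_X, Polynomial.eval₂_C]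
        have hd : D = 4 * (D / 4) + 1 := by omega
        have hd' : (D : QsqrtD D) = 4 * ((D / 4 : ℕ) : QsqrtD D) + 1 := by exact_mod_cast congrArg (Nat.cast (R := QsqrtD D)) hd
        have := rtD_mul D
        rw [eq_intCast, Int.cast_natCast]
        linear_combination (1/4 : QsqrtD D) * this + (1/4 : QsqrtD D) * hd'
    refine ⟨⟨_, hz⟩, ?_, ?_, ?_⟩
    · intro φ
      change φ ((1 + rtD D) / 2) = _ ∨ φ ((1 + rtD D) / 2) = _
      simp only [map_div₀, map_add, map_one, map_ofNat]
      rcases phi_rtD D φ with h | h <;> rw [h]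
      · left; trivial
      · right; ring
    · change phi1 D ((1 + rtD D) / 2) = _
      simp only [map_div₀, map_add, map_one, map_ofNat, phi1_rtD]
    · change φ2 ((1 + rtD D) / 2) = _
      simp only [map_div₀, map_add, map_one, map_ofNat, hφ2]; ring
  · simp only [if_neg h1]
    exact ⟨⟨_, hs⟩, fun φ => phi_rtD D φ, phi1_rtD D, hφ2⟩

/-- The approximation data behind the odd partial quotients. -/
structure CFData (y : ℝ) (a b c d : ℤ) : Prop where
  det : a * d - b * c = -1
  pos : 0 < a + b * xi D
  eqn : c + d * xi D = -((a + b * xi D) * y)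
  pos' : 0 < a + b * xi' D
  le' : a + b * xi' D ≤ c + d * xi' D

lemma gauss_irr (y : ℝ) (h : Irrational y) : Irrational (gaussMap y) ∧ 0 < gaussMap y ∧ gaussMap y < 1 := by
  have h1 : Irrational (gaussMap y) := by
    unfold gaussMap Int.fract
    exact (irrational_inv_iff.2 h).sub_intCast _
  exact ⟨h1, lt_of_le_of_ne (Int.fract_nonneg _) (Ne.symm h1.ne_zero), Int.fract_lt_one _⟩

lemma xi_irr (hD : 1 < D) (hsf : Squarefree D) : Irrational (xi D) := by
  have := irr_sqrt D hD hsf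
  unfold xi
  split_ifs
  · have h := ((this.ratCast_add 1).div_ratCast (q := 2) (by norm_num))
    simpa using h
  · exact this

lemma y_irr (hD : 1 < D) (hsf : Squarefree D) (n : ℕ) :
    Irrational (gaussMap^[n] (Int.fract (xi D))) ∧ 0 < gaussMap^[n] (Int.fract (xi D)) ∧
      gaussMap^[n] (Int.fract (xi D)) < 1 := by
  cases n with
  | zero =>
    have h1 : Irrational (Int.fract (xi D)) := (xi_irr D hD hsf).sub_intCast _
    exact ⟨h1, lt_of_le_of_ne (Int.fract_nonneg _) (Ne.symm h1.ne_zero), Int.fract_lt_one _⟩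
  | succ n =>
    rw [Function.iterate_succ_apply']
    refine gauss_irr _ ?_
    induction n with
    | zero => exact (xi_irr D hD hsf).sub_intCast _
    | succ n ih => rw [Function.iterate_succ_apply']; exact (gauss_irr _ ih).1

lemma exists_cfdata (hD : 1 < D) (hsf : Squarefree D) (i : ℕ) :
    ∃ a b c d : ℤ, CFData D (gaussMap^[2 * i] (Int.fract (xi D))) a b c d := by
  induction i with
  | zero =>
    have h1 : 1 < √(D:ℝ) := by
      rw [Real.lt_sqrt (by norm_num)]; norm_num; exact hD
    have h2 : 1 ≤ xi D := by unfold xi; split_ifs <;> linarith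
    have h3 : xi' D < 0 := by unfold xi'; split_ifs <;> linarith
    have h4 : (1:ℝ) ≤ ⌊xi D⌋ := by exact_mod_cast (Int.le_floor.2 (by exact_mod_cast h2) : (1:ℤ) ≤ ⌊xi D⌋)
    refine ⟨1, 0, ⌊xi D⌋, -1, by norm_num, by norm_num, ?_, by norm_num, ?_⟩
    · simp only [Function.iterate_zero, id, Nat.mul_zero, Int.fract]; push_cast; ring
    · push_cast; linarith
  | succ i ih =>
    obtain ⟨a, b, c, d, h⟩ := ih
    obtain ⟨hy, hy0, hy1⟩ := y_irr D hD hsf (2 * i)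
    rw [show 2 * (i + 1) = 2 * i + 1 + 1 by ring, Function.iterate_succ_apply', Function.iterate_succ_apply']
    generalize gaussMap^[2 * i] (Int.fract (xi D)) = y at h hy hy0 hy1
    obtain ⟨hz, hz0, hz1⟩ := gauss_irr y hy
    have e1 : gaussMap y = y⁻¹ - ⌊y⁻¹⌋ := rfl
    have e2 : gaussMap (gaussMap y) = (gaussMap y)⁻¹ - ⌊(gaussMap y)⁻¹⌋ := rfl
    have u0 : (0:ℤ) ≤ ⌊y⁻¹⌋ := Int.floor_nonneg.2 (by positivity)
    have v0 : (1:ℤ) ≤ ⌊(gaussMap y)⁻¹⌋ := Int.le_floor.2 (by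
      push_cast; exact (one_lt_inv₀ hz0 |>.2 hz1).le)
    have hP := h.pos
    have hdet := h.det
    have heq := h.eqn
    have hp' := h.pos'
    have hl' := h.le'
    generalize ⌊y⁻¹⌋ = u at e1 u0
    rw [e2]
    generalize ⌊(gaussMap y)⁻¹⌋ = v at e2 v0
    have u0' : (0:ℝ) ≤ u := by exact_mod_cast u0
    have v0' : (1:ℝ) ≤ v := by exact_mod_cast v0
    generalize gaussMap y = z at *
    have ez : y * z = 1 - u * y := by rw [e1]; field_simp
    have ep : ((a + u * c : ℤ) : ℝ) + ((b + u * d : ℤ) : ℝ) * xi D = (a + b * xi D) * (y * z) := by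
      push_cast; rw [ez]; linear_combination (u:ℝ) * heq
    refine ⟨a + u * c, b + u * d, c + v * (a + u * c), d + v * (b + u * d), ?_, ?_, ?_, ?_, ?_⟩
    · linear_combination hdet
    · rw [ep]; positivity
    · rw [ep]
      have : ((c + v * (a + u * c) : ℤ) : ℝ) + ((d + v * (b + u * d) : ℤ) : ℝ) * xi D = (c + d * xi D) + v * (((a + u * c : ℤ) : ℝ) + ((b + u * d : ℤ) : ℝ) * xi D) := by
        push_cast; ring
      rw [this, ep, heq]
      field_simp
      ring
    · push_cast; nlinarith
    · push_cast
      have h5 : 0 < (a + u * c : ℝ) + (b + u * d) * xi' D := by nlinarith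
      nlinarith
end Ints


section Final

lemma small_ineq (u r y A B : ℝ) (hy : 0 < y) (huy : u * y ≤ 1) (hr : 0 ≤ r) (hru : r ≤ u)
    (hAB : A ≤ B) (hA : 0 < A) : (u + 1) * (y * (A + r * B)) ≤ (r + 1) * (B + A * y) := by
  have h1 : 0 ≤ (u - r) * y * (B - A) := mul_nonneg (mul_nonneg (by linarith) hy.le) (by linarith)
  have h2 : 0 ≤ (1 - u * y) * B := mul_nonneg (by linarith) (by linarith)
  have h3 : 0 ≤ (1 - u * y) * (r * B) := mul_nonneg (by linarith) (mul_nonneg hr (by linarith))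
  nlinarith

lemma inner_euc {R : ℕ} (f g : Fin R → ℝ) :
    inner ℝ (WithLp.toLp 2 f : EuclideanSpace ℝ (Fin R)) (WithLp.toLp 2 g) = ∑ i, f i * g i := by
  rw [PiLp.inner_apply]
  refine Finset.sum_congr rfl fun i _ => ?_
  simp [mul_comm]

lemma inner_twist {K : Type*} [Field K] {R : ℕ} (φ : K →+* ℝ) (w : ℝ) (hw : 0 ≤ w) (a : Fin R → K)
    (ha : ∀ i, 0 < φ (a i)) (c d : Fin R → K) :
    inner ℝ (WithLp.toLp 2 (fun i => √(w * φ (a i)) * φ (c i)) : EuclideanSpace ℝ (Fin R))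
      (WithLp.toLp 2 (fun i => √(w * φ (a i)) * φ (d i))) = w * φ (∑ i, a i * (c i * d i)) := by
  rw [inner_euc, map_sum, Finset.mul_sum]
  refine Finset.sum_congr rfl fun i _ => ?_
  have := Real.mul_self_sqrt (mul_nonneg hw (ha i).le)
  rw [map_mul, map_mul]
  linear_combination (φ (c i) * φ (d i)) * this

lemma geo_of_cf (D : ℕ) (hsf : Squarefree D) (m R : ℕ) (hm : 1 ≤ m)
    (φ2 : QsqrtD D →+* ℝ) (hφ2 : φ2 (rtD D) = -√(D:ℝ))
    (h : HasClassicalMUniversal (QsqrtD D) R m) (y : ℝ) (hy : Irrational y) (hy0 : 0 < y)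
    (a b c d : ℤ) (hcf : CFData D y a b c d) :
    ∃ X Y : ℕ → EuclideanSpace ℝ (Fin R), GeoData R m ⌊y⁻¹⌋₊ X Y := by
  obtain ⟨B, Λ, hsym, -, hspan, hpos, hint, huniv⟩ := h
  obtain ⟨ξ, hξ, hξ1, hξ2⟩ := exists_xiO D φ2 hφ2
  obtain ⟨A, cc, hdiag, hA⟩ := exists_diag R B hsym
  have hApos : ∀ (φ : QsqrtD D →+* ℝ) i, 0 < φ (A i) := by
    intro φ i
    obtain ⟨e, he, hAe⟩ := hA i
    rw [hAe]; exact totpos_all R B Λ hspan hpos e he φ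
  have hdet : (a:ℝ) * d - b * c = -1 := by exact_mod_cast hcf.det
  obtain ⟨-, hP, heq, hp', hl'⟩ := hcf
  have hm0 : (0:ℝ) < m := by exact_mod_cast hm
  set u := ⌊y⁻¹⌋₊ with hu
  have hule : (u:ℝ) ≤ y⁻¹ := Nat.floor_le (by positivity)
  have hyy : y⁻¹ * y = 1 := inv_mul_cancel₀ hy0.ne'
  have huy : (u:ℝ) * y ≤ 1 := by rw [← hyy]; gcongr
  have huy' : (u:ℝ) * y < 1 := by
    refine lt_of_le_of_ne huy fun e => ?_
    have e2 : y = (u:ℝ)⁻¹ := eq_inv_of_mul_eq_one_right e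
    exact hy ⟨(u:ℚ)⁻¹, by rw [e2]; push_cast; rfl⟩
  -- the elements `α + r β`
  let γ : ℕ → RingOfIntegers (QsqrtD D) := fun r => ((a + r * c : ℤ) : RingOfIntegers (QsqrtD D)) + ((b + r * d : ℤ) : RingOfIntegers (QsqrtD D)) * ξ
  have hγ : ∀ (φ : QsqrtD D →+* ℝ) r, φ (algebraMap _ (QsqrtD D) (γ r)) =
      (a + b * φ (algebraMap _ (QsqrtD D) ξ)) + r * (c + d * φ (algebraMap _ (QsqrtD D) ξ)) := by
    intro φ r
    simp only [γ, map_add, map_mul, map_intCast]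
    push_cast; ring
  have hγ1 : ∀ r, phi1 D (algebraMap _ (QsqrtD D) (γ r)) = (a + b * xi D) * (1 - r * y) := by
    intro r; rw [hγ, hξ1, heq]; ring
  have hγ2 : ∀ r, φ2 (algebraMap _ (QsqrtD D) (γ r)) = (a + b * xi' D) + r * (c + d * xi' D) := by
    intro r; rw [hγ, hξ2]
  have hγpos : ∀ r ≤ u, IsTotPos ((m : QsqrtD D) * algebraMap _ (QsqrtD D) (γ r)) := by
    intro r hr φ
    have hr' : (r:ℝ) ≤ u := by exact_mod_cast hr
    rw [map_mul, map_natCast, hγ]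
    refine mul_pos hm0 ?_
    rcases hξ φ with e | e <;> rw [e]
    · rw [heq]
      have : (r:ℝ) * y < 1 := lt_of_le_of_lt (by gcongr) huy'
      nlinarith
    · have : (0:ℝ) ≤ r := Nat.cast_nonneg r
      nlinarith
  have hex : ∀ r, ∃ v, r ≤ u → v ∈ Λ ∧ B v v = (m : QsqrtD D) * algebraMap _ (QsqrtD D) (γ r) := by
    intro r
    by_cases hr : r ≤ u
    · obtain ⟨v, hv, hv2⟩ := huniv (γ r) (hγpos r hr)
      exact ⟨v, fun _ => ⟨hv, hv2⟩⟩
    · exact ⟨0, fun h => absurd h hr⟩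
  choose v hv using hex
  set P := (a:ℝ) + b * xi D with hPdef
  set A' := (a:ℝ) + b * xi' D with hA'
  set B' := (c:ℝ) + d * xi' D with hB'
  have hB'0 : 0 < B' := by linarith
  set Δ := P * (B' + A' * y) with hΔ
  have hΔ0 : 0 < Δ := by positivity
  set w1 := B' / Δ with hw1
  set w2 := P * y / Δ with hw2
  have hw10 : 0 ≤ w1 := by positivity
  have hw20 : 0 < w2 := by positivity
  have hTα : w1 * P + w2 * A' = 1 := by rw [hw1, hw2]; field_simp; rw [hΔ]; ring
  have hTβ : w1 * (-(P * y)) + w2 * B' = 0 := by rw [hw1, hw2]; field_simp; ring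
  let X : ℕ → EuclideanSpace ℝ (Fin R) := fun r => WithLp.toLp 2 (fun i => √(w2 * φ2 (A i)) * φ2 (cc (v r) i))
  let Y : ℕ → EuclideanSpace ℝ (Fin R) := fun r => WithLp.toLp 2 (fun i => √(w1 * phi1 D (A i)) * phi1 D (cc (v r) i))
  have hX : ∀ r s, inner ℝ (X r) (X s) = w2 * φ2 (B (v r) (v s)) := by
    intro r s
    rw [hdiag]; exact inner_twist φ2 w2 hw20.le A (hApos φ2) _ _
  have hY : ∀ r s, inner ℝ (Y r) (Y s) = w1 * phi1 D (B (v r) (v s)) := by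
    intro r s
    rw [hdiag]; exact inner_twist (phi1 D) w1 hw10 A (hApos (phi1 D)) _ _
  have hXX : ∀ r ≤ u, inner ℝ (X r) (X r) = w2 * (m * (A' + r * B')) := by
    intro r hr
    rw [hX, (hv r hr).2, map_mul, map_natCast, hγ2]
  have hYY : ∀ r ≤ u, inner ℝ (Y r) (Y r) = w1 * (m * (P * (1 - r * y))) := by
    intro r hr
    rw [hY, (hv r hr).2, map_mul, map_natCast, hγ1]
  refine ⟨X, Y, ?_, ?_, ?_, ?_⟩
  · intro r hr s hs
    obtain ⟨g, hg⟩ := hint (v r) (hv r hr).1 (v s) (hv s hs).1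
    obtain ⟨p, q, h1, h2⟩ := integer_form D hsf φ2 hφ2 g
    refine ⟨q * c - p * d, ?_⟩
    rw [hX, hY, ← hg, h1, h2]
    have e1 : (p:ℝ) + q * xi D = (q * c - p * d) * P + (p * b - q * a) * (-(P * y)) := by
      rw [← heq, hPdef]; linear_combination ((p:ℝ) + q * xi D) * hdet
    have e2 : (p:ℝ) + q * xi' D = (q * c - p * d) * A' + (p * b - q * a) * B' := by
      rw [hA', hB']; linear_combination ((p:ℝ) + q * xi' D) * hdet
    rw [e1, e2]
    push_cast
    linear_combination ((q:ℝ) * c - p * d) * hTα + ((p:ℝ) * b - q * a) * hTβ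
  · intro r hr
    rw [hXX r hr, hYY r hr]
    linear_combination (m:ℝ) * hTα + (m:ℝ) * r * hTβ
  · intro r hr
    have hr' : (r:ℝ) ≤ u := by exact_mod_cast hr
    rw [hXX r hr]
    have := small_ineq u r y A' B' hy0 huy (Nat.cast_nonneg r) hr' hl' hp'
    have e : w2 * (m * (A' + r * B')) = m * (y * (A' + r * B')) / (B' + A' * y) := by
      rw [hw2, hΔ]; field_simp
    rw [e, div_le_div_iff₀ (by positivity) (by positivity)]
    nlinarith
  · intro r hr s hs e
    rw [hXX r hr, hXX s hs] at e
    have e2 := mul_left_cancel₀ hm0.ne' (mul_left_cancel₀ hw20.ne' e)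
    have e3 : (r:ℝ) * B' = s * B' := by linarith
    exact_mod_cast mul_right_cancel₀ hB'0.ne' e3
end Final

theorem stmt17 (D : ℕ) (hD : 1 < D) (hsf : Squarefree D) (m R : ℕ) (hm : 1 ≤ m) (hR : 1 ≤ R)
    (h : HasClassicalMUniversal (QsqrtD D) R m) :
    ∀ i : ℕ, (cfCoeff (Int.fract (xi D)) (2 * i + 1) : ℝ) < Bbound R m := by
  intro i
  obtain ⟨φ2, hφ2⟩ := exists_phi2 D hD hsf
  obtain ⟨a, b, c, d, hcf⟩ := exists_cfdata D hD hsf i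
  obtain ⟨hy, hy0, -⟩ := y_irr D hD hsf (2 * i)
  obtain ⟨X, Y, hg⟩ := geo_of_cf D hsf m R hm φ2 hφ2 h _ hy hy0 a b c d hcf
  exact hg.bound hR hm
end
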